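/- Let $G$ be a compact connected Lie group and let $\mathcal L\to\mathcal X\xrightarrow{\pi}\mathbb C$ be a $G$-invariant smooth test configuration with connected fibres of complex dimension $n$: $\mathcal X$ is a complex manifold of dimension $n+1$, $\pi$ is a proper holomorphic submersion, $\mathcal L$ is a holomorphic line bundle on $\mathcal X$, $\mathbb C^*$ acts holomorphically on $(\mathcal X,\mathcal L)$ by an action $\rho$ covering multiplication on $\mathbb C$, and $G$ acts smoothly on $(\mathcal X,\mathcal L)$ by holomorphic maps, covering the identity of $\mathbb C$ and commuting with $\rho$ (the actions on $\mathcal L$ being linear on the fibres). Write $\mathcal X_z=\pi^{-1}(z)$, $\mathcal L_z=\mathcal L|_{\mathcal X_z}$. Let $\Omega$ be an $S^1$-invariant and $G$-invariant Kähler form on $\mathcal X$ such that $\Omega|_{\mathcal X_z}\in c_1(\mathcal L_z)$ for every $z$ (that is, $\Omega|_{\mathcal X_z}=-i\partial\bar\partial\log h$ for a smooth hermitian metric $h$ on $\mathcal L_z$; in particular $\mathcal L_z$ is ample), such that the $S^1$-action generated by $W$ is hamiltonian, $i_W\Omega=dH$ for a smooth function $H$ on $\mathcal X$, and such that $G$ acts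 on each $(\mathcal X_z,\Omega|_{\mathcal X_z})$ by hamiltonian diffeomorphisms. Let $F:M\times\mathbb C\to\mathcal X$ be a diffeomorphism with $\pi(F(x,z))=z$ and $F(\sigma x,z)=\sigma F(x,z)$ for a $G$-action on $M$ and all $\sigma\in G$, where $M=(M,J_0)$ is a complex manifold such that $F_0=F(\cdot,0)$ is a biholomorphism onto $\mathcal X_0$. For a $G$-invariant Kähler form $\omega$ on a compact complex manifold of dimension $n$ with a holomorphic action of $G$, let $S(\omega)$ be the scalar curvature (the trace with respect to $\omega$ of the Ricci form), $\underline S$ its average with respect to the volume $\omega^n/n!$, and $S^G(\omega)=S(\omega)-\underline S-\Pi^G_\omega S(\omega)$ the reduced scalar curvature, where $\Pi^G_\omega$ is the $L^2(\omega^n/n!)$-orthogonal projection onto the space of smooth functions of mean value zero whose hamiltonian vector field belongs to $\mathrm{Lie}(G)$. The modified Calabi functional is $Ca^G(\varphi)=\frac1{n!}\int S^G(\omega_\varphi)^2\,\omega_\varphi^n$, where $\omega_\varphi=\omega+i\partial\bar\partial\varphi$ is Kähler and $G$-invariant. Assume that the metric on the central fibre is extremal with $S^G(\Omega|_{\mathcal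 X_0})=0$, that is, $S^G(F_0^*\Omega)=0$. Let $\omega_t=\rho_{e^{-t}}^*\Omega$, $t\in\mathbb R$, be the resulting family of Kähler forms on the generic fibre $\mathcal X_1$, and let $\varphi_t$ be smooth potentials of them, $\omega_t=\omega_0+i\partial\bar\partial\varphi_t$. Then $Ca^G(\varphi_t)=\frac1{n!}\int_{\mathcal X_1}S^G(\omega_t)^2\,\omega_t^n$ (a convergent integral for every $t$) converges exponentially fast, as $t\to\infty$, to $\frac1{n!}\int_M S^G(F_0^*\Omega)^2\,(F_0^*\Omega)^n$, and this limit is zero: there are $C$ and $c>0$ such that for all $t\ge 0$ $$\Bigl|Ca^G(\varphi_t)-\tfrac1{n!}\int_M S^G(F_0^*\Omega)^2\,(F_0^*\Omega)^n\Bigr|\le C e^{-ct},\qquad \tfrac1{n!}\int_M S^G(F_0^*\Omega)^2\,(F_0^*\Omega)^n=0 .$$ -/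

import Mathlib

open Set MeasureTheory Manifold
open Bundle (TotalSpace)
open scoped Manifold ContDiff Topology

namespace TestConf

/-! ## Differential forms on complex manifolds

A complex manifold of dimension `n` is a charted space modelled on `ℂⁿ = Fin n → ℂ` with
holomorphic coordinate changes, `IsManifold 𝓘(ℂ, Cn n) ω X`.  Its underlying real manifold is
described by the model `𝓘(ℝ, Cn n)` and the same charts.  Mathlib identifies the tangent space at
`x` with `ℂⁿ` through the preferred chart at `x`. -/

/-- The model space `ℂⁿ`. -/
abbrev Cn (n : ℕ) : Type := Fin n → ℂ

/-- Multiplication by `i` on `ℂⁿ`, as a real linear map. -/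
noncomputable def mulI (n : ℕ) : Cn n →L[ℝ] Cn n :=
  (Complex.I • ContinuousLinearMap.id ℂ (Cn n)).restrictScalars ℝ

section Forms

variable {n m : ℕ}
  {X : Type*} [TopologicalSpace X] [ChartedSpace (Cn n) X]
  {Y : Type*} [TopologicalSpace Y] [ChartedSpace (Cn m) Y]

/-- The complex structure `J` on the real tangent spaces. -/
noncomputable def J (x : X) :
    TangentSpace 𝓘(ℝ, Cn n) x →L[ℝ] TangentSpace 𝓘(ℝ, Cn n) x := mulI n

variable (n X) in
/-- Real `2`-forms (without any regularity). -/
abbrev TwoForm : Type _ := ∀ x : X, TangentSpace 𝓘(ℝ, Cn n) x [⋀^Fin 2]→L[ℝ] ℝ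

/-- The pullback `f^*Ω`. -/
noncomputable def pullback (f : X → Y) (Ω : TwoForm m Y) : TwoForm n X := fun x =>
  (Ω (f x)).compContinuousLinearMap (mfderiv 𝓘(ℝ, Cn n) 𝓘(ℝ, Cn m) f x)

/-- The expression of a `2`-form in the preferred chart at `p` (meaningful on the target of that
chart): its pullback by the inverse of the chart. -/
noncomputable def inChart (η : TwoForm n X) (p : X) : Cn n → Cn n [⋀^Fin 2]→L[ℝ] ℝ := fun y =>
  (η ((chartAt (Cn n) p).symm y)).compContinuousLinearMap
    (mfderiv 𝓘(ℝ, Cn n) 𝓘(ℝ, Cn n) (chartAt (Cn n) p).symm y)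

/-- Kähler forms: smooth, closed, `J`-invariant and positive real `2`-forms. -/
structure IsKahlerForm (η : TwoForm n X) : Prop where
  smooth : ∀ p : X, ContDiffOn ℝ ∞ (inChart η p) (chartAt (Cn n) p).target
  closed : ∀ p : X, ∀ y ∈ (chartAt (Cn n) p).target, extDeriv (inChart η p) y = 0
  invariant : ∀ (x : X) (v w : TangentSpace 𝓘(ℝ, Cn n) x), η x ![J x v, J x w] = η x ![v, w]
  pos : ∀ (x : X) (v : TangentSpace 𝓘(ℝ, Cn n) x), v ≠ 0 → 0 < η x ![v, J x v]

/-- The form `i∂∂̄u = -½ d(du ∘ J)` of a function `u` on `ℂⁿ`. -/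
noncomputable def iddbarCn (u : Cn n → ℝ) (y : Cn n) : Cn n [⋀^Fin 2]→L[ℝ] ℝ :=
  (-(1 / 2 : ℝ)) • extDeriv (fun y' => ContinuousAlternatingMap.ofSubsingleton ℝ (Cn n) ℝ (0 : Fin 1)
    ((fderiv ℝ u y').comp (mulI n))) y

/-- The form `i∂∂̄u` of a function `u` on a complex manifold, computed at `x` in the
preferred chart at `x`. -/
noncomputable def iddbar (u : X → ℝ) : TwoForm n X := fun x =>
  iddbarCn (u ∘ (chartAt (Cn n) x).symm) (chartAt (Cn n) x x)

/-! ## Volume, scalar curvature -/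

/-- The matrix `H_{jk} = η(e_j, i e_k) - i η(e_j, e_k)` of a real `(1,1)`-form on `ℂⁿ`; if
`η = i ∑ η_{jk} dz_j ∧ dz̄_k` then `H_{jk} = 2 η_{jk}`. -/
noncomputable def hermMatrix (η : Cn n [⋀^Fin 2]→L[ℝ] ℝ) : Matrix (Fin n) (Fin n) ℂ :=
  Matrix.of fun j k =>
    ((η ![Pi.single j 1, Pi.single k Complex.I] : ℝ) : ℂ)
      - Complex.I * ((η ![Pi.single j 1, Pi.single k 1] : ℝ) : ℂ)

/-- The density of `ηⁿ/n!` with respect to Lebesgue measure in the preferred chart at `p`: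
the determinant of the hermitian matrix of `η`. -/
noncomputable def volDensity (η : TwoForm n X) (p : X) (y : Cn n) : ℝ :=
  (hermMatrix (inChart η p y)).det.re

open Classical in
/-- The measure `ηⁿ/n!`, the volume of the Kähler metric of `η`.  A countable family of
preferred charts covering `X` is chosen; each point of `X` is assigned to the first of these
charts that contains it, and the densities in the charts are added up.  (The result does not
depend on the choice, by the change of variables formula.) -/
noncomputable def kahlerVolume [MeasurableSpace X] (η : TwoForm n X) : Measure X :=
  if h : ∃ c : ℕ → X, (⋃ k, (chartAt (Cn n) (c k)).source) = univ then
    Measure.sum fun k : ℕ =>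
      ((volume.restrict (chartAt (Cn n) (h.choose k) ''
          disjointed (fun j => (chartAt (Cn n) (h.choose j)).source) k)).withDensity
        fun y => ENNReal.ofReal (volDensity η (h.choose k) y)).map
        (chartAt (Cn n) (h.choose k)).symm
  else 0

/-- The Ricci form `-i∂∂̄ log det` of a Kähler form `η` at `x`. -/
noncomputable def ricciForm (η : TwoForm n X) (x : X) : Cn n [⋀^Fin 2]→L[ℝ] ℝ :=
  -iddbarCn (fun y => Real.log (volDensity η x y)) (chartAt (Cn n) x x)

/-- The scalar curvature of a Kähler form `η`: the trace with respect to `η` of its Ricci form,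
that is, of the curvature of the Chern connection on the anticanonical bundle. -/
noncomputable def scalarCurvature (η : TwoForm n X) (x : X) : ℝ :=
  ((hermMatrix (inChart η x (chartAt (Cn n) x x)))⁻¹ * hermMatrix (ricciForm η x)).trace.re

end Forms

/-! ## The reduced scalar curvature and the modified Calabi functional -/

section Reduced

variable {n : ℕ} {X : Type*} [TopologicalSpace X] [ChartedSpace (Cn n) X]
  (EG : Type*) [NormedAddCommGroup EG] [NormedSpace ℝ EG]
  (G : Type*) [TopologicalSpace G] [ChartedSpace EG G] [Group G] [MulAction G X]

variable {G} in
/-- The vector field on `X` generated by `ξ ∈ Lie(G)`. -/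
noncomputable def fundamentalField (ξ : GroupLieAlgebra 𝓘(ℝ, EG) G) (x : X) :
    TangentSpace 𝓘(ℝ, Cn n) x :=
  mfderiv 𝓘(ℝ, EG) 𝓘(ℝ, Cn n) (fun g : G => g • x) 1 ξ

variable [MeasurableSpace X]

/-- The space `P^G_η`: smooth functions `f` of mean value zero whose hamiltonian vector field
`J∇f` lies in `Lie(G)`.  With `g(v, w) = η(v, Jw)`, the equation `V = J∇f` reads
`η(V, ·) = -df`.  (If `η` is `G`-invariant then such a field is Killing.) -/
structure IsKillingPotential (η : TwoForm n X) (f : X → ℝ) : Prop where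
  smooth : ContMDiff 𝓘(ℝ, Cn n) 𝓘(ℝ, ℝ) ∞ f
  mean_zero : ∫ x, f x ∂(kahlerVolume η) = 0
  hamiltonian : ∃ ξ : GroupLieAlgebra 𝓘(ℝ, EG) G, ∀ (x : X) (w : TangentSpace 𝓘(ℝ, Cn n) x),
    η x ![fundamentalField EG ξ x, w] = -(mfderiv 𝓘(ℝ, Cn n) 𝓘(ℝ, ℝ) f x w : ℝ)

/-- `p` is the `L²`-orthogonal projection of `f` to `P^G_η`. -/
def IsKillingProjection (η : TwoForm n X) (f p : X → ℝ) : Prop :=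
  IsKillingPotential EG G η p ∧
    ∀ q : X → ℝ, IsKillingPotential EG G η q → ∫ x, (f x - p x) * q x ∂(kahlerVolume η) = 0

open Classical in
/-- The projection `Π^G_η f`. -/
noncomputable def killingProjection (η : TwoForm n X) (f : X → ℝ) : X → ℝ :=
  if h : ∃ p, IsKillingProjection EG G η f p then h.choose else 0

/-- The reduced scalar curvature `S^G = S - S̲ - Π^G S`, where `S̲` is the average of `S`. -/
noncomputable def reducedScalarCurvature (η : TwoForm n X) (x : X) : ℝ :=
  scalarCurvature η x - (⨍ y, scalarCurvature η y ∂(kahlerVolume η))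
    - killingProjection EG G η (scalarCurvature η) x

/-- `(1/n!) ∫ S^G(η)² ηⁿ`. -/
noncomputable def calabiEnergy (η : TwoForm n X) : ℝ :=
  ∫ x, reducedScalarCurvature EG G η x ^ 2 ∂(kahlerVolume η)

/-- The modified Calabi functional `Ca^G(φ)` on Kähler potentials with respect to `η`, that is,
the energy of `η_φ = η + i∂∂̄φ`. -/
noncomputable def modifiedCalabi (η : TwoForm n X) (φ : X → ℝ) : ℝ :=
  calabiEnergy EG G (fun x => η x + iddbar φ x)

end Reduced

/-! ## Smooth test configurations -/

section TestConfiguration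

variable {n : ℕ} {X : Type*} [TopologicalSpace X] [ChartedSpace (Cn (n + 1)) X]
  (L : X → Type*) [∀ x, AddCommGroup (L x)] [∀ x, Module ℂ (L x)]

/-- The action of `Γ` on the total space of `L` covers the action on the base and is linear on
the fibres. -/
def IsLinearLift (Γ : Type*) [Group Γ] [MulAction Γ X] [MulAction Γ (TotalSpace ℂ L)] : Prop :=
  ∀ (g : Γ) (x : X), ∃ A : L x →ₗ[ℂ] L (g • x), ∀ v : L x,
    g • (⟨x, v⟩ : TotalSpace ℂ L) = ⟨g • x, A v⟩

variable [TopologicalSpace (TotalSpace ℂ L)] [∀ x, TopologicalSpace (L x)] [FiberBundle ℂ L]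

variable (n) in
/-- A smooth test configuration `L → X → ℂ`: the projection `π` is a proper holomorphic
submersion onto `ℂ`, and `ℂ*` acts holomorphically on the pair `(X, L)`, covering
multiplication on `ℂ`. -/
structure IsSmoothTestConfiguration [MulAction ℂˣ X] [MulAction ℂˣ (TotalSpace ℂ L)]
    (π : X → ℂ) : Prop where
  holomorphic : ContMDiff 𝓘(ℂ, Cn (n + 1)) 𝓘(ℂ, ℂ) ω π
  submersion : IsSubmersion 𝓘(ℂ, Cn (n + 1)) 𝓘(ℂ, ℂ) ω π
  proper : IsProperMap π
  action : ContMDiffSMul 𝓘(ℂ, ℂ) 𝓘(ℂ, Cn (n + 1)) ω ℂˣ X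
  equivariant : ∀ (c : ℂˣ) (x : X), π (c • x) = (c : ℂ) * π x
  action_bundle : ContMDiffSMul 𝓘(ℂ, ℂ) (𝓘(ℂ, Cn (n + 1)).prod 𝓘(ℂ, ℂ)) ω ℂˣ (TotalSpace ℂ L)
  linear : IsLinearLift L ℂˣ

variable (n) in
/-- The test configuration is `G`-invariant: `G` acts smoothly by holomorphic maps on the pair
`(X, L)`, trivially on `ℂ`, and commutes with `ℂ*`. -/
structure IsGInvariant (EG : Type*) [NormedAddCommGroup EG] [NormedSpace ℝ EG]
    (G : Type*) [TopologicalSpace G] [ChartedSpace EG G] [Group G]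
    [MulAction G X] [MulAction G (TotalSpace ℂ L)]
    [MulAction ℂˣ X] [MulAction ℂˣ (TotalSpace ℂ L)] (π : X → ℂ) : Prop where
  action : ContMDiffSMul 𝓘(ℝ, EG) 𝓘(ℝ, Cn (n + 1)) ∞ G X
  holomorphic : ∀ g : G, ContMDiff 𝓘(ℂ, Cn (n + 1)) 𝓘(ℂ, Cn (n + 1)) ω (fun x : X => g • x)
  action_bundle :
    ContMDiffSMul 𝓘(ℝ, EG) (𝓘(ℝ, Cn (n + 1)).prod 𝓘(ℝ, ℂ)) ∞ G (TotalSpace ℂ L)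
  holomorphic_bundle : ∀ g : G, ContMDiff (𝓘(ℂ, Cn (n + 1)).prod 𝓘(ℂ, ℂ))
    (𝓘(ℂ, Cn (n + 1)).prod 𝓘(ℂ, ℂ)) ω (fun v : TotalSpace ℂ L => g • v)
  linear : IsLinearLift L G
  invariant : ∀ (g : G) (x : X), π (g • x) = π x
  commute : SMulCommClass G ℂˣ X
  commute_bundle : SMulCommClass G ℂˣ (TotalSpace ℂ L)

variable (n) in
/-- A smooth hermitian metric on the line bundle `L`, given by `v ↦ |v|²`. -/
structure IsHermitianMetric (h : TotalSpace ℂ L → ℝ) : Prop where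
  smooth : ContMDiff (𝓘(ℝ, Cn (n + 1)).prod 𝓘(ℝ, ℂ)) 𝓘(ℝ, ℝ) ∞ h
  homogeneous : ∀ (x : X) (a : ℂ) (v : L x), h ⟨x, a • v⟩ = ‖a‖ ^ 2 * h ⟨x, v⟩
  pos : ∀ (x : X) (v : L x), v ≠ 0 → 0 < h ⟨x, v⟩

/-- The Chern curvature form `-i∂∂̄ log |s|²` of a hermitian metric, at the point `p`, where `s` is
the local holomorphic frame of `L` given by the preferred trivialization at `p`. -/
noncomputable def curvatureForm (h : TotalSpace ℂ L → ℝ) : TwoForm (n + 1) X := fun p =>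
  -iddbar (fun q : X => Real.log (h ⟨q, (trivializationAt ℂ L p).symm q (1 : ℂ)⟩)) p

/-- `Ω|_{X_z} ∈ c₁(L_z)` for every `z`: the restriction of `Ω` to each fibre of `π` is the
Chern curvature form of a hermitian metric on the restriction of `L` to that fibre.  (Every
hermitian metric on `L_z` extends to `L`.) -/
def RepresentsC1OnFibres (π : X → ℂ) (Ω : TwoForm (n + 1) X) : Prop :=
  ∀ z : ℂ, ∃ h : TotalSpace ℂ L → ℝ, IsHermitianMetric n L h ∧
    ∀ p : X, π p = z → ∀ v w : TangentSpace 𝓘(ℝ, Cn (n + 1)) p,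
      mfderiv 𝓘(ℝ, Cn (n + 1)) 𝓘(ℝ, ℂ) π p v = 0 →
      mfderiv 𝓘(ℝ, Cn (n + 1)) 𝓘(ℝ, ℂ) π p w = 0 →
      Ω p ![v, w] = curvatureForm L h p ![v, w]

end TestConfiguration

section Actions

variable {n : ℕ} {X : Type*} [TopologicalSpace X] [ChartedSpace (Cn (n + 1)) X]

/-- The element `e^{-t}` of `ℂ*`. -/
noncomputable def expNeg (t : ℝ) : ℂˣ := Units.mk0 (Complex.exp (-(t : ℂ))) (Complex.exp_ne_zero _)

/-- The generator `W` of the circle action; the orientation is such that `-JW` generates the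
real flow `t ↦ ρ_{e^{-t}}`. -/
noncomputable def circleField [MulAction ℂˣ X] (x : X) : TangentSpace 𝓘(ℝ, Cn (n + 1)) x :=
  mfderiv 𝓘(ℝ, ℝ) 𝓘(ℝ, Cn (n + 1)) (fun θ : ℝ => Circle.toUnits (Circle.exp (-θ)) • x) 0 (1 : ℝ)

/-- The circle action is hamiltonian: `i_W Ω = dH` for a smooth function `H`. -/
def IsHamiltonianCircleAction [MulAction ℂˣ X] (Ω : TwoForm (n + 1) X) : Prop :=
  ∃ H : X → ℝ, ContMDiff 𝓘(ℝ, Cn (n + 1)) 𝓘(ℝ, ℝ) ∞ H ∧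
    ∀ (x : X) (w : TangentSpace 𝓘(ℝ, Cn (n + 1)) x),
      Ω x ![circleField x, w] = mfderiv 𝓘(ℝ, Cn (n + 1)) 𝓘(ℝ, ℝ) H x w

/-- `G` acts on each fibre of `π` by hamiltonian diffeomorphisms: on each fibre, the contraction
of `Ω` with each vector field from `Lie(G)` is exact. -/
def IsHamiltonianOnFibres (EG : Type*) [NormedAddCommGroup EG] [NormedSpace ℝ EG]
    (G : Type*) [TopologicalSpace G] [ChartedSpace EG G] [Group G] [MulAction G X]
    (π : X → ℂ) (Ω : TwoForm (n + 1) X) : Prop :=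
  ∀ (ξ : GroupLieAlgebra 𝓘(ℝ, EG) G) (z : ℂ), ∃ f : X → ℝ,
    ContMDiff 𝓘(ℝ, Cn (n + 1)) 𝓘(ℝ, ℝ) ∞ f ∧
    ∀ p : X, π p = z → ∀ w : TangentSpace 𝓘(ℝ, Cn (n + 1)) p,
      mfderiv 𝓘(ℝ, Cn (n + 1)) 𝓘(ℝ, ℂ) π p w = 0 →
      Ω p ![fundamentalField EG ξ p, w] = mfderiv 𝓘(ℝ, Cn (n + 1)) 𝓘(ℝ, ℝ) f p w

end Actions

end TestConf

open TestConf

/-!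
For `s = e⁻ᵗ` the map `x ↦ ρ_s (ι x)` identifies the generic fibre `X`, with the form `ω_t`, with
the fibre of `π` over `s`.  The scalar curvatures of all fibres fit together to one smooth function
`S` on `𝒳`.  That `S^G` vanishes on the central fibre means that `S` is there a hamiltonian of some
`ξ ∈ Lie(G)`.  Hamiltonians of this same `ξ` on the fibres over `s`, with the constants fixed by a
smooth section, depend smoothly on `s`, so they differ from `S` by `O(s)` uniformly on the fibre.
Each of them is a competitor in the `L²` approximation problem whose minimal value is the energy,
and the volumes of the fibres are bounded; hence the energy over `s` is `O(s²) = O(e⁻²ᵗ)`.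
-/

namespace TestConf

/-- The derivative of a map between real manifolds as a linear map of the model spaces, to which
Mathlib's tangent spaces are definitionally equal; in this form derivatives at different points
live in one normed space. -/
noncomputable def rderiv (E : Type*) [NormedAddCommGroup E] [NormedSpace ℝ E]
    {X : Type*} [TopologicalSpace X] [ChartedSpace E X]
    (E' : Type*) [NormedAddCommGroup E'] [NormedSpace ℝ E']
    {Y : Type*} [TopologicalSpace Y] [ChartedSpace E' Y] (f : X → Y) (x : X) : E →L[ℝ] E' :=
  mfderiv 𝓘(ℝ, E) 𝓘(ℝ, E') f x

/-! ### Complex manifolds as real manifolds -/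

section RestrictScalars

variable {E : Type*} [NormedAddCommGroup E] [NormedSpace ℂ E]
  {X : Type*} [TopologicalSpace X] [ChartedSpace E X]
  {E' : Type*} [NormedAddCommGroup E'] [NormedSpace ℂ E']
  {Y : Type*} [TopologicalSpace Y] [ChartedSpace E' Y]

theorem isManifold_real [IsManifold 𝓘(ℂ, E) ω X] {r : ℕ∞ω} : IsManifold 𝓘(ℝ, E) r X := by
  refine isManifold_of_contDiffOn _ _ _ fun e e' he he' => ?_
  have := (contDiffGroupoid ω 𝓘(ℂ, E)).compatible he he'
  rw [contDiffGroupoid, mem_groupoid_of_pregroupoid] at this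
  exact (this.1.restrict_scalars ℝ).of_le le_top

theorem contMDiffAt_real {f : X → Y} {x : X} (h : ContMDiffAt 𝓘(ℂ, E) 𝓘(ℂ, E') ω f x)
    {r : ℕ∞ω} : ContMDiffAt 𝓘(ℝ, E) 𝓘(ℝ, E') r f x := by
  rw [contMDiffAt_iff] at h ⊢
  exact ⟨h.1, (h.2.restrict_scalars ℝ).of_le le_top⟩

theorem mdifferentiableAt_real {f : X → Y} {x : X} (h : MDifferentiableAt 𝓘(ℂ, E) 𝓘(ℂ, E') f x) :
    MDifferentiableAt 𝓘(ℝ, E) 𝓘(ℝ, E') f x :=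
  ⟨h.1, h.2.restrictScalars ℝ⟩

theorem rderiv_eq_restrictScalars {f : X → Y} {x : X}
    (h : MDifferentiableAt 𝓘(ℂ, E) 𝓘(ℂ, E') f x) :
    rderiv E E' f x = (mfderiv 𝓘(ℂ, E) 𝓘(ℂ, E') f x : E →L[ℂ] E').restrictScalars ℝ :=
  HasMFDerivAt.mfderiv ⟨h.hasMFDerivAt.1, h.hasMFDerivAt.2.restrictScalars ℝ⟩

theorem rderiv_I_smul {f : X → Y} {x : X} (h : MDifferentiableAt 𝓘(ℂ, E) 𝓘(ℂ, E') f x) (v : E) :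
    rderiv E E' f x (Complex.I • v) = Complex.I • rderiv E E' f x v := by
  rw [rderiv_eq_restrictScalars h]
  exact (mfderiv 𝓘(ℂ, E) 𝓘(ℂ, E') f x : E →L[ℂ] E').map_smul Complex.I v

end RestrictScalars

/-! ### Alternating two-forms -/

section TwoForms

variable {E F : Type*} [NormedAddCommGroup E] [NormedSpace ℝ E] [NormedAddCommGroup F]
  [NormedSpace ℝ F]

variable (E) in
/-- The bilinear form `(a, b) ↦ η(a, b)` of an alternating `2`-form, depending linearly on `η`. -/
noncomputable def toBilin : (E [⋀^Fin 2]→L[ℝ] ℝ) →L[ℝ] E →L[ℝ] E →L[ℝ] ℝ :=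
  ((ContinuousAlternatingMap.ofSubsingletonLIE (𝕜 := ℝ) (E := E) (F := ℝ)
    (0 : Fin 1)).symm.toContinuousLinearEquiv.toContinuousLinearMap.postcomp E) ∘L
    ContinuousAlternatingMap.curryLeftLI.toContinuousLinearMap

theorem toBilin_apply (η : E [⋀^Fin 2]→L[ℝ] ℝ) (a b : E) : toBilin E η a b = η ![a, b] :=
  congrArg η (funext fun i => by fin_cases i <;> rfl)

theorem twoForm_swap (η : E [⋀^Fin 2]→L[ℝ] ℝ) (a b : E) : η ![b, a] = -η ![a, b] := by
  have h : ![a, b] ∘ Equiv.swap (0 : Fin 2) 1 = ![b, a] := by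
    ext i; fin_cases i <;> simp
  rw [← h]
  exact η.toAlternatingMap.map_swap ![a, b] (by decide)

theorem twoForm_comp_apply (η : F [⋀^Fin 2]→L[ℝ] ℝ) (A : E →L[ℝ] F) (a b : E) :
    η.compContinuousLinearMap A ![a, b] = η ![A a, A b] :=
  congrArg η (funext fun i => by fin_cases i <;> rfl)

theorem contDiffAt_alternating_of_apply {ι E Z : Type*} [Fintype ι] [NormedAddCommGroup E]
    [NormedSpace ℝ E] [FiniteDimensional ℝ E] [NormedAddCommGroup Z] [NormedSpace ℝ Z] {k : ℕ∞ω}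
    {f : Z → E [⋀^ι]→L[ℝ] ℝ} {z : Z} (h : ∀ v, ContDiffAt ℝ k (fun z => f z v) z) :
    ContDiffAt ℝ k f z := by
  classical
  let b := Module.finBasis ℝ E
  let T : (E [⋀^ι]→L[ℝ] ℝ) →ₗ[ℝ] (ι → Fin _) → ℝ :=
    LinearMap.pi fun s => (ContinuousAlternatingMap.apply ℝ E ℝ (b ∘ s)).toLinearMap
  have hT : LinearMap.ker T = ⊥ := by
    refine LinearMap.ker_eq_bot'.2 fun η hη => ?_
    exact ContinuousAlternatingMap.toAlternatingMap_injective
      (b.ext_alternating fun s _ => congrFun hη s)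
  obtain ⟨S, hS⟩ := T.exists_leftInverse_of_injective hT
  have hf : f = fun z => S.toContinuousLinearMap (T (f z)) :=
    funext fun z => (LinearMap.congr_fun hS (f z)).symm
  rw [hf]
  exact S.toContinuousLinearMap.contDiff.contDiffAt.comp z (contDiffAt_pi.2 fun s => h _)

set_option maxSynthPendingDepth 3 in
theorem contDiffAt_twoForm_comp [FiniteDimensional ℝ E] {Z : Type*} [NormedAddCommGroup Z]
    [NormedSpace ℝ Z] {k : ℕ∞ω} {f : Z → F [⋀^Fin 2]→L[ℝ] ℝ} {A : Z → E →L[ℝ] F} {z : Z}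
    (hf : ContDiffAt ℝ k f z) (hA : ContDiffAt ℝ k A z) :
    ContDiffAt ℝ k (fun z => (f z).compContinuousLinearMap (A z)) z := by
  refine contDiffAt_alternating_of_apply fun v => ?_
  obtain ⟨a, b, rfl⟩ : ∃ a b, v = ![a, b] :=
    ⟨v 0, v 1, funext fun i => by fin_cases i <;> rfl⟩
  have e : (fun z => (f z).compContinuousLinearMap (A z) ![a, b]) =
      fun z => toBilin F (f z) (A z a) (A z b) :=
    funext fun z => by rw [twoForm_comp_apply, toBilin_apply]
  rw [e]
  have hB : ContDiffAt ℝ k (fun z => toBilin F (f z)) z :=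
    hf.continuousLinearMap_comp (toBilin F)
  have hAv : ∀ v, ContDiffAt ℝ k (fun z => A z v) z := fun v => hA.clm_apply contDiffAt_const
  exact (hB.clm_apply (hAv a)).clm_apply (hAv b)

end TwoForms

/-! ### Hermitian matrices of `(1,1)`-forms -/

section Herm

variable {n m : ℕ} {η : Cn n [⋀^Fin 2]→L[ℝ] ℝ}

/-- Real `2`-forms on `ℂⁿ` of type `(1,1)`, characterized as the `J`-invariant ones. -/
def IsOneOne (η : Cn n [⋀^Fin 2]→L[ℝ] ℝ) : Prop :=
  ∀ v w, η ![Complex.I • v, Complex.I • w] = η ![v, w]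

theorem complex_smul_eq {V : Type*} [AddCommGroup V] [Module ℂ V] (c : ℂ) (v : V) :
    c • v = c.re • v + c.im • Complex.I • v := by
  conv_lhs => rw [← Complex.re_add_im c, add_smul, mul_smul]
  rfl

theorem IsOneOne.apply_I_left (h : IsOneOne η) (v w : Cn n) :
    η ![Complex.I • v, w] = -η ![v, Complex.I • w] := by
  rw [← h v, smul_smul, Complex.I_mul_I, neg_one_smul]
  simp only [← toBilin_apply, map_neg, neg_neg]

/-- The hermitian form `(v, w) ↦ η(v, iw) - i η(v, w)` of a `(1,1)`-form, linear in `v` and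
antilinear in `w`; its Gram matrix in the standard basis is `hermMatrix η`. -/
noncomputable def IsOneOne.hermForm (h : IsOneOne η) : Cn n →ₗ[ℂ] Cn n →ₗ⋆[ℂ] ℂ :=
  LinearMap.mk₂'ₛₗ (RingHom.id ℂ) (starRingEnd ℂ)
    (fun v w => (η ![v, Complex.I • w] : ℂ) - Complex.I * (η ![v, w] : ℂ))
    (fun a b c => by simp only [← toBilin_apply, map_add, add_apply]; push_cast; ring)
    (fun c v w => by
      rw [complex_smul_eq c]
      simp only [← toBilin_apply, map_add, map_smul, add_apply, smul_apply, smul_eq_mul]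
      simp only [toBilin_apply, h.apply_I_left]
      rw [smul_smul, Complex.I_mul_I, neg_one_smul]
      simp only [← toBilin_apply, map_neg]
      apply Complex.ext
      · simp
      · simp; ring)
    (fun a b c => by simp only [smul_add, ← toBilin_apply, map_add]; push_cast; ring)
    (fun c v w => by
      rw [smul_comm Complex.I c, complex_smul_eq c, complex_smul_eq c, smul_smul, Complex.I_mul_I,
        neg_one_smul]
      simp only [← toBilin_apply, map_add, map_smul, map_neg, smul_eq_mul]
      apply Complex.ext
      · simp; ring
      · simp; ring)

theorem IsOneOne.hermForm_apply (h : IsOneOne η) (v w : Cn n) :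
    h.hermForm v w = (η ![v, Complex.I • w] : ℂ) - Complex.I * (η ![v, w] : ℂ) :=
  rfl

theorem IsOneOne.hermMatrix_apply (h : IsOneOne η) (j k : Fin n) :
    hermMatrix η j k = h.hermForm (Pi.single j 1) (Pi.single k 1) := by
  have : (Pi.single k Complex.I : Cn n) = Complex.I • Pi.single k 1 := by
    rw [← Pi.single_smul, smul_eq_mul, mul_one]
  rw [hermMatrix, Matrix.of_apply, this, h.hermForm_apply]

theorem IsOneOne.hermForm_swap (h : IsOneOne η) (v w : Cn n) :
    h.hermForm w v = starRingEnd ℂ (h.hermForm v w) := by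
  simp only [h.hermForm_apply, map_sub, map_mul, Complex.conj_ofReal, Complex.conj_I]
  rw [twoForm_swap η (Complex.I • v) w, h.apply_I_left, twoForm_swap η v w]
  push_cast; ring

theorem IsOneOne.hermForm_self (h : IsOneOne η) (v : Cn n) :
    h.hermForm v v = (η ![v, Complex.I • v] : ℂ) := by
  have : η ![v, v] = 0 := η.map_eq_zero_of_eq ![v, v] (i := 0) (j := 1) rfl (by decide)
  rw [h.hermForm_apply, this, Complex.ofReal_zero, mul_zero, sub_zero]

theorem IsOneOne.hermForm_eq_sum (h : IsOneOne η) (v w : Cn n) :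
    h.hermForm v w = ∑ j, ∑ k, v j * hermMatrix η j k * starRingEnd ℂ (w k) := by
  conv_lhs => rw [← Pi.basisFun ℂ (Fin n) |>.sum_repr v, ← Pi.basisFun ℂ (Fin n) |>.sum_repr w]
  simp only [map_sum, LinearMap.sum_apply, LinearMap.map_smulₛₗ, LinearMap.smul_apply, smul_eq_mul,
    RingHom.id_apply, h.hermMatrix_apply, Pi.basisFun_repr, Pi.basisFun_apply, Finset.mul_sum]
  exact Finset.sum_comm.trans (by simp only [mul_comm, mul_left_comm])

theorem isOneOne_comp {η : Cn m [⋀^Fin 2]→L[ℝ] ℝ} (h : IsOneOne η) (A : Cn n →L[ℂ] Cn m) :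
    IsOneOne (η.compContinuousLinearMap (A.restrictScalars ℝ)) := fun v w => by
  simp only [twoForm_comp_apply, ContinuousLinearMap.coe_restrictScalars', map_smul, h _ _]

theorem hermMatrix_comp {η : Cn m [⋀^Fin 2]→L[ℝ] ℝ} (h : IsOneOne η) (A : Cn n →L[ℂ] Cn m) :
    hermMatrix (η.compContinuousLinearMap (A.restrictScalars ℝ)) =
      (LinearMap.toMatrix' A.toLinearMap).transpose * hermMatrix η *
        (LinearMap.toMatrix' A.toLinearMap).map (starRingEnd ℂ) := by
  ext j k
  have : (isOneOne_comp h A).hermForm (Pi.single j 1) (Pi.single k 1) =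
      h.hermForm (A (Pi.single j 1)) (A (Pi.single k 1)) := by
    simp only [IsOneOne.hermForm_apply, twoForm_comp_apply,
      ContinuousLinearMap.coe_restrictScalars', map_smul]
  rw [(isOneOne_comp h A).hermMatrix_apply, this, h.hermForm_eq_sum, Matrix.mul_apply]
  simp only [Matrix.mul_apply, Finset.sum_mul, Matrix.transpose_apply, Matrix.map_apply,
    LinearMap.toMatrix'_apply, ContinuousLinearMap.coe_coe]
  rw [Finset.sum_comm]

open scoped ComplexOrder in
theorem hermMatrix_posDef (h : IsOneOne η) (hpos : ∀ v, v ≠ 0 → 0 < η ![v, Complex.I • v]) :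
    (hermMatrix η).PosDef := by
  refine Matrix.PosDef.of_dotProduct_mulVec_pos ?_ fun x hx => ?_
  · ext j k
    rw [Matrix.conjTranspose_apply, h.hermMatrix_apply, h.hermMatrix_apply, h.hermForm_swap]
    exact star_star _
  · have key : star x ⬝ᵥ (hermMatrix η).mulVec x = h.hermForm (star x) (star x) := by
      simp only [h.hermForm_eq_sum, dotProduct, Matrix.mulVec, Finset.mul_sum, mul_assoc,
        Pi.star_apply, RCLike.star_def, Complex.conj_conj]
    rw [key, h.hermForm_self]
    exact_mod_cast hpos _ (star_ne_zero.2 hx)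

open scoped ComplexOrder in
theorem hermMatrix_det_re_pos (h : IsOneOne η) (hpos : ∀ v, v ≠ 0 → 0 < η ![v, Complex.I • v]) :
    0 < (hermMatrix η).det.re :=
  (Complex.pos_iff.1 (hermMatrix_posDef h hpos).det_pos).1

theorem det_map_conj (N : Matrix (Fin n) (Fin n) ℂ) :
    (N.map (starRingEnd ℂ)).det = starRingEnd ℂ N.det :=
  ((starRingEnd ℂ).map_det N).symm

theorem det_re_hermMatrix_comp (h : IsOneOne η) (A : Cn n →L[ℂ] Cn n) :
    (hermMatrix (η.compContinuousLinearMap (A.restrictScalars ℝ))).det.re =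
      Complex.normSq A.det * (hermMatrix η).det.re := by
  rw [hermMatrix_comp h, Matrix.det_mul, Matrix.det_mul, Matrix.det_transpose, det_map_conj,
    LinearMap.det_toMatrix', mul_right_comm, Complex.mul_conj, Complex.re_ofReal_mul]

theorem trace_hermMatrix_comp {θ : Cn n [⋀^Fin 2]→L[ℝ] ℝ} (h : IsOneOne η) (hθ : IsOneOne θ)
    {A : Cn n →L[ℂ] Cn n} (hdet : A.det ≠ 0) :
    ((hermMatrix (η.compContinuousLinearMap (A.restrictScalars ℝ)))⁻¹ *
      hermMatrix (θ.compContinuousLinearMap (A.restrictScalars ℝ))).trace =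
      ((hermMatrix η)⁻¹ * hermMatrix θ).trace := by
  rw [hermMatrix_comp h, hermMatrix_comp hθ, Matrix.mul_inv_rev, Matrix.mul_inv_rev]
  set a := LinearMap.toMatrix' A.toLinearMap with ha_def
  have hdet_a : a.det ≠ 0 := by rwa [ha_def, LinearMap.det_toMatrix']
  have ha : IsUnit a.transpose.det := by
    rw [Matrix.det_transpose]; exact isUnit_iff_ne_zero.2 hdet_a
  have hb : IsUnit (a.map (starRingEnd ℂ)).det := by
    rw [det_map_conj, isUnit_iff_ne_zero]
    exact (map_ne_zero _).2 hdet_a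
  have hcancel : ∀ H T b : Matrix (Fin n) (Fin n) ℂ, b⁻¹ * (H⁻¹ * a.transpose⁻¹) *
      (a.transpose * T * b) = b⁻¹ * (H⁻¹ * (a.transpose⁻¹ * a.transpose) * T * b) := fun _ _ _ => by
    simp only [Matrix.mul_assoc]
  rw [hcancel, Matrix.nonsing_inv_mul _ ha, Matrix.mul_one, Matrix.trace_mul_comm,
    Matrix.mul_assoc, Matrix.mul_nonsing_inv _ hb, Matrix.mul_one]

theorem det_restrictScalars_eq_normSq (A : Cn n →L[ℂ] Cn n) :
    (A.restrictScalars ℝ).det = Complex.normSq A.det := by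
  rw [ContinuousLinearMap.det, ContinuousLinearMap.coe_restrictScalars,
    LinearMap.det_restrictScalars, Algebra.norm_complex_eq]
  rfl

end Herm

/-! ### The operator `i∂∂̄` -/

section Iddbar

variable {n m : ℕ} {u v : Cn n → ℝ} {y : Cn n}

/-- The `1`-form `du ∘ J`, a primitive of `-2i∂∂̄u`. -/
noncomputable def dcForm (u : Cn n → ℝ) (y : Cn n) : Cn n [⋀^Fin 1]→L[ℝ] ℝ :=
  ContinuousAlternatingMap.ofSubsingleton ℝ (Cn n) ℝ (0 : Fin 1) ((fderiv ℝ u y).comp (mulI n))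

theorem dcForm_apply (w : Fin 1 → Cn n) : dcForm u y w = fderiv ℝ u y (Complex.I • w 0) :=
  rfl

theorem iddbarCn_eq (u : Cn n → ℝ) (y : Cn n) :
    iddbarCn u y = (-(1 / 2 : ℝ)) • extDeriv (dcForm u) y :=
  rfl

theorem contDiffAt_dcForm (hu : ContDiffAt ℝ ∞ u y) : ContDiffAt ℝ ∞ (dcForm u) y := by
  have hcomp : ContDiffAt ℝ ∞ (fun y => (fderiv ℝ u y).comp (mulI n)) y :=
    (hu.fderiv_right (by simp)).clm_comp contDiffAt_const
  exact (ContinuousAlternatingMap.ofSubsingletonLIE (𝕜 := ℝ) (E := Cn n) (F := ℝ)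
    (0 : Fin 1)).contDiff.contDiffAt.comp y hcomp

theorem differentiableAt_dcForm (hu : ContDiffAt ℝ ∞ u y) : DifferentiableAt ℝ (dcForm u) y :=
  (contDiffAt_dcForm hu).differentiableAt (by simp)

theorem contDiffAt_iddbarCn (hu : ContDiffAt ℝ ∞ u y) : ContDiffAt ℝ ∞ (iddbarCn u) y := by
  have hext : ContDiffAt ℝ ∞ (extDeriv (dcForm u)) y :=
    ContDiffAt.comp (g := fun L : Cn n →L[ℝ] Cn n [⋀^Fin 1]→L[ℝ] ℝ =>
        ContinuousAlternatingMap.alternatizeUncurryFinCLM ℝ (Cn n) ℝ L) y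
      (ContinuousLinearMap.contDiff _).contDiffAt ((contDiffAt_dcForm hu).fderiv_right (by simp))
  exact hext.const_smul _

theorem iddbarCn_congr (h : u =ᶠ[𝓝 y] v) : iddbarCn u y = iddbarCn v y := by
  have hdc : dcForm u =ᶠ[𝓝 y] dcForm v := by
    filter_upwards [h.fderiv (𝕜 := ℝ)] with z hz
    rw [dcForm, dcForm, hz]
  rw [iddbarCn_eq, iddbarCn_eq, hdc.extDeriv_eq]

theorem eventually_differentiableAt {𝕜 : Type*} [NontriviallyNormedField 𝕜] {E F : Type*}
    [NormedAddCommGroup E] [NormedSpace 𝕜 E] [NormedAddCommGroup F] [NormedSpace 𝕜 F] {r : ℕ∞ω}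
    {f : E → F} {x : E} (hf : ContDiffAt 𝕜 r f x) (hr : r ≠ 0) :
    ∀ᶠ x' in 𝓝 x, DifferentiableAt 𝕜 f x' := by
  filter_upwards [(hf.of_le (ENat.one_le_iff_ne_zero_withTop.2 hr)).eventually (by simp)]
    with x' hx' using hx'.differentiableAt one_ne_zero

theorem iddbarCn_add (hu : ContDiffAt ℝ ∞ u y) (hv : ContDiffAt ℝ ∞ v y) :
    iddbarCn (fun z => u z + v z) y = iddbarCn u y + iddbarCn v y := by
  have hdc : dcForm (fun z => u z + v z) =ᶠ[𝓝 y] dcForm u + dcForm v := by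
    filter_upwards [eventually_differentiableAt hu (by simp),
      eventually_differentiableAt hv (by simp)] with z hz hz'
    ext w
    rw [dcForm_apply, fderiv_fun_add hz hz']
    rfl
  rw [iddbarCn_eq, iddbarCn_eq, iddbarCn_eq, hdc.extDeriv_eq, extDeriv_add
    (differentiableAt_dcForm hu) (differentiableAt_dcForm hv), smul_add]

theorem dcForm_comp {u : Cn m → ℝ} {k : Cn n → Cn m} (hu : DifferentiableAt ℝ u (k y))
    (hk : DifferentiableAt ℂ k y) :
    dcForm (u ∘ k) y =
      (dcForm u (k y)).compContinuousLinearMap ((fderiv ℂ k y).restrictScalars ℝ) := by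
  ext w
  rw [dcForm_apply, fderiv_comp y hu (hk.restrictScalars ℝ), hk.fderiv_restrictScalars ℝ]
  exact congrArg (fderiv ℝ u (k y)) ((fderiv ℂ k y).map_smul Complex.I (w 0))

theorem iddbarCn_comp {u : Cn m → ℝ} {k : Cn n → Cn m} (hu : ContDiffAt ℝ ∞ u (k y))
    (hk : ContDiffAt ℂ ω k y) :
    iddbarCn (u ∘ k) y =
      (iddbarCn u (k y)).compContinuousLinearMap ((fderiv ℂ k y).restrictScalars ℝ) := by
  have hdk := eventually_differentiableAt hk (by simp)
  have hdc : dcForm (u ∘ k) =ᶠ[𝓝 y]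
      fun z => (dcForm u (k z)).compContinuousLinearMap (fderiv ℝ k z) := by
    filter_upwards [hdk, hk.continuousAt.eventually (eventually_differentiableAt hu (by simp))]
      with z hz hz'
    rw [dcForm_comp hz' hz, hz.fderiv_restrictScalars ℝ]
  rw [iddbarCn_eq, iddbarCn_eq, hdc.extDeriv_eq, extDeriv_pullback (r := ω)
    (differentiableAt_dcForm hu) (hk.restrict_scalars ℝ) (by simp),
    ← hdk.self_of_nhds.fderiv_restrictScalars ℝ]
  rfl

/-- By the Cauchy–Riemann equations `d(Re h) ∘ J = -d(Im h)`, which is closed. -/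
theorem iddbarCn_re {h : Cn n → ℂ} (hh : ContDiffAt ℂ ω h y) :
    iddbarCn (fun z => (h z).re) y = 0 := by
  have hdc : dcForm (fun z => (h z).re) =ᶠ[𝓝 y]
      extDeriv (fun z => ContinuousAlternatingMap.constOfIsEmpty ℝ (Cn n) (Fin 0) (-(h z).im)) := by
    filter_upwards [eventually_differentiableAt hh (by simp)] with z hz
    have hR : HasFDerivAt h ((fderiv ℂ h z).restrictScalars ℝ) z := hz.hasFDerivAt.restrictScalars ℝ
    have hre : fderiv ℝ (fun z => (h z).re) z = _ := (Complex.reCLM.hasFDerivAt.comp z hR).fderiv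
    have him : fderiv ℝ (fun z => -(h z).im) z = _ :=
      (Complex.imCLM.hasFDerivAt.comp z hR).neg.fderiv
    rw [extDeriv_constOfIsEmpty, him]
    ext w
    rw [dcForm_apply, hre]
    simp
  have hIm : ContDiffAt ℝ ω (fun z => -(h z).im) y :=
    (Complex.imCLM.contDiff.contDiffAt.comp y (hh.restrict_scalars ℝ)).neg
  rw [iddbarCn_eq, hdc.extDeriv_eq, extDeriv_extDeriv_apply (r := ω) _ (by simp), smul_zero]
  exact (ContinuousAlternatingMap.constOfIsEmptyLIE ℝ (Cn n) ℝ
    (Fin 0)).contDiff.contDiffAt.comp y hIm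

theorem log_normSq_eventuallyEq_re {f : Cn n → ℂ} (hf : ContDiffAt ℂ ω f y) (h0 : f y ≠ 0) :
    ∃ h : Cn n → ℂ, ContDiffAt ℂ ω h y ∧
      (fun z => Real.log (Complex.normSq (f z))) =ᶠ[𝓝 y] fun z => (h z).re := by
  refine ⟨fun z => Real.log (Complex.normSq (f y)) + 2 * Complex.log (f z / f y), ?_, ?_⟩
  · refine contDiffAt_const.add (contDiffAt_const.mul
      (ContDiffAt.comp y (Complex.contDiffAt_log ?_) (hf.div_const _)))
    rw [div_self h0]
    exact Complex.one_mem_slitPlane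
  · filter_upwards [hf.continuousAt.eventually_ne h0] with z hz
    have hre : (Real.log (Complex.normSq (f y)) + 2 * Complex.log (f z / f y) : ℂ).re =
        Real.log (Complex.normSq (f y)) + 2 * Real.log ‖f z / f y‖ := by simp [Complex.log_re]
    rw [hre, Complex.normSq_eq_norm_sq, Complex.normSq_eq_norm_sq, Real.log_pow, Real.log_pow,
      norm_div, Real.log_div (norm_ne_zero_iff.2 hz) (norm_ne_zero_iff.2 h0)]
    push_cast; ring

theorem contDiffAt_log_normSq {f : Cn n → ℂ} (hf : ContDiffAt ℂ ω f y) (h0 : f y ≠ 0) :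
    ContDiffAt ℝ ∞ (fun z => Real.log (Complex.normSq (f z))) y := by
  obtain ⟨h, hh, e⟩ := log_normSq_eventuallyEq_re hf h0
  refine ContDiffAt.congr_of_eventuallyEq ?_ e
  exact (Complex.reCLM.contDiff.contDiffAt.comp y (hh.restrict_scalars ℝ)).of_le (by simp)

theorem iddbarCn_log_normSq {f : Cn n → ℂ} (hf : ContDiffAt ℂ ω f y) (h0 : f y ≠ 0) :
    iddbarCn (fun z => Real.log (Complex.normSq (f z))) y = 0 := by
  obtain ⟨h, hh, e⟩ := log_normSq_eventuallyEq_re hf h0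
  rw [iddbarCn_congr e, iddbarCn_re hh]

theorem iddbarCn_apply (hu : ContDiffAt ℝ ∞ u y) (v w : Cn n) :
    iddbarCn u y ![v, w] = (-(1 / 2 : ℝ)) * (fderiv ℝ (fderiv ℝ u) y v (Complex.I • w) -
      fderiv ℝ (fderiv ℝ u) y w (Complex.I • v)) := by
  have hd : DifferentiableAt ℝ (fderiv ℝ u) y :=
    (hu.fderiv_right (m := ∞) (by simp)).differentiableAt (by simp)
  have hdc : ∀ a b, fderiv ℝ (fun z => dcForm u z ![b]) y a =
      fderiv ℝ (fderiv ℝ u) y a (Complex.I • b) := fun a b => by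
    have : HasFDerivAt (fun z => dcForm u z ![b])
        ((ContinuousLinearMap.apply ℝ ℝ (Complex.I • b)).comp (fderiv ℝ (fderiv ℝ u) y)) y :=
      (ContinuousLinearMap.apply ℝ ℝ (Complex.I • b)).hasFDerivAt.comp y hd.hasFDerivAt
    rw [this.fderiv]
    rfl
  have r0 : (0 : Fin 2).removeNth ![v, w] = ![w] := by ext i; fin_cases i; rfl
  have r1 : (1 : Fin 2).removeNth ![v, w] = ![v] := by ext i; fin_cases i; rfl
  rw [iddbarCn_eq, ContinuousAlternatingMap.smul_apply,
    extDeriv_apply (differentiableAt_dcForm hu), Fin.sum_univ_two, r0, r1]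
  simp [hdc, sub_eq_add_neg]

theorem isOneOne_iddbarCn (hu : ContDiffAt ℝ ∞ u y) : IsOneOne (iddbarCn u y) := by
  have hsymm : IsSymmSndFDerivAt ℝ u y := by
    refine hu.isSymmSndFDerivAt ?_
    rw [minSmoothness_of_isRCLikeNormedField]
    exact WithTop.coe_le_coe.2 (le_top : (2 : ℕ∞) ≤ ⊤)
  intro v w
  rw [iddbarCn_apply hu, iddbarCn_apply hu]
  simp only [smul_smul, Complex.I_mul_I, neg_one_smul, map_neg]
  rw [hsymm.eq _ w, hsymm.eq _ v]
  ring

end Iddbar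

section MatrixSmooth

variable {𝕜 : Type*} [NontriviallyNormedField 𝕜] {R : Type*} [NormedField R] [NormedAlgebra 𝕜 R]
  {Z : Type*} [NormedAddCommGroup Z] [NormedSpace 𝕜 Z] {ι : Type*} [Fintype ι] [DecidableEq ι]
  {r : ℕ∞ω} {z : Z} {A : Z → Matrix ι ι R}

theorem contDiffAt_det (hA : ∀ i j, ContDiffAt 𝕜 r (fun z => A z i j) z) :
    ContDiffAt 𝕜 r (fun z => (A z).det) z := by
  simp only [Matrix.det_apply]
  refine ContDiffAt.sum fun σ _ => ?_
  simp only [Units.smul_def, zsmul_eq_mul]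
  exact contDiffAt_const.mul (contDiffAt_prod fun i _ => hA _ _)

theorem contDiffAt_inv_apply (hA : ∀ i j, ContDiffAt 𝕜 r (fun z => A z i j) z)
    (hd : (A z).det ≠ 0) (i j : ι) : ContDiffAt 𝕜 r (fun z => (A z)⁻¹ i j) z := by
  simp only [Matrix.inv_def, Matrix.smul_apply, smul_eq_mul, Ring.inverse_eq_inv']
  refine ((contDiffAt_det hA).inv hd).mul ?_
  simp only [Matrix.adjugate_apply]
  refine contDiffAt_det fun p q => ?_
  simp only [Matrix.updateRow_apply]
  split_ifs
  · exact contDiffAt_const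
  · exact hA p q

theorem contDiffAt_hermMatrix {n : ℕ} {Z : Type*} [NormedAddCommGroup Z] [NormedSpace ℝ Z]
    {r : ℕ∞ω} {f : Z → Cn n [⋀^Fin 2]→L[ℝ] ℝ} {z : Z} (hf : ContDiffAt ℝ r f z) (i j : Fin n) :
    ContDiffAt ℝ r (fun z => hermMatrix (f z) i j) z := by
  simp only [hermMatrix, Matrix.of_apply]
  have h : ∀ v, ContDiffAt ℝ r (fun z => ((f z v : ℝ) : ℂ)) z := fun v =>
    Complex.ofRealCLM.contDiff.contDiffAt.comp z
      ((ContinuousAlternatingMap.apply ℝ (Cn n) ℝ v).contDiff.contDiffAt.comp z hf)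
  exact (h _).sub (contDiffAt_const.mul (h _))

theorem contDiffAt_det_fderiv {n : ℕ} {k : Cn n → Cn n} {y : Cn n} (hk : ContDiffAt ℂ ω k y) :
    ContDiffAt ℂ ω (fun z => (fderiv ℂ k z).det) y := by
  have hdet : ∀ z, (fderiv ℂ k z).det = (LinearMap.toMatrix' (fderiv ℂ k z).toLinearMap).det :=
    fun z => (LinearMap.det_toMatrix' _).symm
  simp only [hdet]
  refine contDiffAt_det fun i j => ?_
  simp only [LinearMap.toMatrix'_apply]
  exact contDiffAt_pi.1 ((hk.fderiv_right (m := ω) (by simp)).clm_apply contDiffAt_const) i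

end MatrixSmooth

/-! ### Scalar curvature along the leaves of a linear foliation -/

section Leaf

variable {n m : ℕ} {B : Cn m → Cn m [⋀^Fin 2]→L[ℝ] ℝ} {ℓ : Cn n →L[ℂ] Cn m} {u : Cn m}

/-- The restriction of the `2`-form `B` to the leaves `u + range ℓ`, in the coordinate given
by `ℓ`. -/
noncomputable def leafForm (B : Cn m → Cn m [⋀^Fin 2]→L[ℝ] ℝ) (ℓ : Cn n →L[ℂ] Cn m) (u : Cn m) :
    Cn n [⋀^Fin 2]→L[ℝ] ℝ :=
  (B u).compContinuousLinearMap (ℓ.restrictScalars ℝ)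

/-- The volume density of `leafForm B ℓ`. -/
noncomputable def leafDensity (B : Cn m → Cn m [⋀^Fin 2]→L[ℝ] ℝ) (ℓ : Cn n →L[ℂ] Cn m)
    (u : Cn m) : ℝ :=
  (hermMatrix (leafForm B ℓ u)).det.re

/-- The Ricci potential of the leaves turned into a form on the ambient space, `-i∂∂̄ log det`;
its restriction to a leaf is the Ricci form of that leaf. -/
noncomputable def leafRicci (B : Cn m → Cn m [⋀^Fin 2]→L[ℝ] ℝ) (ℓ : Cn n →L[ℂ] Cn m) (u : Cn m) :
    Cn m [⋀^Fin 2]→L[ℝ] ℝ :=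
  -iddbarCn (fun u => Real.log (leafDensity B ℓ u)) u

/-- The scalar curvature of the leaves, a function on the ambient space. -/
noncomputable def leafScal (B : Cn m → Cn m [⋀^Fin 2]→L[ℝ] ℝ) (ℓ : Cn n →L[ℂ] Cn m) (u : Cn m) :
    ℝ :=
  ((hermMatrix (leafForm B ℓ u))⁻¹ * hermMatrix (leafForm (leafRicci B ℓ) ℓ u)).trace.re

/-- `B` is a smooth positive `(1,1)`-form near `u`. -/
structure IsPositiveNear (B : Cn m → Cn m [⋀^Fin 2]→L[ℝ] ℝ) (u : Cn m) : Prop where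
  smooth : ContDiffAt ℝ ∞ B u
  oneOne : ∀ᶠ v in 𝓝 u, IsOneOne (B v)
  pos : ∀ᶠ v in 𝓝 u, ∀ w, w ≠ 0 → 0 < B v ![w, Complex.I • w]

theorem contDiffAt_leafForm {r : ℕ∞ω} (hB : ContDiffAt ℝ r B u) :
    ContDiffAt ℝ r (leafForm B ℓ) u :=
  contDiffAt_twoForm_comp hB contDiffAt_const

theorem isOneOne_leafForm (hB : IsOneOne (B u)) : IsOneOne (leafForm B ℓ u) :=
  isOneOne_comp hB ℓ

theorem leafDensity_pos (hB : IsOneOne (B u)) (hpos : ∀ w, w ≠ 0 → 0 < B u ![w, Complex.I • w])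
    (hℓ : Function.Injective ℓ) : 0 < leafDensity B ℓ u := by
  refine hermMatrix_det_re_pos (isOneOne_leafForm hB) fun v hv => ?_
  rw [leafForm, twoForm_comp_apply, ContinuousLinearMap.coe_restrictScalars', map_smul]
  exact hpos _ ((map_ne_zero_iff ℓ hℓ).2 hv)

theorem contDiffAt_leafDensity {r : ℕ∞ω} (hB : ContDiffAt ℝ r B u) :
    ContDiffAt ℝ r (leafDensity B ℓ) u :=
  Complex.reCLM.contDiff.contDiffAt.comp u
    (contDiffAt_det (contDiffAt_hermMatrix (contDiffAt_leafForm hB)))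

theorem IsPositiveNear.eventually_leafDensity_pos (hB : IsPositiveNear B u)
    (hℓ : Function.Injective ℓ) : ∀ᶠ v in 𝓝 u, 0 < leafDensity B ℓ v := by
  filter_upwards [hB.oneOne, hB.pos] with v h1 h2 using leafDensity_pos h1 h2 hℓ

theorem IsPositiveNear.contDiffAt_log_leafDensity (hB : IsPositiveNear B u)
    (hℓ : Function.Injective ℓ) : ContDiffAt ℝ ∞ (fun u => Real.log (leafDensity B ℓ u)) u :=
  (contDiffAt_leafDensity hB.smooth).log (hB.eventually_leafDensity_pos hℓ).self_of_nhds.ne'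

theorem IsPositiveNear.contDiffAt_leafScal (hB : IsPositiveNear B u) (hℓ : Function.Injective ℓ) :
    ContDiffAt ℝ ∞ (leafScal B ℓ) u := by
  have hdet : (hermMatrix (leafForm B ℓ u)).det ≠ 0 := fun h =>
    (hB.eventually_leafDensity_pos hℓ).self_of_nhds.ne' (congrArg Complex.re h)
  refine Complex.reCLM.contDiff.contDiffAt.comp u ?_
  simp only [Matrix.trace, Matrix.diag, Matrix.mul_apply]
  refine ContDiffAt.sum fun i _ => ContDiffAt.sum fun j _ => ContDiffAt.mul ?_ ?_
  · exact contDiffAt_inv_apply (contDiffAt_hermMatrix (contDiffAt_leafForm hB.smooth)) hdet i j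
  · exact contDiffAt_hermMatrix (contDiffAt_leafForm
      (contDiffAt_iddbarCn (hB.contDiffAt_log_leafDensity hℓ)).neg) j i

section Pullback

variable {k : Cn n → Cn n} {c : Cn m} {y : Cn n} {η : Cn n → Cn n [⋀^Fin 2]→L[ℝ] ℝ}

theorem hasFDerivAt_leafMap (hk : DifferentiableAt ℂ k y) :
    HasFDerivAt (fun z => ℓ (k z) + c) (ℓ ∘L fderiv ℂ k y) y :=
  (ℓ.hasFDerivAt.comp y hk.hasFDerivAt).add_const c

theorem contDiffAt_leafMap (hk : ContDiffAt ℂ ω k y) :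
    ContDiffAt ℂ ω (fun z => ℓ (k z) + c) y :=
  (ℓ.contDiff.contDiffAt.comp y hk).add contDiffAt_const

theorem neg_iddbarCn_log_pullback (hk : ContDiffAt ℂ ω k y) (hdet : (fderiv ℂ k y).det ≠ 0)
    (hB : IsPositiveNear B (ℓ (k y) + c)) (hℓ : Function.Injective ℓ)
    (hη : η =ᶠ[𝓝 y] fun z => (leafForm B ℓ (ℓ (k z) + c)).compContinuousLinearMap
      ((fderiv ℂ k z).restrictScalars ℝ)) :
    -iddbarCn (fun z => Real.log (hermMatrix (η z)).det.re) y =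
      (leafForm (leafRicci B ℓ) ℓ (ℓ (k y) + c)).compContinuousLinearMap
        ((fderiv ℂ k y).restrictScalars ℝ) := by
  have hμ := contDiffAt_leafMap (ℓ := ℓ) (c := c) hk
  have hL := hB.contDiffAt_log_leafDensity hℓ
  have hfd := contDiffAt_det_fderiv hk
  have hsplit : (fun z => Real.log (hermMatrix (η z)).det.re) =ᶠ[𝓝 y]
      fun z => Real.log (Complex.normSq (fderiv ℂ k z).det) +
        ((fun u => Real.log (leafDensity B ℓ u)) ∘ fun z => ℓ (k z) + c) z := by
    filter_upwards [hη, hμ.continuousAt.eventually hB.oneOne,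
      hμ.continuousAt.eventually (hB.eventually_leafDensity_pos hℓ),
      hfd.continuousAt.eventually_ne hdet] with z hηz h11 hpos hne
    rw [hηz, det_re_hermMatrix_comp (isOneOne_leafForm h11)]
    exact Real.log_mul (Complex.normSq_eq_zero.not.2 hne) hpos.ne'
  rw [iddbarCn_congr hsplit, iddbarCn_add (contDiffAt_log_normSq hfd hdet)
    (hL.comp y ((hμ.restrict_scalars ℝ).of_le (by simp))), iddbarCn_log_normSq hfd hdet, zero_add,
    iddbarCn_comp (k := fun z => ℓ (k z) + c) hL hμ,
    (hasFDerivAt_leafMap (hk.differentiableAt (by simp))).fderiv]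
  rfl

theorem scal_pullback_eq_leafScal (hk : ContDiffAt ℂ ω k y) (hdet : (fderiv ℂ k y).det ≠ 0)
    (hB : IsPositiveNear B (ℓ (k y) + c)) (hℓ : Function.Injective ℓ)
    (hη : η =ᶠ[𝓝 y] fun z => (leafForm B ℓ (ℓ (k z) + c)).compContinuousLinearMap
      ((fderiv ℂ k z).restrictScalars ℝ)) :
    ((hermMatrix (η y))⁻¹ *
      hermMatrix (-iddbarCn (fun z => Real.log (hermMatrix (η z)).det.re) y)).trace.re =
      leafScal B ℓ (ℓ (k y) + c) := by
  have hRicci : IsOneOne (leafRicci B ℓ (ℓ (k y) + c)) := fun v w =>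
    congrArg Neg.neg (isOneOne_iddbarCn (hB.contDiffAt_log_leafDensity hℓ) v w)
  have hηy : η y = (leafForm B ℓ (ℓ (k y) + c)).compContinuousLinearMap
      ((fderiv ℂ k y).restrictScalars ℝ) := hη.self_of_nhds
  rw [neg_iddbarCn_log_pullback hk hdet hB hℓ hη, hηy, trace_hermMatrix_comp
    (isOneOne_leafForm hB.oneOne.self_of_nhds) (isOneOne_leafForm hRicci) hdet]
  rfl

end Pullback

end Leaf

/-! ### Derivatives of maps between real manifolds -/

section RDeriv

variable {E : Type*} [NormedAddCommGroup E] [NormedSpace ℝ E]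
  {X : Type*} [TopologicalSpace X] [ChartedSpace E X]
  {E' : Type*} [NormedAddCommGroup E'] [NormedSpace ℝ E']
  {Y : Type*} [TopologicalSpace Y] [ChartedSpace E' Y]
  {E'' : Type*} [NormedAddCommGroup E''] [NormedSpace ℝ E'']
  {Z : Type*} [TopologicalSpace Z] [ChartedSpace E'' Z]

theorem rderiv_comp {g : Y → Z} {f : X → Y} {x : X}
    (hg : MDifferentiableAt 𝓘(ℝ, E') 𝓘(ℝ, E'') g (f x))
    (hf : MDifferentiableAt 𝓘(ℝ, E) 𝓘(ℝ, E') f x) :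
    rderiv E E'' (g ∘ f) x = (rderiv E' E'' g (f x)).comp (rderiv E E' f x) :=
  mfderiv_comp x hg hf

theorem rderiv_congr {f g : X → Y} {x : X} (h : f =ᶠ[𝓝 x] g) :
    rderiv E E' f x = rderiv E E' g x := by
  have := h.mfderiv_eq (I := 𝓘(ℝ, E)) (I' := 𝓘(ℝ, E'))
  exact this

theorem rderiv_id (x : X) : rderiv E E (id : X → X) x = ContinuousLinearMap.id ℝ E :=
  mfderiv_id

theorem rderiv_eq_fderiv {f : E → E'} {x : E} : rderiv E E' f x = fderiv ℝ f x :=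
  mfderiv_eq_fderiv

theorem rderiv_injective_of_leftInverse {f : X → Y} {g : Y → X} {x : X}
    (hg : MDifferentiableAt 𝓘(ℝ, E') 𝓘(ℝ, E) g (f x))
    (hf : MDifferentiableAt 𝓘(ℝ, E) 𝓘(ℝ, E') f x) (h : ∀ᶠ x' in 𝓝 x, g (f x') = x') :
    Function.Injective (rderiv E E' f x) := by
  have hid : rderiv E E (g ∘ f) x = ContinuousLinearMap.id ℝ E := by
    rw [← rderiv_id x]; exact rderiv_congr h
  rw [rderiv_comp hg hf] at hid
  exact Function.LeftInverse.injective (g := rderiv E' E g (f x))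
    fun v => congrArg (fun L : E →L[ℝ] E => L v) hid

end RDeriv

/-! ### Pullbacks of two-forms to vector spaces -/

section FlatPull

variable {m : ℕ} {Y : Type*} [TopologicalSpace Y] [ChartedSpace (Cn m) Y]
  {E : Type*} [NormedAddCommGroup E] [NormedSpace ℝ E]
  {E' : Type*} [NormedAddCommGroup E'] [NormedSpace ℝ E']

/-- The value of a `2`-form at a point as a form on the model space, to which the tangent space is
definitionally equal; the counterpart of `rderiv`. -/
def formAt (Ω : TwoForm m Y) (y : Y) : Cn m [⋀^Fin 2]→L[ℝ] ℝ :=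
  Ω y

/-- The pullback of a `2`-form by a map from a vector space. -/
noncomputable def flatPull (Ω : TwoForm m Y) (G : E → Y) (e : E) : E [⋀^Fin 2]→L[ℝ] ℝ :=
  (formAt Ω (G e)).compContinuousLinearMap (rderiv E (Cn m) G e)

theorem flatPull_apply (Ω : TwoForm m Y) (G : E → Y) (e a b : E) :
    flatPull Ω G e ![a, b] = formAt Ω (G e) ![rderiv E (Cn m) G e a, rderiv E (Cn m) G e b] :=
  twoForm_comp_apply _ _ _ _

theorem flatPull_congr {Ω : TwoForm m Y} {G G' : E → Y} {e : E} (h : G =ᶠ[𝓝 e] G') :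
    flatPull Ω G e = flatPull Ω G' e := by
  rw [flatPull, flatPull, rderiv_congr h, h.self_of_nhds]

theorem flatPull_comp {Ω : TwoForm m Y} {G : E' → Y} {k : E → E'} {e : E}
    (hG : MDifferentiableAt 𝓘(ℝ, E') 𝓘(ℝ, Cn m) G (k e)) (hk : DifferentiableAt ℝ k e) :
    flatPull Ω (G ∘ k) e = (flatPull Ω G (k e)).compContinuousLinearMap (fderiv ℝ k e) := by
  rw [flatPull, rderiv_comp hG hk.mdifferentiableAt, rderiv_eq_fderiv]
  rfl

theorem inChart_eq_flatPull (Ω : TwoForm m Y) (p : Y) :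
    inChart Ω p = flatPull Ω (chartAt (Cn m) p).symm :=
  rfl

theorem contDiffAt_flatPull [IsManifold 𝓘(ℝ, Cn m) ∞ Y] [FiniteDimensional ℝ E] {Ω : TwoForm m Y}
    (hΩ : ∀ p : Y, ContDiffOn ℝ ∞ (inChart Ω p) (chartAt (Cn m) p).target)
    {G : E → Y} {e : E} (hG : ContMDiffAt 𝓘(ℝ, E) 𝓘(ℝ, Cn m) ∞ G e) :
    ContDiffAt ℝ ∞ (flatPull Ω G) e := by
  set c := chartAt (Cn m) (G e)
  have hc : ContMDiffAt 𝓘(ℝ, Cn m) 𝓘(ℝ, Cn m) ∞ c (G e) :=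
    contMDiffAt_of_mem_maximalAtlas (IsManifold.chart_mem_maximalAtlas _) (mem_chart_source _ _)
  have hk : ContDiffAt ℝ ∞ (c ∘ G) e := (hc.comp e hG).contDiffAt
  have hmem : ∀ᶠ e' in 𝓝 e, G e' ∈ c.source :=
    hG.continuousAt.eventually (c.open_source.mem_nhds (mem_chart_source _ _))
  have hpull : flatPull Ω G =ᶠ[𝓝 e] fun e' =>
      (inChart Ω (G e) ((c ∘ G) e')).compContinuousLinearMap (fderiv ℝ (c ∘ G) e') := by
    filter_upwards [hmem.eventually_nhds, eventually_differentiableAt hk (by simp)]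
      with e' hsource hdiff
    have hfactor : G =ᶠ[𝓝 e'] c.symm ∘ (c ∘ G) := by
      filter_upwards [hsource] with e'' h using (c.left_inv h).symm
    rw [flatPull_congr hfactor, flatPull_comp _ hdiff, inChart_eq_flatPull]
    exact mdifferentiableAt_atlas_symm (chart_mem_atlas _ _) (c.map_source hsource.self_of_nhds)
  have hform : ContDiffAt ℝ ∞ (fun e' => inChart Ω (G e) ((c ∘ G) e')) e :=
    ContDiffAt.comp (g := inChart Ω (G e)) e ((hΩ (G e)).contDiffAt
      (c.open_target.mem_nhds (c.map_source (mem_chart_source _ _)))) hk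
  exact (contDiffAt_twoForm_comp hform (hk.fderiv_right (by simp))).congr_of_eventuallyEq hpull

variable {n : ℕ} {X : Type*} [TopologicalSpace X] [ChartedSpace (Cn n) X]

theorem inChart_pullback [IsManifold 𝓘(ℝ, Cn n) ∞ X] {Ω : TwoForm m Y} {j : X → Y} {p : X}
    {z : Cn n} (hz : z ∈ (chartAt (Cn n) p).target)
    (hj : MDifferentiableAt 𝓘(ℝ, Cn n) 𝓘(ℝ, Cn m) j ((chartAt (Cn n) p).symm z)) :
    inChart (pullback j Ω) p z = flatPull Ω (j ∘ (chartAt (Cn n) p).symm) z := by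
  rw [flatPull, rderiv_comp hj (mdifferentiableAt_atlas_symm (chart_mem_atlas _ _) hz)]
  rfl

end FlatPull

/-! ### Adapted charts of a holomorphic submersion to `ℂ` -/

section Adapted

variable {n : ℕ} {𝒳 : Type*} [TopologicalSpace 𝒳] [ChartedSpace (Cn (n + 1)) 𝒳]

/-- A holomorphic chart, split as `ℂ × ℂⁿ`, in which the fibres of `π` are the slices
`{const} × ℂⁿ`. -/
structure AdaptedChart (π : 𝒳 → ℂ) where
  /-- The underlying chart. -/
  chart : OpenPartialHomeomorph 𝒳 (Cn (n + 1))
  /-- The linear splitting of the model space. -/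
  split : Cn (n + 1) ≃L[ℂ] ℂ × Cn n
  /-- The coordinate on the base. -/
  base : ℂ → ℂ
  mem_atlas : chart ∈ IsManifold.maximalAtlas 𝓘(ℂ, Cn (n + 1)) ω 𝒳
  split_chart : ∀ x ∈ chart.source, (split (chart x)).1 = base (π x)
  base_injOn : InjOn base (π '' chart.source)

theorem exists_adaptedChart {π : 𝒳 → ℂ} (hπ : IsSubmersion 𝓘(ℂ, Cn (n + 1)) 𝓘(ℂ, ℂ) ω π) (p : 𝒳) :
    ∃ A : AdaptedChart (n := n) π, p ∈ A.chart.source := by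
  obtain ⟨F, _, _, hF⟩ := hπ
  have h := hF p
  have : FiniteDimensional ℂ (ℂ × F) := LinearEquiv.finiteDimensional h.equiv.toLinearEquiv
  have : FiniteDimensional ℂ F :=
    Module.Finite.of_surjective (LinearMap.snd ℂ ℂ F) LinearMap.snd_surjective
  have hrank : Module.finrank ℂ F = Module.finrank ℂ (Cn n) := by
    have := h.equiv.toLinearEquiv.finrank_eq
    rw [Module.finrank_prod, Module.finrank_self, Module.finrank_fin_fun] at this
    rw [Module.finrank_fin_fun]
    omega
  let i : F ≃L[ℂ] Cn n := ContinuousLinearEquiv.ofFinrankEq hrank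
  refine ⟨⟨h.domChart, h.equiv.trans ((ContinuousLinearEquiv.refl ℂ ℂ).prodCongr i), h.codChart,
    h.domChart_mem_maximalAtlas, fun x hx => ?_, h.codChart.injOn.mono
      (image_subset_iff.2 h.source_subset_preimage_source)⟩, h.mem_domChart_source⟩
  have hm : h.domChart x ∈ (h.domChart.extend 𝓘(ℂ, Cn (n + 1))).target := by
    simpa using h.domChart.map_source hx
  have := h.writtenInCharts hm
  simp only [Function.comp_apply, OpenPartialHomeomorph.extend,
    modelWithCornersSelf_partialEquiv, PartialEquiv.trans_refl,
    OpenPartialHomeomorph.toFun_eq_coe, OpenPartialHomeomorph.coe_toPartialEquiv_symm,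
    h.domChart.left_inv hx] at this
  simpa using this.symm

variable {π : 𝒳 → ℂ} {Ω : TwoForm (n + 1) 𝒳}

variable (n) in
/-- A holomorphic immersion into the fibre of `π` over `s`. -/
structure IsFibreMap (π : 𝒳 → ℂ) {Y : Type*} [TopologicalSpace Y] [ChartedSpace (Cn n) Y]
    (j : Y → 𝒳) (s : ℂ) : Prop where
  holo : ContMDiff 𝓘(ℂ, Cn n) 𝓘(ℂ, Cn (n + 1)) ω j
  imm : ∀ y, Function.Injective (rderiv (Cn n) (Cn (n + 1)) j y)
  fib : ∀ y, π (j y) = s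

theorem IsFibreMap.mdifferentiable {Y : Type*} [TopologicalSpace Y] [ChartedSpace (Cn n) Y]
    {j : Y → 𝒳} {s : ℂ} (hj : IsFibreMap n π j s) : MDifferentiable 𝓘(ℝ, Cn n) 𝓘(ℝ, Cn (n + 1)) j :=
  fun y => mdifferentiableAt_real (hj.holo.mdifferentiable (by simp) y)

theorem IsKahlerForm.formAt_oneOne {m : ℕ} {Y : Type*} [TopologicalSpace Y] [ChartedSpace (Cn m) Y]
    {Ω : TwoForm m Y} (hΩ : IsKahlerForm Ω) (x : Y) : IsOneOne (formAt Ω x) :=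
  fun v w => hΩ.invariant x v w

theorem IsKahlerForm.formAt_pos {m : ℕ} {Y : Type*} [TopologicalSpace Y] [ChartedSpace (Cn m) Y]
    {Ω : TwoForm m Y} (hΩ : IsKahlerForm Ω) (x : Y) (v : Cn m) (hv : v ≠ 0) :
    0 < formAt Ω x ![v, Complex.I • v] :=
  hΩ.pos x v hv

namespace AdaptedChart

variable (A : AdaptedChart (n := n) π)

/-- The projection to the fibre coordinate. -/
noncomputable def proj : Cn (n + 1) →L[ℂ] Cn n :=
  (ContinuousLinearMap.snd ℂ ℂ (Cn n)).comp (A.split : Cn (n + 1) →L[ℂ] ℂ × Cn n)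

/-- The inclusion of the fibre direction. -/
noncomputable def incl : Cn n →L[ℂ] Cn (n + 1) :=
  (A.split.symm : ℂ × Cn n →L[ℂ] Cn (n + 1)).comp (ContinuousLinearMap.inr ℂ ℂ (Cn n))

/-- The translation taking `range A.incl` to the slice of the chart given by the fibre over `s`. -/
noncomputable def offset (s : ℂ) : Cn (n + 1) :=
  A.split.symm (A.base s, 0)

theorem incl_injective : Function.Injective A.incl := fun a b h => by
  have := A.split.symm.injective h
  simpa using this

theorem incl_proj_add_offset {x : 𝒳} (hx : x ∈ A.chart.source) :
    A.incl (A.proj (A.chart x)) + A.offset (π x) = A.chart x := by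
  rw [← A.split.injective.eq_iff, offset, ← A.split_chart x hx]
  simp [incl, proj]

theorem contMDiffAt_symm {u : Cn (n + 1)} (hu : u ∈ A.chart.target) :
    ContMDiffAt 𝓘(ℂ, Cn (n + 1)) 𝓘(ℂ, Cn (n + 1)) ω A.chart.symm u :=
  (contMDiffOn_symm_of_mem_maximalAtlas A.mem_atlas).contMDiffAt (A.chart.open_target.mem_nhds hu)

theorem contMDiffAt_chart {x : 𝒳} (hx : x ∈ A.chart.source) :
    ContMDiffAt 𝓘(ℂ, Cn (n + 1)) 𝓘(ℂ, Cn (n + 1)) ω A.chart x :=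
  contMDiffAt_of_mem_maximalAtlas A.mem_atlas hx

theorem mdifferentiableAt_symm {u : Cn (n + 1)} (hu : u ∈ A.chart.target) :
    MDifferentiableAt 𝓘(ℝ, Cn (n + 1)) 𝓘(ℝ, Cn (n + 1)) A.chart.symm u :=
  mdifferentiableAt_real ((A.contMDiffAt_symm hu).mdifferentiableAt (by simp))

theorem rderiv_symm_injective {u : Cn (n + 1)} (hu : u ∈ A.chart.target) :
    Function.Injective (rderiv (Cn (n + 1)) (Cn (n + 1)) A.chart.symm u) := by
  refine rderiv_injective_of_leftInverse (g := A.chart) (mdifferentiableAt_real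
    ((A.contMDiffAt_chart (A.chart.map_target hu)).mdifferentiableAt (by simp)))
    (A.mdifferentiableAt_symm hu) ?_
  filter_upwards [A.chart.open_target.mem_nhds hu] with v hv using A.chart.right_inv hv

/-- A `2`-form on `𝒳` in the adapted chart. -/
noncomputable def form (Ω : TwoForm (n + 1) 𝒳) : Cn (n + 1) → Cn (n + 1) [⋀^Fin 2]→L[ℝ] ℝ :=
  flatPull Ω A.chart.symm

theorem isPositiveNear_form [IsManifold 𝓘(ℂ, Cn (n + 1)) ω 𝒳] (hΩ : IsKahlerForm Ω)
    {u : Cn (n + 1)} (hu : u ∈ A.chart.target) : IsPositiveNear (A.form Ω) u := by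
  have := isManifold_real (E := Cn (n + 1)) (X := 𝒳) (r := ∞)
  have hd : ∀ v ∈ A.chart.target,
      MDifferentiableAt 𝓘(ℂ, Cn (n + 1)) 𝓘(ℂ, Cn (n + 1)) A.chart.symm v :=
    fun v hv => (A.contMDiffAt_symm hv).mdifferentiableAt (by simp)
  refine ⟨contDiffAt_flatPull hΩ.smooth (contMDiffAt_real (A.contMDiffAt_symm hu)), ?_, ?_⟩
  · filter_upwards [A.chart.open_target.mem_nhds hu] with v hv
    rw [form, flatPull, rderiv_eq_restrictScalars (hd v hv)]
    exact isOneOne_comp (hΩ.formAt_oneOne _) _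
  · filter_upwards [A.chart.open_target.mem_nhds hu] with v hv w hw
    rw [form, flatPull_apply, rderiv_I_smul (hd v hv)]
    exact hΩ.formAt_pos _ _ ((map_ne_zero_iff _ (A.rderiv_symm_injective hv)).2 hw)

/-- The scalar curvature of the fibres of `π`, computed in the adapted chart. -/
noncomputable def scal (Ω : TwoForm (n + 1) 𝒳) (x : 𝒳) : ℝ :=
  leafScal (A.form Ω) A.incl (A.chart x)

theorem contMDiffAt_scal [IsManifold 𝓘(ℂ, Cn (n + 1)) ω 𝒳] (hΩ : IsKahlerForm Ω) {x : 𝒳}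
    (hx : x ∈ A.chart.source) : ContMDiffAt 𝓘(ℝ, Cn (n + 1)) 𝓘(ℝ, ℝ) ∞ (A.scal Ω) x :=
  ((A.isPositiveNear_form hΩ (A.chart.map_source hx)).contDiffAt_leafScal
    A.incl_injective).contMDiffAt.comp x (contMDiffAt_real (A.contMDiffAt_chart hx))

section Map

variable {Y : Type*} [TopologicalSpace Y] [ChartedSpace (Cn n) Y]
  {j : Y → 𝒳} {s : ℂ} {p : Y} {z : Cn n}

/-- A map `j` into a fibre of `π`, in the preferred chart at `p` and the fibre coordinate of the
adapted chart. -/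
noncomputable def leafCoord (j : Y → 𝒳) (p : Y) : Cn n → Cn n :=
  A.proj ∘ A.chart ∘ j ∘ (chartAt (Cn n) p).symm

theorem eventually_mem_source (hj : IsFibreMap n π j s) (hz : z ∈ (chartAt (Cn n) p).target)
    (hjz : j ((chartAt (Cn n) p).symm z) ∈ A.chart.source) :
    ∀ᶠ z' in 𝓝 z, z' ∈ (chartAt (Cn n) p).target ∧
      j ((chartAt (Cn n) p).symm z') ∈ A.chart.source :=
  ((chartAt (Cn n) p).open_target.eventually_mem hz).and
    ((hj.holo.continuous.continuousAt.comp ((chartAt (Cn n) p).continuousAt_symm hz)).eventually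
      (A.chart.open_source.eventually_mem hjz))

theorem incl_leafCoord_add_offset (hj : IsFibreMap n π j s)
    (hjz : j ((chartAt (Cn n) p).symm z) ∈ A.chart.source) :
    A.incl (A.leafCoord j p z) + A.offset s = A.chart (j ((chartAt (Cn n) p).symm z)) := by
  rw [← A.incl_proj_add_offset hjz, hj.fib]
  rfl

theorem eventuallyEq_symm_comp_leafCoord (hj : IsFibreMap n π j s)
    (hz : z ∈ (chartAt (Cn n) p).target) (hjz : j ((chartAt (Cn n) p).symm z) ∈ A.chart.source) :
    j ∘ (chartAt (Cn n) p).symm =ᶠ[𝓝 z]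
      A.chart.symm ∘ fun z => A.incl (A.leafCoord j p z) + A.offset s := by
  filter_upwards [A.eventually_mem_source hj hz hjz] with z' hz'
  rw [Function.comp_apply, Function.comp_apply, A.incl_leafCoord_add_offset hj hz'.2,
    A.chart.left_inv hz'.2]

variable [IsManifold 𝓘(ℂ, Cn n) ω Y]

theorem contDiffAt_leafCoord (hj : IsFibreMap n π j s) (hz : z ∈ (chartAt (Cn n) p).target)
    (hjz : j ((chartAt (Cn n) p).symm z) ∈ A.chart.source) :
    ContDiffAt ℂ ω (A.leafCoord j p) z := by
  have hc : ContMDiffAt 𝓘(ℂ, Cn n) 𝓘(ℂ, Cn n) ω (chartAt (Cn n) p).symm z :=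
    (contMDiffOn_symm_of_mem_maximalAtlas (IsManifold.chart_mem_maximalAtlas p)).contMDiffAt
      ((chartAt (Cn n) p).open_target.mem_nhds hz)
  have hjc := (hj.holo _).comp z hc
  exact A.proj.contDiff.contDiffAt.comp z ((A.contMDiffAt_chart hjz).comp z hjc).contDiffAt

theorem hasFDerivAt_incl_leafCoord (hj : IsFibreMap n π j s) (hz : z ∈ (chartAt (Cn n) p).target)
    (hjz : j ((chartAt (Cn n) p).symm z) ∈ A.chart.source) :
    HasFDerivAt (fun z => A.incl (A.leafCoord j p z) + A.offset s)
      ((A.incl ∘L fderiv ℂ (A.leafCoord j p) z).restrictScalars ℝ) z :=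
  (hasFDerivAt_leafMap ((A.contDiffAt_leafCoord hj hz hjz).differentiableAt
    (by simp))).restrictScalars ℝ

theorem inChart_pullback_eq (hj : IsFibreMap n π j s) (hz : z ∈ (chartAt (Cn n) p).target)
    (hjz : j ((chartAt (Cn n) p).symm z) ∈ A.chart.source) :
    inChart (pullback j Ω) p z =
      (leafForm (A.form Ω) A.incl
        (A.incl (A.leafCoord j p z) + A.offset s)).compContinuousLinearMap
        ((fderiv ℂ (A.leafCoord j p) z).restrictScalars ℝ) := by
  have := isManifold_real (E := Cn n) (X := Y) (r := ∞)
  have hd := A.hasFDerivAt_incl_leafCoord hj hz hjz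
  have hs := A.mdifferentiableAt_symm (A.chart.map_source hjz)
  rw [← A.incl_leafCoord_add_offset hj hjz] at hs
  rw [inChart_pullback hz (hj.mdifferentiable _),
    flatPull_congr (A.eventuallyEq_symm_comp_leafCoord hj hz hjz),
    flatPull_comp (k := fun z => A.incl (A.leafCoord j p z) + A.offset s) hs hd.differentiableAt,
    hd.fderiv]
  rfl

theorem det_fderiv_leafCoord_ne_zero (hj : IsFibreMap n π j s) (hz : z ∈ (chartAt (Cn n) p).target)
    (hjz : j ((chartAt (Cn n) p).symm z) ∈ A.chart.source) :
    (fderiv ℂ (A.leafCoord j p) z).det ≠ 0 := by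
  have := isManifold_real (E := Cn n) (X := Y) (r := ∞)
  set c := chartAt (Cn n) p
  have hc : MDifferentiableAt 𝓘(ℝ, Cn n) 𝓘(ℝ, Cn n) c.symm z :=
    mdifferentiableAt_atlas_symm (chart_mem_atlas _ _) hz
  have hinj : Function.Injective (rderiv (Cn n) (Cn n) c.symm z) :=
    rderiv_injective_of_leftInverse
      (mdifferentiableAt_atlas (chart_mem_atlas _ _) (c.map_target hz)) hc
      (by filter_upwards [c.open_target.mem_nhds hz] with v hv using c.right_inv hv)
  have hinj' : Function.Injective (rderiv (Cn n) (Cn (n + 1)) (j ∘ c.symm) z) := by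
    rw [rderiv_comp (hj.mdifferentiable _) hc]
    exact (hj.imm _).comp hinj
  have hd := A.hasFDerivAt_incl_leafCoord hj hz hjz
  have hs := A.mdifferentiableAt_symm (A.chart.map_source hjz)
  rw [← A.incl_leafCoord_add_offset hj hjz] at hs
  rw [rderiv_congr (A.eventuallyEq_symm_comp_leafCoord hj hz hjz),
    rderiv_comp (f := fun z => A.incl (A.leafCoord j p z) + A.offset s) hs
      hd.differentiableAt.mdifferentiableAt, rderiv_eq_fderiv, hd.fderiv] at hinj'
  have hleaf : Function.Injective (fderiv ℂ (A.leafCoord j p) z) := fun v w hvw =>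
    hinj' (congrArg (fun u => rderiv (Cn (n + 1)) (Cn (n + 1)) A.chart.symm
      (A.incl (A.leafCoord j p z) + A.offset s) (A.incl u)) hvw)
  exact (LinearMap.isUnit_iff_isUnit_det _).1
    ((LinearMap.isUnit_iff_ker_eq_bot _).2 (LinearMap.ker_eq_bot.2 hleaf)) |>.ne_zero

variable [IsManifold 𝓘(ℂ, Cn (n + 1)) ω 𝒳]

theorem scalarCurvature_pullback (hΩ : IsKahlerForm Ω) (hj : IsFibreMap n π j s) {y : Y}
    (hy : j y ∈ A.chart.source) : scalarCurvature (n := n) (pullback j Ω) y = A.scal Ω (j y) := by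
  set c := chartAt (Cn n) y with hc
  have hz : c y ∈ c.target := mem_chart_target _ _
  have hcy : c.symm (c y) = y := c.left_inv (mem_chart_source _ _)
  have hjz : j (c.symm (c y)) ∈ A.chart.source := by rwa [hcy]
  have hμ : A.incl (A.leafCoord j y (c y)) + A.offset s = A.chart (j y) := by
    rw [A.incl_leafCoord_add_offset hj hjz, ← hc, hcy]
  rw [scal, ← hμ]
  refine scal_pullback_eq_leafScal (η := inChart (pullback j Ω) y)
    (A.contDiffAt_leafCoord hj hz hjz) (A.det_fderiv_leafCoord_ne_zero hj hz hjz) ?_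
    A.incl_injective ?_
  · rw [hμ]
    exact A.isPositiveNear_form hΩ (A.chart.map_source hy)
  · filter_upwards [A.eventually_mem_source hj hz hjz] with z h
      using A.inChart_pullback_eq hj h.1 h.2

theorem volDensity_pullback (hΩ : IsKahlerForm Ω) (hj : IsFibreMap n π j s)
    (hz : z ∈ (chartAt (Cn n) p).target) (hjz : j ((chartAt (Cn n) p).symm z) ∈ A.chart.source) :
    volDensity (pullback j Ω) p z =
      |((fderiv ℂ (A.leafCoord j p) z).restrictScalars ℝ).det| *
        leafDensity (A.form Ω) A.incl (A.chart (j ((chartAt (Cn n) p).symm z))) := by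
  rw [volDensity, A.inChart_pullback_eq hj hz hjz, A.incl_leafCoord_add_offset hj hjz,
    det_re_hermMatrix_comp (isOneOne_leafForm
      (A.isPositiveNear_form hΩ (A.chart.map_source hjz)).oneOne.self_of_nhds),
    det_restrictScalars_eq_normSq, abs_of_nonneg (Complex.normSq_nonneg _)]
  rfl

end Map

end AdaptedChart

end Adapted

/-! ### Volume estimates -/

section Volume

section Charts

variable {Y H Z : Type*} [TopologicalSpace Y] [TopologicalSpace H]

theorem image_comp_symm_image (c : OpenPartialHomeomorph Y H) (κ : Y → Z) {S : Set Y}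
    (hS : S ⊆ c.source) : (κ ∘ c.symm) '' (c '' S) = κ '' S := by
  rw [image_comp]
  exact congrArg _ (c.toPartialEquiv.symm_image_image_of_subset_source hS)

theorem symm_preimage_inter_image (c : OpenPartialHomeomorph Y H) (N : Set Y) {D : Set Y}
    (hD : D ⊆ c.source) : c.symm ⁻¹' N ∩ c '' D = c '' (N ∩ D) := by
  ext z
  constructor
  · rintro ⟨hN, y, hy, rfl⟩
    exact ⟨y, ⟨by rwa [mem_preimage, c.left_inv (hD hy)] at hN, hy⟩, rfl⟩
  · rintro ⟨y, ⟨hN, hy⟩, rfl⟩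
    exact ⟨by rwa [mem_preimage, c.left_inv (hD hy)], y, hy, rfl⟩

theorem injOn_comp_symm_image (c : OpenPartialHomeomorph Y H) {κ : Y → Z} {S : Set Y}
    (hS : S ⊆ c.source) (hκ : InjOn κ S) : InjOn (κ ∘ c.symm) (c '' S) := by
  rintro _ ⟨a, ha, rfl⟩ _ ⟨b, hb, rfl⟩ hab
  rw [Function.comp_apply, Function.comp_apply, c.left_inv (hS ha), c.left_inv (hS hb)] at hab
  rw [hκ ha hb hab]

variable [MeasurableSpace Y] [BorelSpace Y] [MeasurableSpace H] [BorelSpace H]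

theorem measurableSet_chart_image (c : OpenPartialHomeomorph Y H) {T : Set Y}
    (hT : MeasurableSet T) (hTc : T ⊆ c.source) : MeasurableSet (c '' T) := by
  have hcont : Measurable (c.target.domRestrict c.symm) :=
    c.continuousOn_symm.domRestrict.measurable
  have himage : c '' T = (↑) '' (c.target.domRestrict c.symm ⁻¹' T) := by
    rw [c.image_eq_target_inter_inv_preimage hTc, Set.domRestrict_eq, preimage_comp,
      Subtype.image_preimage_coe]
  rw [himage]
  exact c.open_target.measurableSet.subtype_image (hcont hT)

end Charts

section ChangeOfVariables

variable {Y : Type*} [TopologicalSpace Y] [MeasurableSpace Y] [BorelSpace Y]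

theorem map_symm_withDensity_le {E : Type*} [NormedAddCommGroup E] [NormedSpace ℝ E]
    [FiniteDimensional ℝ E] [MeasurableSpace E] [BorelSpace E] (μ : Measure E) [μ.IsAddHaarMeasure]
    (c : OpenPartialHomeomorph Y E) {T D : Set Y} (hT : MeasurableSet T) (hD : MeasurableSet D)
    (hDc : D ⊆ c.source) {κ : Y → E} (hκ : InjOn κ (T ∩ D))
    (hd : ∀ y ∈ T ∩ D, DifferentiableAt ℝ (κ ∘ c.symm) (c y)) {f : E → ℝ} {C : ℝ}
    (hf : ∀ y ∈ T ∩ D, f (c y) ≤ C * |(fderiv ℝ (κ ∘ c.symm) (c y)).det|) :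
    ((μ.restrict (c '' D)).withDensity fun z => ENNReal.ofReal (f z)).map c.symm T ≤
      ENNReal.ofReal C * μ (κ '' (T ∩ D)) := by
  have hsub : T ∩ D ⊆ c.source := inter_subset_right.trans hDc
  have hm : MeasurableSet (c '' (T ∩ D)) := measurableSet_chart_image c (hT.inter hD) hsub
  by_cases hmeas : AEMeasurable c.symm
    ((μ.restrict (c '' D)).withDensity fun z => ENNReal.ofReal (f z))
  swap
  · rw [Measure.map_of_not_aemeasurable hmeas]
    exact zero_le
  have hinj := injOn_comp_symm_image c hsub hκ
  have hd' : ∀ z ∈ c '' (T ∩ D), HasFDerivWithinAt (κ ∘ c.symm) (fderiv ℝ (κ ∘ c.symm) z)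
      (c '' (T ∩ D)) z := by
    rintro _ ⟨y, hy, rfl⟩
    exact (hd y hy).hasFDerivAt.hasFDerivWithinAt
  rw [Measure.map_apply_of_aemeasurable hmeas hT, withDensity_apply',
    Measure.restrict_restrict' (measurableSet_chart_image c hD hDc),
    symm_preimage_inter_image c T hDc, ← image_comp_symm_image c κ hsub,
    ← lintegral_abs_det_fderiv_eq_addHaar_image μ hm hd' hinj,
    ← lintegral_const_mul' _ _ ENNReal.ofReal_ne_top]
  refine setLIntegral_mono' hm ?_
  rintro _ ⟨y, hy, rfl⟩
  rw [← ENNReal.ofReal_mul' (abs_nonneg _)]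
  exact ENNReal.ofReal_le_ofReal (hf y hy)

theorem measurableSet_image_of_continuousAt_chart {E : Type*} [NormedAddCommGroup E]
    [NormedSpace ℝ E] [FiniteDimensional ℝ E] [MeasurableSpace E] [BorelSpace E]
    (c : OpenPartialHomeomorph Y E) {S : Set Y} (hS : MeasurableSet S)
    (hSc : S ⊆ c.source) {κ : Y → E} (hκ : InjOn κ S)
    (hd : ∀ y ∈ S, ContinuousAt (κ ∘ c.symm) (c y)) : MeasurableSet (κ '' S) := by
  rw [← image_comp_symm_image c κ hSc]
  refine (measurableSet_chart_image c hS hSc).image_of_continuousOn_injOn ?_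
    (injOn_comp_symm_image c hSc hκ)
  rintro _ ⟨y, hy, rfl⟩
  exact (hd y hy).continuousWithinAt

theorem kahlerVolume_le {n : ℕ} [ChartedSpace (Cn n) Y] (η : TwoForm n Y) {T : Set Y}
    (hT : MeasurableSet T) {κ : Y → Cn n} (hκ : InjOn κ T)
    (hd : ∀ p, ∀ y ∈ T ∩ (chartAt (Cn n) p).source,
      DifferentiableAt ℝ (κ ∘ (chartAt (Cn n) p).symm) (chartAt (Cn n) p y)) {C : ℝ}
    (hC : ∀ p, ∀ y ∈ T ∩ (chartAt (Cn n) p).source, volDensity η p (chartAt (Cn n) p y) ≤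
      C * |(fderiv ℝ (κ ∘ (chartAt (Cn n) p).symm) (chartAt (Cn n) p y)).det|) :
    kahlerVolume η T ≤ ENNReal.ofReal C * volume (κ '' T) := by
  classical
  rw [kahlerVolume]
  split_ifs with h
  swap
  · exact zero_le
  set c : ℕ → OpenPartialHomeomorph Y (Cn n) := fun k => chartAt (Cn n) (h.choose k)
  set D : ℕ → Set Y := disjointed fun k => (c k).source
  have hDs : ∀ k, D k ⊆ (c k).source := fun k => disjointed_subset _ k
  have hDm : ∀ k, MeasurableSet (D k) :=
    fun k => .disjointed (fun k => (c k).open_source.measurableSet) k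
  have hmem : ∀ k, ∀ y ∈ T ∩ D k, y ∈ T ∩ (c k).source := fun k y hy => ⟨hy.1, hDs k hy.2⟩
  have hinj : ∀ k, InjOn κ (T ∩ D k) := fun k => hκ.mono inter_subset_left
  have hpiece : ∀ k, _ ≤ ENNReal.ofReal C * volume (κ '' (T ∩ D k)) := fun k =>
    map_symm_withDensity_le volume (c k) hT (hDm k) (hDs k) (hinj k)
      (fun y hy => hd _ y (hmem k y hy)) (f := volDensity η (h.choose k))
      fun y hy => hC _ y (hmem k y hy)
  rw [Measure.sum_apply _ hT]
  refine (ENNReal.tsum_le_tsum hpiece).trans ?_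
  rw [ENNReal.tsum_mul_left, ← measure_iUnion]
  · gcongr
    exact iUnion_subset fun k => image_mono inter_subset_left
  · intro k l hkl
    refine disjoint_left.2 ?_
    rintro _ ⟨a, ha, rfl⟩ ⟨b, hb, hab⟩
    rw [hκ hb.1 ha.1 hab] at hb
    exact disjoint_left.1 (disjoint_disjointed _ hkl) ha.2 hb.2
  · exact fun k => measurableSet_image_of_continuousAt_chart (c k) (hT.inter (hDm k))
      (inter_subset_right.trans (hDs k)) (hinj k) fun y hy =>
        (hd _ y (hmem k y hy)).continuousAt

end ChangeOfVariables

section FibreVolume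

variable {n : ℕ} {𝒳 : Type*} [TopologicalSpace 𝒳] [ChartedSpace (Cn (n + 1)) 𝒳]
  {π : 𝒳 → ℂ} {Ω : TwoForm (n + 1) 𝒳}
  {Y : Type*} [TopologicalSpace Y] [ChartedSpace (Cn n) Y]
  {j : Y → 𝒳} {s : ℂ}

namespace AdaptedChart

variable (A : AdaptedChart (n := n) π)

theorem injOn_proj_chart (hj : IsFibreMap n π j s) (hinj : Function.Injective j) :
    InjOn (fun y => A.proj (A.chart (j y))) (j ⁻¹' A.chart.source) := by
  intro a ha b hb hab
  refine hinj (A.chart.injOn ha hb (A.split.injective (Prod.ext ?_ hab)))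
  rw [A.split_chart _ ha, A.split_chart _ hb, hj.fib, hj.fib]

variable [IsManifold 𝓘(ℂ, Cn (n + 1)) ω 𝒳] [IsManifold 𝓘(ℂ, Cn n) ω Y]
  [MeasurableSpace Y] [BorelSpace Y]

theorem kahlerVolume_preimage_le (hΩ : IsKahlerForm Ω) (hj : IsFibreMap n π j s)
    (hinj : Function.Injective j) {N : Set 𝒳} (hN : IsOpen N) (hNs : N ⊆ A.chart.source) {C : ℝ}
    (hC : ∀ x ∈ N, leafDensity (A.form Ω) A.incl (A.chart x) ≤ C) :
    kahlerVolume (n := n) (pullback j Ω) (j ⁻¹' N) ≤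
      ENNReal.ofReal C * volume (A.proj '' (A.chart '' N)) := by
  have hd : ∀ p, ∀ y ∈ j ⁻¹' N ∩ (chartAt (Cn n) p).source,
      DifferentiableAt ℂ (A.leafCoord j p) (chartAt (Cn n) p y) := fun p y hy =>
    (A.contDiffAt_leafCoord hj ((chartAt (Cn n) p).map_source hy.2)
      (by rw [(chartAt (Cn n) p).left_inv hy.2]; exact hNs hy.1)).differentiableAt (by simp)
  refine (kahlerVolume_le (pullback j Ω) (hN.preimage hj.holo.continuous).measurableSet
    ((A.injOn_proj_chart hj hinj).mono (preimage_mono hNs)) (C := C)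
    (fun p y hy => (hd p y hy).restrictScalars ℝ) fun p y hy => ?_).trans ?_
  · have hy' : (chartAt (Cn n) p).symm (chartAt (Cn n) p y) = y := (chartAt (Cn n) p).left_inv hy.2
    have hfderiv : fderiv ℝ (A.leafCoord j p) (chartAt (Cn n) p y) =
        (fderiv ℂ (A.leafCoord j p) (chartAt (Cn n) p y)).restrictScalars ℝ :=
      (hd p y hy).fderiv_restrictScalars ℝ
    change _ ≤ C * |(fderiv ℝ (A.leafCoord j p) (chartAt (Cn n) p y)).det|
    rw [A.volDensity_pullback hΩ hj ((chartAt (Cn n) p).map_source hy.2)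
      (by rw [hy']; exact hNs hy.1), hy', hfderiv, mul_comm]
    gcongr
    exact hC _ hy.1
  · gcongr
    rintro _ ⟨y, hy, rfl⟩
    exact mem_image_of_mem _ (mem_image_of_mem _ hy)

end AdaptedChart

variable [IsManifold 𝓘(ℂ, Cn (n + 1)) ω 𝒳]

theorem exists_adaptedChart_volume_lt_top (hΩ : IsKahlerForm Ω)
    (hπ : IsSubmersion 𝓘(ℂ, Cn (n + 1)) 𝓘(ℂ, ℂ) ω π) (p : 𝒳) :
    ∃ (A : AdaptedChart (n := n) π) (N : Set 𝒳) (C : ℝ), IsOpen N ∧ p ∈ N ∧ N ⊆ A.chart.source ∧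
      (∀ x ∈ N, leafDensity (A.form Ω) A.incl (A.chart x) ≤ C) ∧
      volume (A.proj '' (A.chart '' N)) < ⊤ := by
  obtain ⟨A, hp⟩ := exists_adaptedChart hπ p
  have hdensity : ContinuousAt (fun x => leafDensity (A.form Ω) A.incl (A.chart x)) p :=
    (contDiffAt_leafDensity (A.isPositiveNear_form hΩ
      (A.chart.map_source hp)).smooth).continuousAt.comp (A.chart.continuousAt hp)
  have hbounded := hdensity.eventually (gt_mem_nhds (lt_add_one _))
  have hball := (A.proj.continuous.continuousAt.comp (A.chart.continuousAt hp)).eventually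
    (Metric.ball_mem_nhds _ one_pos)
  obtain ⟨N, hN, hNo, hpN⟩ := mem_nhds_iff.1
    ((hbounded.and hball).and (A.chart.open_source.eventually_mem hp))
  refine ⟨A, N, _, hNo, hpN, fun x hx => (hN hx).2, fun x hx => (hN hx).1.1.le, ?_⟩
  refine (measure_mono ?_).trans_lt
    (measure_ball_lt_top (μ := (volume : Measure (Cn n))) (x := A.proj (A.chart p)) (r := 1))
  rintro _ ⟨_, ⟨x, hx, rfl⟩, rfl⟩
  exact (hN hx).1.2

variable [IsManifold 𝓘(ℂ, Cn n) ω Y] [MeasurableSpace Y] [BorelSpace Y]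

variable (Y) in
theorem exists_kahlerVolume_pullback_le (hΩ : IsKahlerForm Ω)
    (hπ : IsSubmersion 𝓘(ℂ, Cn (n + 1)) 𝓘(ℂ, ℂ) ω π) {K : Set 𝒳} (hK : IsCompact K) :
    ∃ V : ℝ, 0 ≤ V ∧ ∀ (j : Y → 𝒳) (s : ℂ), IsFibreMap n π j s → Function.Injective j →
      (∀ y, j y ∈ K) → kahlerVolume (n := n) (pullback j Ω) univ ≤ ENNReal.ofReal V := by
  choose A N C hN hp hNs hC hV using exists_adaptedChart_volume_lt_top (Ω := Ω) hΩ hπ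
  obtain ⟨t, ht⟩ := hK.elim_finite_subcover N hN fun x _ => mem_iUnion.2 ⟨x, hp x⟩
  let b : 𝒳 → ENNReal := fun p =>
    ENNReal.ofReal (C p) * volume ((A p).proj '' ((A p).chart '' N p))
  have hb : ∑ p ∈ t, b p ≠ ⊤ :=
    ENNReal.sum_ne_top.2 fun p _ => ENNReal.mul_ne_top ENNReal.ofReal_ne_top (hV p).ne
  refine ⟨(∑ p ∈ t, b p).toReal, ENNReal.toReal_nonneg, fun j s hj hinj hjK => ?_⟩
  rw [ENNReal.ofReal_toReal hb]
  have hcover : (univ : Set Y) ⊆ ⋃ p ∈ t, j ⁻¹' N p := fun y _ => by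
    simpa only [mem_iUnion, mem_preimage] using ht (hjK y)
  refine (measure_mono hcover).trans ((measure_biUnion_finset_le _ _).trans ?_)
  exact Finset.sum_le_sum fun p _ =>
    (A p).kahlerVolume_preimage_le hΩ hj hinj (hN p) (hNs p) (hC p)

end FibreVolume

end Volume

/-! ### Uniform estimates on compact manifolds -/

section UniformEstimates

variable {X : Type*} [TopologicalSpace X]

theorem exists_forall_le_mul_of_locally [CompactSpace X] {ι : Type*} {b : X → ι → ℝ} {ε : ι → ℝ}
    (hε : ∀ i, 0 ≤ ε i) (h : ∀ a, ∃ C, ∀ᶠ x in 𝓝 a, ∀ i, b x i ≤ C * ε i) :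
    ∃ C, ∀ x i, b x i ≤ C * ε i := by
  suffices ∃ C, ∀ x ∈ (univ : Set X), ∀ i, b x i ≤ C * ε i by simpa only [mem_univ, forall_const]
  refine isCompact_univ.induction_on (p := fun S => ∃ C, ∀ x ∈ S, ∀ i, b x i ≤ C * ε i)
    ⟨0, fun x hx => hx.elim⟩ (fun S T hST ⟨C, hC⟩ => ⟨C, fun x hx => hC x (hST hx)⟩) ?_ ?_
  · rintro S T ⟨C, hC⟩ ⟨D, hD⟩
    refine ⟨max C D, fun x hx i => ?_⟩
    rcases hx with hx | hx
    · exact (hC x hx i).trans (mul_le_mul_of_nonneg_right (le_max_left _ _) (hε i))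
    · exact (hD x hx i).trans (mul_le_mul_of_nonneg_right (le_max_right _ _) (hε i))
  · intro a _
    obtain ⟨C, hC⟩ := h a
    exact ⟨_, by rwa [nhdsWithin_univ], C, fun x hx => hx⟩

variable {E : Type*} [NormedAddCommGroup E] [NormedSpace ℝ E] [ChartedSpace E X]

theorem differentiableAt_comp_chart_symm [IsManifold 𝓘(ℝ, E) 1 X] {W : Type*}
    [NormedAddCommGroup W] [NormedSpace ℝ W] {u : X → W} (hu : MDifferentiable 𝓘(ℝ, E) 𝓘(ℝ, W) u)
    {a : X} {z : E} (hz : z ∈ (chartAt E a).target) :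
    DifferentiableAt ℝ (u ∘ (chartAt E a).symm) z :=
  ((hu _).comp z (mdifferentiableAt_atlas_symm (chart_mem_atlas _ _) hz)).differentiableAt

theorem exists_eventually_abs_sub_le [IsManifold 𝓘(ℝ, E) 1 X] {ι : Type*} {u : ι → X → ℝ}
    {ε : ι → ℝ} (hu : ∀ i, MDifferentiable 𝓘(ℝ, E) 𝓘(ℝ, ℝ) (u i)) (a : X)
    (h : ∃ C, ∀ᶠ z in 𝓝 (chartAt E a a), ∀ i,
      ‖fderiv ℝ (u i ∘ (chartAt E a).symm) z‖ ≤ C * ε i) :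
    ∃ C, ∀ᶠ x in 𝓝 a, ∀ i, |u i x - u i a| ≤ C * ε i := by
  obtain ⟨C, hC⟩ := h
  set c := chartAt E a
  obtain ⟨r, hr, hball⟩ := Metric.eventually_nhds_iff_ball.1
    (hC.and (c.open_target.eventually_mem (mem_chart_target E a)))
  refine ⟨C * r, ?_⟩
  filter_upwards [(c.continuousAt (mem_chart_source E a)).preimage_mem_nhds
    (Metric.ball_mem_nhds _ hr), c.open_source.mem_nhds (mem_chart_source E a)] with x hx hxs i
  have hbound := (convex_ball (c a) r).norm_image_sub_le_of_norm_fderiv_le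
    (fun z hz => differentiableAt_comp_chart_symm (hu i) (hball z hz).2)
    (fun z hz => (hball z hz).1 i) (Metric.mem_ball_self hr) hx
  rw [Function.comp_apply, Function.comp_apply, c.left_inv hxs,
    c.left_inv (mem_chart_source _ _), Real.norm_eq_abs] at hbound
  have hCε : 0 ≤ C * ε i := (norm_nonneg _).trans ((hball _ (Metric.mem_ball_self hr)).1 i)
  calc |u i x - u i a| ≤ C * ε i * ‖c x - c a‖ := hbound
    _ ≤ C * ε i * r := by
        gcongr
        exact (mem_ball_iff_norm.1 hx).le
    _ = C * r * ε i := by ring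

theorem exists_forall_abs_sub_le [IsManifold 𝓘(ℝ, E) 1 X] [CompactSpace X] [PreconnectedSpace X]
    {ι : Type*} {u : ι → X → ℝ} {ε : ι → ℝ} (hε : ∀ i, 0 ≤ ε i)
    (hu : ∀ i, MDifferentiable 𝓘(ℝ, E) 𝓘(ℝ, ℝ) (u i))
    (h : ∀ a : X, ∃ C, ∀ᶠ z in 𝓝 (chartAt E a a), ∀ i,
      ‖fderiv ℝ (u i ∘ (chartAt E a).symm) z‖ ≤ C * ε i) (x₀ : X) :
    ∃ C, ∀ x i, |u i x - u i x₀| ≤ C * ε i := by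
  have hlocal := fun a => exists_eventually_abs_sub_le hu a (h a)
  let P : X → X → Prop := fun x y => ∃ C, ∀ i, |u i x - u i y| ≤ C * ε i
  have hsymm : Std.Symm P := ⟨fun x y ⟨C, hC⟩ => ⟨C, fun i => abs_sub_comm (u i x) _ ▸ hC i⟩⟩
  have hcomp : ∀ {x y z C D} {i : ι}, |u i x - u i y| ≤ C * ε i → |u i y - u i z| ≤ D * ε i →
      |u i x - u i z| ≤ (C + D) * ε i := fun hC hD =>
    (abs_sub_le _ _ _).trans ((add_le_add hC hD).trans_eq (add_mul _ _ _).symm)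
  have htrans : IsTrans X P :=
    ⟨fun x y z ⟨C, hC⟩ ⟨D, hD⟩ => ⟨C + D, fun i => hcomp (hC i) (hD i)⟩⟩
  have hP : ∀ a, P a x₀ := fun a => PreconnectedSpace.induction₂ P (fun x => by
    obtain ⟨C, hC⟩ := hlocal x
    filter_upwards [hC] with y hy using hsymm.symm _ _ ⟨C, hy⟩) htrans a x₀
  refine exists_forall_le_mul_of_locally hε fun a => ?_
  obtain ⟨C, hC⟩ := hlocal a
  obtain ⟨D, hD⟩ := hP a
  exact ⟨C + D, hC.mono fun x hx i => hcomp (hx i) (hD i)⟩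

theorem eq_of_rderiv_eq_zero [IsManifold 𝓘(ℝ, E) 1 X] [CompactSpace X] [PreconnectedSpace X]
    {u : X → ℝ} (hu : MDifferentiable 𝓘(ℝ, E) 𝓘(ℝ, ℝ) u) (h : ∀ x, rderiv E ℝ u x = 0) (x y : X) :
    u x = u y := by
  have hlocal : ∀ a : X, ∃ C : ℝ, ∀ᶠ z in 𝓝 (chartAt E a a), ∀ _ : Unit,
      ‖fderiv ℝ (u ∘ (chartAt E a).symm) z‖ ≤ C * 0 := by
    refine fun a => ⟨0, ?_⟩
    filter_upwards [(chartAt E a).open_target.mem_nhds (mem_chart_target E a)] with z hz _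
    rw [← rderiv_eq_fderiv,
      rderiv_comp (hu _) (mdifferentiableAt_atlas_symm (chart_mem_atlas _ _) hz), h,
      ContinuousLinearMap.zero_comp, norm_zero, mul_zero]
  obtain ⟨C, hC⟩ := exists_forall_abs_sub_le (fun _ => le_rfl) (fun _ => hu) hlocal y
  simpa only [mul_zero, abs_nonpos_iff, sub_eq_zero] using hC x ()

end UniformEstimates

section Lipschitz

variable {E W : Type*} [NormedAddCommGroup E] [NormedSpace ℝ E]
  [NormedAddCommGroup W] [NormedSpace ℝ W]

theorem exists_eventually_forall_norm_fderiv_le {V : Type*} [NormedAddCommGroup V]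
    [NormedSpace ℝ V] {h : E × V → W} {z₀ : E} {K : Set V} (hK : IsCompact K)
    (hh : ∀ s ∈ K, ContDiffAt ℝ 1 h (z₀, s)) :
    ∃ C, ∀ᶠ z in 𝓝 z₀, ∀ s ∈ K, DifferentiableAt ℝ h (z, s) ∧ ‖fderiv ℝ h (z, s)‖ ≤ C := by
  have hcont : ∀ s ∈ K, ContinuousAt (fderiv ℝ h) (z₀, s) := fun s hs =>
    ((hh s hs).fderiv_right (m := 0) (by simp)).continuousAt
  have hcontOn : ContinuousOn (fun s => fderiv ℝ h (z₀, s)) K := fun s hs =>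
    ((hcont s hs).comp_of_eq (by fun_prop) rfl).continuousWithinAt
  obtain ⟨C, hC⟩ := hK.exists_bound_of_continuousOn hcontOn
  refine ⟨C + 1, hK.eventually_forall_of_forall_eventually fun s hs => ?_⟩
  have hnorm : ∀ᶠ e in 𝓝 (z₀, s), ‖fderiv ℝ h e‖ < C + 1 :=
    (hcont s hs).norm.eventually (gt_mem_nhds ((hC s hs).trans_lt (lt_add_one C)))
  filter_upwards [(hh s hs).eventually (by simp), hnorm] with e he hlt
    using ⟨he.differentiableAt one_ne_zero, hlt.le⟩

theorem exists_eventually_norm_sub_le_mul {h : E × ℝ → W} {z₀ : E}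
    (hh : ∀ s ∈ Icc (0 : ℝ) 1, ContDiffAt ℝ 1 h (z₀, s)) :
    ∃ C, ∀ᶠ z in 𝓝 z₀, ∀ s ∈ Icc (0 : ℝ) 1, ‖h (z, s) - h (z, 0)‖ ≤ C * s := by
  obtain ⟨C, hC⟩ := exists_eventually_forall_norm_fderiv_le isCompact_Icc hh
  refine ⟨C, hC.mono fun z hz s hs => ?_⟩
  have hderiv : ∀ r ∈ Icc (0 : ℝ) 1, HasDerivWithinAt (fun r : ℝ => h (z, r))
      (fderiv ℝ h (z, r) (0, 1)) (Icc 0 1) r := fun r hr =>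
    ((hz r hr).1.hasFDerivAt.comp_hasDerivAt r
      ((hasDerivAt_const r z).prodMk (hasDerivAt_id r))).hasDerivWithinAt
  have hbound : ∀ r ∈ Icc (0 : ℝ) 1, ‖fderiv ℝ h (z, r) (0, 1)‖ ≤ C := fun r hr =>
    ((fderiv ℝ h (z, r)).le_opNorm_of_le (by simp [Prod.norm_def])).trans
      ((mul_one _).trans_le (hz r hr).2)
  have hmvt := (convex_Icc (0 : ℝ) 1).norm_image_sub_le_of_norm_hasDerivWithin_le hderiv hbound
    (left_mem_Icc.2 zero_le_one) hs
  rwa [sub_zero, Real.norm_eq_abs, abs_of_nonneg hs.1] at hmvt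

variable {M : Type*} [TopologicalSpace M] [ChartedSpace E M]

theorem contMDiffAt_chart_symm_prod {k : WithTop ℕ∞} [IsManifold 𝓘(ℝ, E) k M] {V : Type*}
    [NormedAddCommGroup V] [NormedSpace ℝ V] (a : M) {z : E} (hz : z ∈ (chartAt E a).target)
    (s : V) :
    ContMDiffAt 𝓘(ℝ, E × V) (𝓘(ℝ, E).prod 𝓘(ℝ, V)) k
      (fun q : E × V => ((chartAt E a).symm q.1, q.2)) (z, s) := by
  have hsymm : ContMDiffAt 𝓘(ℝ, E) 𝓘(ℝ, E) k (chartAt E a).symm z :=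
    (contMDiffOn_chart_symm.contMDiffAt ((chartAt E a).open_target.mem_nhds hz))
  exact (ContMDiffAt.comp (x := (z, s)) (g := (chartAt E a).symm) (f := Prod.fst) hsymm
    contDiff_fst.contMDiff.contMDiffAt).prodMk contDiff_snd.contMDiff.contMDiffAt

theorem exists_abs_sub_le_mul_of_contMDiff [IsManifold 𝓘(ℝ, E) 1 M] [CompactSpace M]
    {g : M × ℝ → ℝ} (hg : ContMDiff (𝓘(ℝ, E).prod 𝓘(ℝ, ℝ)) 𝓘(ℝ, ℝ) 1 g) :
    ∃ C, ∀ x, ∀ s ∈ Icc (0 : ℝ) 1, |g (x, s) - g (x, 0)| ≤ C * s := by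
  suffices ∃ C, ∀ x, ∀ s : Icc (0 : ℝ) 1, |g (x, s) - g (x, 0)| ≤ C * s by
    simpa only [Subtype.forall]
  refine exists_forall_le_mul_of_locally (fun s => s.2.1) fun a => ?_
  set c := chartAt E a
  obtain ⟨C, hC⟩ := exists_eventually_norm_sub_le_mul
    (h := fun q : E × ℝ => g (c.symm q.1, q.2)) (z₀ := c a) fun s _ =>
      ((hg _).comp _ (contMDiffAt_chart_symm_prod a (mem_chart_target _ a) s)).contDiffAt
  refine ⟨C, ?_⟩
  filter_upwards [(c.continuousAt (mem_chart_source E a)).eventually hC,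
    c.open_source.mem_nhds (mem_chart_source E a)] with x hx hxs s
  simpa only [c.left_inv hxs, Real.norm_eq_abs] using hx s s.2

end Lipschitz

/-! ### Killing potentials and the reduced scalar curvature -/

section ContinuousFunctions

variable {X : Type*} [TopologicalSpace X] [CompactSpace X] [MeasurableSpace X] [BorelSpace X]
  {μ : Measure X} [IsFiniteMeasure μ]

theorem integrable_of_continuous {f : X → ℝ} (hf : Continuous f) : Integrable f μ :=
  hf.integrable_of_hasCompactSupport (HasCompactSupport.of_compactSpace f)

theorem memLp_of_continuous {f : X → ℝ} (hf : Continuous f) (p : ENNReal) : MemLp f p μ :=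
  hf.memLp_of_hasCompactSupport (HasCompactSupport.of_compactSpace f)

theorem integral_sq_le_integral_add_sq {r e : X → ℝ} (hr : Continuous r) (he : Continuous e)
    (hre : ∫ x, r x * e x ∂μ = 0) : ∫ x, r x ^ 2 ∂μ ≤ ∫ x, (r x + e x) ^ 2 ∂μ := by
  have hr2 : Integrable (fun x => r x ^ 2) μ := integrable_of_continuous (hr.pow 2)
  have hcross : Integrable (fun x => 2 * (r x * e x)) μ :=
    integrable_of_continuous ((hr.mul he).const_mul 2)
  have he2 : Integrable (fun x => e x ^ 2) μ := integrable_of_continuous (he.pow 2)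
  calc ∫ x, r x ^ 2 ∂μ ≤ ∫ x, r x ^ 2 ∂μ + ∫ x, e x ^ 2 ∂μ :=
        le_add_of_nonneg_right (integral_nonneg fun x => sq_nonneg _)
    _ = ∫ x, (r x ^ 2 + 2 * (r x * e x)) + e x ^ 2 ∂μ := by
        rw [integral_add (f := fun x => r x ^ 2 + 2 * (r x * e x)) (hr2.add hcross) he2,
          integral_add hr2 hcross, integral_const_mul, hre, mul_zero, add_zero]
    _ = ∫ x, (r x + e x) ^ 2 ∂μ := by
        congr 1 with x
        ring

end ContinuousFunctions

section Derivative

variable {E : Type*} [NormedAddCommGroup E] [NormedSpace ℝ E]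
  {X : Type*} [TopologicalSpace X] [ChartedSpace E X]

theorem rderiv_add {f g : X → ℝ} {x : X} (hf : MDifferentiableAt 𝓘(ℝ, E) 𝓘(ℝ, ℝ) f x)
    (hg : MDifferentiableAt 𝓘(ℝ, E) 𝓘(ℝ, ℝ) g x) :
    rderiv E ℝ (fun x => f x + g x) x = rderiv E ℝ f x + rderiv E ℝ g x :=
  (hf.hasMFDerivAt.add hg.hasMFDerivAt).mfderiv

theorem rderiv_const_mul (r : ℝ) {f : X → ℝ} {x : X}
    (hf : MDifferentiableAt 𝓘(ℝ, E) 𝓘(ℝ, ℝ) f x) :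
    rderiv E ℝ (fun x => r * f x) x = r • rderiv E ℝ f x :=
  (hf.hasMFDerivAt.const_smul r).mfderiv

theorem rderiv_const {F : Type*} [NormedAddCommGroup F] [NormedSpace ℝ F] (v : F) (x : X) :
    rderiv E F (fun _ : X => v) x = 0 :=
  mfderiv_const

end Derivative

section Killing

variable {n : ℕ} {X : Type*} [TopologicalSpace X] [ChartedSpace (Cn n) X]
  (EG : Type*) [NormedAddCommGroup EG] [NormedSpace ℝ EG]
  (G : Type*) [TopologicalSpace G] [ChartedSpace EG G] [Group G] [MulAction G X]

variable {G} in
/-- The vector field `fundamentalField EG ξ`, with values in the model space. -/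
noncomputable def fundVec (ξ : EG) (x : X) : Cn n :=
  rderiv EG (Cn n) (fun g : G => g • x) 1 ξ

/-- `f` is a hamiltonian, not necessarily of mean value zero, of the vector field generated by
`ξ ∈ Lie(G)`, with the sign convention `η(V, ·) = -df` of `IsKillingPotential`. -/
structure IsHamiltonianFor (η : TwoForm n X) (ξ : EG) (f : X → ℝ) : Prop where
  smooth : ContMDiff 𝓘(ℝ, Cn n) 𝓘(ℝ, ℝ) ∞ f
  ham : ∀ x w, formAt η x ![fundVec (n := n) (G := G) EG ξ x, w] = -rderiv (Cn n) ℝ f x w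

variable {EG G} {η : TwoForm n X} {ξ ζ : EG} {f g : X → ℝ}

theorem IsHamiltonianFor.mdifferentiable (hf : IsHamiltonianFor EG G η ξ f) :
    MDifferentiable 𝓘(ℝ, Cn n) 𝓘(ℝ, ℝ) f :=
  hf.smooth.mdifferentiable (by simp)

theorem IsHamiltonianFor.add (hf : IsHamiltonianFor EG G η ξ f)
    (hg : IsHamiltonianFor EG G η ζ g) :
    IsHamiltonianFor EG G η (ξ + ζ) (fun x => f x + g x) := by
  refine ⟨hf.smooth.add hg.smooth, fun x w => ?_⟩
  have hfx := hf.ham x w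
  have hgx := hg.ham x w
  simp only [fundVec, ← toBilin_apply] at hfx hgx ⊢
  rw [rderiv_add (hf.mdifferentiable x) (hg.mdifferentiable x), map_add, map_add, add_apply,
    hfx, hgx, add_apply, neg_add]

theorem IsHamiltonianFor.const_mul (r : ℝ) (hf : IsHamiltonianFor EG G η ξ f) :
    IsHamiltonianFor EG G η (r • ξ) (fun x => r * f x) := by
  refine ⟨contMDiff_const.mul hf.smooth, fun x w => ?_⟩
  have hfx := hf.ham x w
  simp only [fundVec, ← toBilin_apply] at hfx ⊢
  rw [rderiv_const_mul r (hf.mdifferentiable x), map_smul, map_smul, smul_apply, hfx, smul_apply,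
    smul_neg]

theorem isHamiltonianFor_zero_iff :
    IsHamiltonianFor EG G η 0 f ↔
      ContMDiff 𝓘(ℝ, Cn n) 𝓘(ℝ, ℝ) ∞ f ∧ ∀ x, rderiv (Cn n) ℝ f x = 0 := by
  have hzero : ∀ x w, formAt η x ![fundVec (n := n) (G := G) EG 0 x, w] = 0 := fun x w => by
    rw [← toBilin_apply, fundVec, map_zero, map_zero, zero_apply]
  refine ⟨fun h => ⟨h.smooth, fun x => ?_⟩, fun h => ⟨h.1, fun x w => ?_⟩⟩
  · ext w
    exact neg_eq_zero.1 ((h.ham x w).symm.trans (hzero x w))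
  · rw [hzero, h.2, zero_apply, neg_zero]

theorem IsHamiltonianFor.const (r : ℝ) : IsHamiltonianFor EG G η 0 (fun _ : X => r) :=
  isHamiltonianFor_zero_iff.2 ⟨contMDiff_const, rderiv_const r⟩

variable [MeasurableSpace X]

theorem isKillingPotential_iff : IsKillingPotential EG G η f ↔
    ∃ ξ : EG, IsHamiltonianFor EG G η ξ f ∧ ∫ x, f x ∂(kahlerVolume η) = 0 :=
  ⟨fun ⟨hf, h0, ξ, hξ⟩ => ⟨ξ, ⟨hf, hξ⟩, h0⟩, fun ⟨ξ, ⟨hf, hξ⟩, h0⟩ => ⟨hf, h0, ξ, hξ⟩⟩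

variable [IsFiniteMeasure (kahlerVolume η)]

theorem IsHamiltonianFor.sub_average (hf : IsHamiltonianFor EG G η ξ f) :
    IsKillingPotential EG G η (fun x => f x - ⨍ y, f y ∂(kahlerVolume η)) := by
  refine isKillingPotential_iff.2 ⟨ξ + 0, ?_, integral_sub_average _ f⟩
  simpa only [sub_eq_add_neg] using hf.add (.const (-⨍ y, f y ∂(kahlerVolume η)))

variable [CompactSpace X]

theorem eq_zero_of_isHamiltonianFor_zero [IsManifold 𝓘(ℝ, Cn n) 1 X] [PreconnectedSpace X]
    (hμ : kahlerVolume η ≠ 0) (hf : IsHamiltonianFor EG G η 0 f)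
    (hf0 : ∫ x, f x ∂(kahlerVolume η) = 0) : f = 0 := by
  funext x
  have hconst : f = fun _ => f x := funext fun y =>
    eq_of_rderiv_eq_zero hf.mdifferentiable (isHamiltonianFor_zero_iff.1 hf).2 y x
  rw [hconst, integral_const, smul_eq_mul] at hf0
  have : NeZero (kahlerVolume η) := ⟨hμ⟩
  exact (mul_eq_zero.1 hf0).resolve_left measureReal_univ_ne_zero

variable [BorelSpace X]

variable (EG G η) in
/-- The space of pairs of an element `ξ` of the Lie algebra and a hamiltonian of mean value zero
for `ξ`. Keeping `ξ` makes finite dimensionality visible: `ξ` determines the hamiltonian. -/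
noncomputable def killingPairs : Submodule ℝ (EG × (X → ℝ)) where
  carrier := {q | IsHamiltonianFor EG G η q.1 q.2 ∧ ∫ x, q.2 x ∂(kahlerVolume η) = 0}
  add_mem' := by
    rintro ⟨ξ, f⟩ ⟨ζ, g⟩ ⟨hf, hf0⟩ ⟨hg, hg0⟩
    refine ⟨hf.add hg, (integral_add (integrable_of_continuous hf.smooth.continuous)
      (integrable_of_continuous hg.smooth.continuous)).trans ?_⟩
    rw [hf0, hg0, add_zero]
  zero_mem' := ⟨.const 0, integral_zero _ _⟩
  smul_mem' := by
    rintro r ⟨ξ, f⟩ ⟨hf, hf0⟩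
    exact ⟨hf.const_mul r, (integral_const_mul r f).trans (by rw [hf0, mul_zero])⟩

theorem continuous_of_mem_killingPairs (q : killingPairs EG G η) : Continuous q.1.2 :=
  q.2.1.smooth.continuous

variable [FiniteDimensional ℝ EG] [IsManifold 𝓘(ℝ, Cn n) 1 X] [PreconnectedSpace X]

theorem finiteDimensional_killingPairs (hμ : kahlerVolume η ≠ 0) :
    FiniteDimensional ℝ (killingPairs EG G η) := by
  refine Module.Finite.of_injective
    ((LinearMap.fst ℝ EG (X → ℝ)).comp (killingPairs EG G η).subtype) ?_
  rw [← LinearMap.ker_eq_bot, LinearMap.ker_eq_bot']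
  rintro ⟨⟨ξ, f⟩, hf, hf0⟩ (rfl : ξ = 0)
  exact Subtype.ext (Prod.ext rfl (eq_zero_of_isHamiltonianFor_zero hμ hf hf0))

theorem exists_killingProjection_of_ne_zero (hμ : kahlerVolume η ≠ 0) (hf : Continuous f) :
    ∃ p, IsKillingProjection EG G η f p := by
  have := finiteDimensional_killingPairs (EG := EG) (G := G) hμ
  have hmem : ∀ q : killingPairs EG G η, MemLp q.1.2 2 (kahlerVolume η) := fun q =>
    memLp_of_continuous (continuous_of_mem_killingPairs q) 2
  let T : killingPairs EG G η →ₗ[ℝ] Lp ℝ 2 (kahlerVolume η) :=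
    { toFun := fun q => (hmem q).toLp
      map_add' := fun _ _ => rfl
      map_smul' := fun _ _ => rfl }
  have hfL : MemLp f 2 (kahlerVolume η) := memLp_of_continuous hf 2
  let K := LinearMap.range T
  obtain ⟨p, hp⟩ : K.starProjection hfL.toLp ∈ K := K.starProjection_apply_mem _
  refine ⟨p.1.2, isKillingPotential_iff.2 ⟨p.1.1, p.2⟩, fun q hq => ?_⟩
  obtain ⟨ζ, hq⟩ := isKillingPotential_iff.1 hq
  have horth : inner ℝ (T ⟨(ζ, q), hq⟩) (hfL.toLp - T p) = 0 := by
    rw [hp]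
    exact (Submodule.mem_orthogonal K _).1 (K.sub_starProjection_mem_orthogonal hfL.toLp) _ ⟨_, rfl⟩
  rw [← horth, L2.inner_def]
  refine integral_congr_ae ?_
  filter_upwards [hfL.coeFn_toLp, (hmem p).coeFn_toLp, (hmem ⟨(ζ, q), hq⟩).coeFn_toLp,
    Lp.coeFn_sub hfL.toLp (T p)] with x hfx hpx hqx hsub
  rw [hsub, Pi.sub_apply, hfx, show (T p : X → ℝ) x = p.1.2 x from hpx,
    show (T ⟨(ζ, q), hq⟩ : X → ℝ) x = q x from hqx]
  rfl

theorem exists_killingProjection (hf : Continuous f) : ∃ p, IsKillingProjection EG G η f p := by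
  by_cases hμ : kahlerVolume η = 0
  · exact ⟨fun _ => 0, isKillingPotential_iff.2 ⟨0, .const 0, integral_zero _ _⟩, fun q _ => by
      rw [hμ, integral_zero_measure]⟩
  · exact exists_killingProjection_of_ne_zero hμ hf

theorem isKillingProjection_killingProjection (hf : Continuous f) :
    IsKillingProjection EG G η f (killingProjection EG G η f) := by
  have hex := exists_killingProjection (EG := EG) (G := G) (η := η) hf
  rw [killingProjection, dif_pos hex]
  exact hex.choose_spec

theorem exists_isHamiltonianFor_killingProjection (hf : Continuous f) :
    ∃ ξ : EG, IsHamiltonianFor EG G η ξ (killingProjection EG G η f) :=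
  let ⟨ξ, hξ, _⟩ := isKillingPotential_iff.1 (isKillingProjection_killingProjection hf).1
  ⟨ξ, hξ⟩

theorem continuous_reducedScalarCurvature (hS : Continuous (scalarCurvature (n := n) η)) :
    Continuous (reducedScalarCurvature EG G η) :=
  (hS.sub continuous_const).sub
    (isKillingProjection_killingProjection (EG := EG) (G := G) hS).1.smooth.continuous

theorem integral_reducedScalarCurvature (hS : Continuous (scalarCurvature (n := n) η)) :
    ∫ x, reducedScalarCurvature EG G η x ∂(kahlerVolume η) = 0 := by
  have hp := (isKillingProjection_killingProjection (EG := EG) (G := G) (η := η) hS).1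
  have hSi : Integrable (scalarCurvature η) (kahlerVolume η) := integrable_of_continuous hS
  simp only [reducedScalarCurvature]
  rw [integral_sub (f := fun x => scalarCurvature η x - ⨍ y, scalarCurvature η y ∂(kahlerVolume η))
    (hSi.sub (integrable_const _)) (integrable_of_continuous hp.smooth.continuous), hp.mean_zero,
    integral_sub_average, sub_zero]

theorem integral_reducedScalarCurvature_mul
    (hS : Continuous (scalarCurvature (n := n) η)) (hf : IsHamiltonianFor EG G η ξ f) :
    ∫ x, reducedScalarCurvature EG G η x * f x ∂(kahlerVolume η) = 0 := by
  set μ := kahlerVolume η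
  set S := scalarCurvature η
  set p := killingProjection EG G η S
  set r := reducedScalarCurvature EG G η
  have hr : Continuous r := continuous_reducedScalarCurvature hS
  obtain ⟨hp, hproj⟩ : IsKillingProjection EG G η S p := isKillingProjection_killingProjection hS
  have hf₀ := hf.sub_average
  set f₀ : X → ℝ := fun x => f x - ⨍ y, f y ∂μ
  have hsplit : ∀ x, r x * f x =
      (S x - p x) * f₀ x - (⨍ y, S y ∂μ) * f₀ x + (⨍ y, f y ∂μ) * r x := fun x => by
    simp only [r, reducedScalarCurvature, f₀]
    ring
  have hproj_int : Integrable (fun x => (S x - p x) * f₀ x) μ :=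
    integrable_of_continuous ((hS.sub hp.smooth.continuous).mul hf₀.smooth.continuous)
  have hmean_int : Integrable (fun x => (⨍ y, S y ∂μ) * f₀ x) μ :=
    integrable_of_continuous (hf₀.smooth.continuous.const_mul _)
  simp only [hsplit]
  rw [integral_add (f := fun x => (S x - p x) * f₀ x - (⨍ y, S y ∂μ) * f₀ x)
    (hproj_int.sub hmean_int) (integrable_of_continuous (hr.const_mul _)),
    integral_sub hproj_int hmean_int, hproj f₀ hf₀, integral_const_mul, hf₀.mean_zero,
    integral_const_mul, integral_reducedScalarCurvature hS, mul_zero, sub_zero, mul_zero, add_zero]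

theorem calabiEnergy_le (hS : Continuous (scalarCurvature (n := n) η))
    (hf : IsHamiltonianFor EG G η ξ f) :
    calabiEnergy EG G η ≤ ∫ x, (scalarCurvature η x - f x) ^ 2 ∂(kahlerVolume η) := by
  set S := scalarCurvature η
  set p := killingProjection EG G η S
  obtain ⟨ζ, hp⟩ : ∃ ζ : EG, IsHamiltonianFor EG G η ζ p :=
    exists_isHamiltonianFor_killingProjection hS
  have he := ((IsHamiltonianFor.const (⨍ y, S y ∂(kahlerVolume η))).add hp).add (hf.const_mul (-1))
  calc calabiEnergy EG G η
      ≤ ∫ x, (reducedScalarCurvature EG G η x +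
          ((⨍ y, S y ∂(kahlerVolume η)) + p x + -1 * f x)) ^ 2 ∂(kahlerVolume η) :=
        integral_sq_le_integral_add_sq (continuous_reducedScalarCurvature hS)
          he.smooth.continuous (integral_reducedScalarCurvature_mul hS he)
    _ = ∫ x, (S x - f x) ^ 2 ∂(kahlerVolume η) := by
        congr 1 with x
        simp only [reducedScalarCurvature, S, p]
        ring

end Killing

/-! ### Fundamental vector fields and hamiltonians under equivariant maps -/

section Fundamental

variable {n m : ℕ} {EG : Type*} [NormedAddCommGroup EG] [NormedSpace ℝ EG]
  {G : Type*} [TopologicalSpace G] [ChartedSpace EG G] [Group G]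
  {Y : Type*} [TopologicalSpace Y] [ChartedSpace (Cn n) Y] [MulAction G Y]

theorem mdifferentiableAt_smul_const
    (hact : ContMDiff (𝓘(ℝ, EG).prod 𝓘(ℝ, Cn n)) 𝓘(ℝ, Cn n) 1 (fun q : G × Y => q.1 • q.2))
    (y : Y) : MDifferentiableAt 𝓘(ℝ, EG) 𝓘(ℝ, Cn n) (fun g : G => g • y) 1 :=
  (hact.comp (contMDiff_id.prodMk contMDiff_const)).mdifferentiable one_ne_zero 1

section Equivariant

variable {𝒳 : Type*} [TopologicalSpace 𝒳] [ChartedSpace (Cn m) 𝒳] [MulAction G 𝒳]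

theorem rderiv_fundVec {j : Y → 𝒳} {y : Y} (hj : MDifferentiableAt 𝓘(ℝ, Cn n) 𝓘(ℝ, Cn m) j y)
    (hequiv : ∀ (g : G) (y : Y), j (g • y) = g • j y)
    (hact : MDifferentiableAt 𝓘(ℝ, EG) 𝓘(ℝ, Cn n) (fun g : G => g • y) 1) (ξ : EG) :
    rderiv (Cn n) (Cn m) j y (fundVec (G := G) EG ξ y) = fundVec (G := G) EG ξ (j y) := by
  have hcomp : (fun g : G => g • j y) = j ∘ fun g : G => g • y := funext fun g => (hequiv g y).symm
  rw [← one_smul G y] at hj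
  rw [fundVec, fundVec, hcomp, rderiv_comp (f := fun g : G => g • y) hj hact, one_smul]
  rfl

variable (EG G) in
/-- `f` is a smooth function on the total space whose restriction to the fibre of `π` over `s` is a
hamiltonian of the vector field generated by `ξ ∈ Lie(G)`, with the sign convention of
`IsHamiltonianFor`. -/
structure IsFibreHamiltonianFor (π : 𝒳 → ℂ) (Ω : TwoForm m 𝒳) (ξ : EG) (s : ℂ)
    (f : 𝒳 → ℝ) : Prop where
  smooth : ContMDiff 𝓘(ℝ, Cn m) 𝓘(ℝ, ℝ) ∞ f
  ham : ∀ p, π p = s → ∀ w, rderiv (Cn m) ℂ π p w = 0 →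
    formAt Ω p ![fundVec (G := G) EG ξ p, w] = -rderiv (Cn m) ℝ f p w

namespace IsFibreHamiltonianFor

variable {π : 𝒳 → ℂ} {Ω : TwoForm m 𝒳} {ξ : EG} {s : ℂ} {f : 𝒳 → ℝ}

theorem mdifferentiable (hf : IsFibreHamiltonianFor EG G π Ω ξ s f) :
    MDifferentiable 𝓘(ℝ, Cn m) 𝓘(ℝ, ℝ) f :=
  hf.smooth.mdifferentiable (by simp)

theorem add_const (hf : IsFibreHamiltonianFor EG G π Ω ξ s f) (r : ℝ) :
    IsFibreHamiltonianFor EG G π Ω ξ s (fun p => f p + r) where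
  smooth := hf.smooth.add contMDiff_const
  ham p hp w hw := by
    rw [hf.ham p hp w hw, rderiv_add (hf.mdifferentiable p) mdifferentiableAt_const, rderiv_const,
      add_zero]

theorem isHamiltonianFor_comp (hf : IsFibreHamiltonianFor EG G π Ω ξ s f)
    (hπ : MDifferentiable 𝓘(ℝ, Cn m) 𝓘(ℝ, ℂ) π) {j : Y → 𝒳}
    (hj : ContMDiff 𝓘(ℝ, Cn n) 𝓘(ℝ, Cn m) ∞ j) (hs : ∀ y, π (j y) = s)
    (hequiv : ∀ (g : G) (y : Y), j (g • y) = g • j y)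
    (hact : ∀ y : Y, MDifferentiableAt 𝓘(ℝ, EG) 𝓘(ℝ, Cn n) (fun g : G => g • y) 1) :
    IsHamiltonianFor (n := n) EG G (pullback j Ω) ξ (f ∘ j) := by
  refine ⟨hf.smooth.comp hj, fun y w => ?_⟩
  have hjy := hj.mdifferentiable (by simp) y
  have hvert : rderiv (Cn m) ℂ π (j y) (rderiv (Cn n) (Cn m) j y w) = 0 := by
    have hconst : rderiv (Cn n) ℂ (π ∘ j) y = 0 := by
      rw [show π ∘ j = fun _ => s from funext hs, rderiv_const]
    rw [rderiv_comp (hπ _) hjy] at hconst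
    exact DFunLike.congr_fun hconst w
  calc formAt (pullback j Ω) y ![fundVec (G := G) EG ξ y, w]
      = formAt Ω (j y) ![rderiv (Cn n) (Cn m) j y (fundVec (G := G) EG ξ y),
          rderiv (Cn n) (Cn m) j y w] := twoForm_comp_apply (formAt Ω (j y)) _ _ _
    _ = -rderiv (Cn m) ℝ f (j y) (rderiv (Cn n) (Cn m) j y w) := by
        rw [rderiv_fundVec hjy hequiv (hact y), hf.ham (j y) (hs y) _ hvert]
    _ = -rderiv (Cn n) ℝ (f ∘ j) y w := by
        rw [rderiv_comp (hf.mdifferentiable _) hjy]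
        rfl

end IsFibreHamiltonianFor

end Equivariant

variable [IsManifold 𝓘(ℝ, Cn n) 1 Y] [IsManifold 𝓘(ℝ, EG) 1 G]

/-- The action of `G` near `1` on `Y` near `a`, in the preferred charts; the variable in `G`
comes second. -/
noncomputable def actionInCharts (G : Type*) [TopologicalSpace G] [ChartedSpace EG G] [Group G]
    [MulAction G Y] (a : Y) (q : Cn n × EG) : Cn n :=
  chartAt (Cn n) a ((chartAt EG (1 : G)).symm q.2 • (chartAt (Cn n) a).symm q.1)

theorem contDiffAt_actionInCharts
    (hact : ContMDiff (𝓘(ℝ, EG).prod 𝓘(ℝ, Cn n)) 𝓘(ℝ, Cn n) 1 (fun q : G × Y => q.1 • q.2))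
    (a : Y) {z : Cn n} (hz : z ∈ (chartAt (Cn n) a).target) :
    ContDiffAt ℝ 1 (actionInCharts G a) (z, chartAt EG (1 : G) 1) := by
  set c := chartAt (Cn n) a
  set κ := chartAt EG (1 : G)
  have hκ1 : κ.symm (κ 1) = 1 := κ.left_inv (mem_chart_source _ _)
  have hκ : ContMDiffAt 𝓘(ℝ, EG) 𝓘(ℝ, EG) 1 κ.symm (κ 1) :=
    contMDiffOn_chart_symm.contMDiffAt (κ.open_target.mem_nhds (mem_chart_target _ _))
  have hcs : ContMDiffAt 𝓘(ℝ, Cn n) 𝓘(ℝ, Cn n) 1 c.symm z :=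
    contMDiffOn_chart_symm.contMDiffAt (c.open_target.mem_nhds hz)
  have hc : ContMDiffAt 𝓘(ℝ, Cn n) 𝓘(ℝ, Cn n) 1 c (κ.symm (κ 1) • c.symm z) := by
    rw [hκ1, one_smul]
    exact contMDiffOn_chart.contMDiffAt (c.open_source.mem_nhds (c.map_target hz))
  have hg : ContMDiffAt 𝓘(ℝ, Cn n × EG) 𝓘(ℝ, EG) 1 (κ.symm ∘ Prod.snd) (z, κ 1) :=
    ContMDiffAt.comp (x := (z, κ 1)) hκ contDiff_snd.contMDiff.contMDiffAt
  have hy : ContMDiffAt 𝓘(ℝ, Cn n × EG) 𝓘(ℝ, Cn n) 1 (c.symm ∘ Prod.fst) (z, κ 1) :=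
    ContMDiffAt.comp (x := (z, κ 1)) hcs contDiff_fst.contMDiff.contMDiffAt
  have hgy : ContMDiffAt 𝓘(ℝ, Cn n × EG) 𝓘(ℝ, Cn n) 1
      (fun q : Cn n × EG => κ.symm q.2 • c.symm q.1) (z, κ 1) :=
    ContMDiffAt.comp (x := (z, κ 1)) (g := fun q : G × Y => q.1 • q.2) (hact _) (hg.prodMk hy)
  exact (ContMDiffAt.comp (x := (z, κ 1)) (g := c) hc hgy).contDiffAt

/-- The vector field on `Y` generated by `ξ`, in the preferred chart at `a`. -/
noncomputable def fundVecInChart (G : Type*) [TopologicalSpace G] [ChartedSpace EG G] [Group G]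
    [MulAction G Y] (ξ : EG) (a : Y) (z : Cn n) : Cn n :=
  rderiv (Cn n) (Cn n) (chartAt (Cn n) a) ((chartAt (Cn n) a).symm z)
    (fundVec (G := G) EG ξ ((chartAt (Cn n) a).symm z))

theorem fundVecInChart_eq_fderiv
    (hact : ContMDiff (𝓘(ℝ, EG).prod 𝓘(ℝ, Cn n)) 𝓘(ℝ, Cn n) 1 (fun q : G × Y => q.1 • q.2))
    (ξ : EG) (a : Y) {z : Cn n} (hz : z ∈ (chartAt (Cn n) a).target) :
    fundVecInChart G ξ a z =
      fderiv ℝ (actionInCharts G a) (z, chartAt EG (1 : G) 1) (0, ξ) := by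
  set c := chartAt (Cn n) a
  set κ := chartAt EG (1 : G)
  have horbit := mdifferentiableAt_smul_const hact (c.symm z)
  have hc : MDifferentiableAt 𝓘(ℝ, Cn n) 𝓘(ℝ, Cn n) c ((1 : G) • c.symm z) := by
    rw [one_smul]
    exact mdifferentiableAt_atlas (chart_mem_atlas _ _) (c.map_target hz)
  have hflat : HasFDerivAt (fun h : EG => actionInCharts G a (z, h))
      ((fderiv ℝ (actionInCharts G a) (z, κ 1)).comp (ContinuousLinearMap.inr ℝ (Cn n) EG))
      (κ 1) :=
    ((contDiffAt_actionInCharts hact a hz).differentiableAt one_ne_zero).hasFDerivAt.comp (κ 1)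
      (hasFDerivAt_prodMk_right z (κ 1))
  have hmf : HasMFDerivAt 𝓘(ℝ, EG) 𝓘(ℝ, Cn n) (c ∘ fun g : G => g • c.symm z) 1
      ((fderiv ℝ (actionInCharts G a) (z, κ 1)).comp (ContinuousLinearMap.inr ℝ (Cn n) EG)) :=
    ⟨ContinuousAt.comp (f := fun g : G => g • c.symm z) hc.continuousAt horbit.continuousAt,
      hflat.hasFDerivWithinAt⟩
  have hchain := (rderiv_comp (f := fun g : G => g • c.symm z) hc horbit).symm.trans hmf.mfderiv
  rw [one_smul] at hchain
  exact DFunLike.congr_fun hchain ξ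

theorem exists_eventually_norm_fundVecInChart_le
    (hact : ContMDiff (𝓘(ℝ, EG).prod 𝓘(ℝ, Cn n)) 𝓘(ℝ, Cn n) 1 (fun q : G × Y => q.1 • q.2))
    (ξ : EG) (a : Y) :
    ∃ C, ∀ᶠ z in 𝓝 (chartAt (Cn n) a a), ‖fundVecInChart G ξ a z‖ ≤ C := by
  obtain ⟨C, hC⟩ := exists_eventually_forall_norm_fderiv_le
    (isCompact_singleton (x := chartAt EG (1 : G) 1)) fun s hs => by
      rw [mem_singleton_iff.1 hs]
      exact contDiffAt_actionInCharts hact a (mem_chart_target _ a)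
  refine ⟨C * ‖ξ‖, ?_⟩
  filter_upwards [hC, (chartAt (Cn n) a).open_target.mem_nhds (mem_chart_target _ a)] with z hz hzt
  rw [fundVecInChart_eq_fderiv hact ξ a hzt]
  calc ‖fderiv ℝ (actionInCharts G a) (z, chartAt EG (1 : G) 1) (0, ξ)‖
      ≤ C * ‖((0 : Cn n), ξ)‖ := ContinuousLinearMap.le_of_opNorm_le _ (hz _ rfl).2 _
    _ = C * ‖ξ‖ := by rw [Prod.norm_mk, norm_zero, max_eq_right (norm_nonneg ξ)]

end Fundamental

/-! ### Hamiltonians in a smooth family of forms -/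

section FamilyHamiltonian

variable {n m : ℕ} {EG : Type*} [NormedAddCommGroup EG] [NormedSpace ℝ EG]
  {G : Type*} [TopologicalSpace G] [ChartedSpace EG G] [Group G]
  {M : Type*} [TopologicalSpace M] [ChartedSpace (Cn n) M]

theorem IsHamiltonianFor.fderiv_comp_chart_symm [IsManifold 𝓘(ℝ, Cn n) 1 M] [MulAction G M]
    {η : TwoForm n M} {ξ : EG} {h : M → ℝ} (hh : IsHamiltonianFor EG G η ξ h) {a : M} {z : Cn n}
    (hz : z ∈ (chartAt (Cn n) a).target) (w : Cn n) :
    fderiv ℝ (h ∘ (chartAt (Cn n) a).symm) z w =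
      -inChart η a z ![fundVecInChart G ξ a z, w] := by
  set c := chartAt (Cn n) a
  have hsymm : MDifferentiableAt 𝓘(ℝ, Cn n) 𝓘(ℝ, Cn n) c.symm z :=
    mdifferentiableAt_atlas_symm (chart_mem_atlas _ _) hz
  have hinv : rderiv (Cn n) (Cn n) c.symm z (fundVecInChart G ξ a z) =
      fundVec (G := G) EG ξ (c.symm z) := by
    have hcomp : (rderiv (Cn n) (Cn n) c.symm (c (c.symm z))).comp
        (rderiv (Cn n) (Cn n) c (c.symm z)) = ContinuousLinearMap.id ℝ (Cn n) :=
      (mdifferentiable_chart a).symm_comp_deriv (c.map_target hz)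
    rw [c.right_inv hz] at hcomp
    exact DFunLike.congr_fun hcomp _
  calc fderiv ℝ (h ∘ c.symm) z w
      = rderiv (Cn n) ℝ h (c.symm z) (rderiv (Cn n) (Cn n) c.symm z w) := by
        rw [← rderiv_eq_fderiv, rderiv_comp (hh.mdifferentiable _) hsymm]
        rfl
    _ = -formAt η (c.symm z) ![rderiv (Cn n) (Cn n) c.symm z (fundVecInChart G ξ a z),
          rderiv (Cn n) (Cn n) c.symm z w] := by rw [hinv, hh.ham, neg_neg]
    _ = -inChart η a z ![fundVecInChart G ξ a z, w] :=
        congrArg Neg.neg (twoForm_comp_apply (formAt η (c.symm z)) _ _ _).symm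

variable {𝒳 : Type*} [TopologicalSpace 𝒳] [ChartedSpace (Cn m) 𝒳] {F : M × ℝ → 𝒳}
  {Ω : TwoForm m 𝒳}

theorem contMDiff_slice (hF : ContMDiff (𝓘(ℝ, Cn n).prod 𝓘(ℝ, ℝ)) 𝓘(ℝ, Cn m) ∞ F) (s : ℝ) :
    ContMDiff 𝓘(ℝ, Cn n) 𝓘(ℝ, Cn m) ∞ (fun x => F (x, s)) :=
  hF.comp (contMDiff_id.prodMk contMDiff_const)

theorem contDiffAt_inChart_pullback_slice [IsManifold 𝓘(ℝ, Cn n) ∞ M] [IsManifold 𝓘(ℝ, Cn m) ∞ 𝒳]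
    (hΩ : ∀ p : 𝒳, ContDiffOn ℝ ∞ (inChart Ω p) (chartAt (Cn m) p).target)
    (hF : ContMDiff (𝓘(ℝ, Cn n).prod 𝓘(ℝ, ℝ)) 𝓘(ℝ, Cn m) ∞ F) {a : M} {z : Cn n}
    (hz : z ∈ (chartAt (Cn n) a).target) (s : ℝ) :
    ContDiffAt ℝ ∞ (fun q : Cn n × ℝ => inChart (n := n) (pullback (fun x => F (x, q.2)) Ω) a q.1)
      (z, s) := by
  set c := chartAt (Cn n) a
  let Fc : Cn n × ℝ → 𝒳 := fun q => F (c.symm q.1, q.2)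
  have hFc : ∀ {z'}, z' ∈ c.target → ∀ s', ContMDiffAt 𝓘(ℝ, Cn n × ℝ) 𝓘(ℝ, Cn m) ∞ Fc (z', s') :=
    fun hz' s' => ContMDiffAt.comp (g := F) _ (hF _) (contMDiffAt_chart_symm_prod a hz' s')
  have hflat : ∀ᶠ q : Cn n × ℝ in 𝓝 (z, s),
      inChart (n := n) (pullback (fun x => F (x, q.2)) Ω) a q.1 =
        (flatPull Ω Fc q).compContinuousLinearMap (ContinuousLinearMap.inl ℝ (Cn n) ℝ) := by
    filter_upwards [continuousAt_fst.preimage_mem_nhds (c.open_target.mem_nhds hz)] with q hq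
    have hk : HasFDerivAt (fun z : Cn n => (z, q.2)) (ContinuousLinearMap.inl ℝ (Cn n) ℝ) q.1 :=
      hasFDerivAt_prodMk_left q.1 q.2
    rw [inChart_pullback hq ((contMDiff_slice hF q.2).mdifferentiable (by simp) _), ← hk.fderiv]
    exact flatPull_comp (G := Fc) (k := fun z : Cn n => (z, q.2))
      ((hFc hq q.2).mdifferentiableAt (by simp)) hk.differentiableAt
  exact (contDiffAt_twoForm_comp (contDiffAt_flatPull hΩ (hFc hz s))
    contDiffAt_const).congr_of_eventuallyEq hflat

variable [MulAction G M]

theorem exists_eventually_norm_fderiv_hamiltonian_sub_le [IsManifold 𝓘(ℝ, Cn n) ∞ M]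
    [IsManifold 𝓘(ℝ, EG) 1 G] [IsManifold 𝓘(ℝ, Cn m) ∞ 𝒳]
    (hact : ContMDiff (𝓘(ℝ, EG).prod 𝓘(ℝ, Cn n)) 𝓘(ℝ, Cn n) 1 (fun q : G × M => q.1 • q.2))
    (hΩ : ∀ p : 𝒳, ContDiffOn ℝ ∞ (inChart Ω p) (chartAt (Cn m) p).target)
    (hF : ContMDiff (𝓘(ℝ, Cn n).prod 𝓘(ℝ, ℝ)) 𝓘(ℝ, Cn m) ∞ F) {ξ : EG} {p : M → ℝ}
    (hp : IsHamiltonianFor (n := n) EG G (pullback (fun x => F (x, 0)) Ω) ξ p) (a : M) :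
    ∃ C, ∀ᶠ z in 𝓝 (chartAt (Cn n) a a), ∀ s ∈ Icc (0 : ℝ) 1, ∀ h : M → ℝ,
      IsHamiltonianFor (n := n) EG G (pullback (fun x => F (x, s)) Ω) ξ h →
      ‖fderiv ℝ ((fun x => h x - p x) ∘ (chartAt (Cn n) a).symm) z‖ ≤ C * s := by
  have : IsManifold 𝓘(ℝ, Cn n) 1 M := .of_le (n := ∞) (by simp)
  let η : Cn n × ℝ → Cn n [⋀^Fin 2]→L[ℝ] ℝ :=
    fun q => inChart (n := n) (pullback (fun x => F (x, q.2)) Ω) a q.1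
  obtain ⟨C₁, hC₁⟩ := exists_eventually_norm_sub_le_mul (h := η) fun s _ =>
    (contDiffAt_inChart_pullback_slice hΩ hF (mem_chart_target _ a) s).of_le (by simp)
  obtain ⟨C₂, hC₂⟩ := exists_eventually_norm_fundVecInChart_le (n := n) hact ξ a
  refine ⟨C₁ * C₂, ?_⟩
  filter_upwards [hC₁, hC₂, (chartAt (Cn n) a).open_target.mem_nhds (mem_chart_target _ a)]
    with z hη hv hz s hs h hh
  have hη0 := (norm_nonneg _).trans (hη s hs)
  have hv0 := (norm_nonneg _).trans hv
  refine ContinuousLinearMap.opNorm_le_bound _ (by nlinarith [hη0, hv0]) fun w => ?_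
  have hderiv : fderiv ℝ ((fun x => h x - p x) ∘ (chartAt (Cn n) a).symm) z w =
      (-(η (z, s) - η (z, 0))) ![fundVecInChart G ξ a z, w] := by
    rw [show (fun x => h x - p x) ∘ (chartAt (Cn n) a).symm =
        h ∘ (chartAt (Cn n) a).symm - p ∘ (chartAt (Cn n) a).symm from rfl,
      fderiv_sub (differentiableAt_comp_chart_symm hh.mdifferentiable hz)
        (differentiableAt_comp_chart_symm hp.mdifferentiable hz), sub_apply,
      hh.fderiv_comp_chart_symm hz, hp.fderiv_comp_chart_symm hz, neg_sub_neg, neg_sub]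
    rfl
  calc ‖fderiv ℝ ((fun x => h x - p x) ∘ (chartAt (Cn n) a).symm) z w‖
      ≤ ‖η (z, s) - η (z, 0)‖ * (‖fundVecInChart G ξ a z‖ * ‖w‖) := by
        rw [hderiv, ← norm_neg (η (z, s) - η (z, 0))]
        simpa using (-(η (z, s) - η (z, 0))).le_opNorm ![fundVecInChart G ξ a z, w]
    _ ≤ C₁ * s * (C₂ * ‖w‖) := by
        gcongr
        exact hη s hs
    _ = C₁ * C₂ * s * ‖w‖ := by ring

theorem exists_forall_abs_hamiltonian_sub_le [CompactSpace M] [PreconnectedSpace M]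
    [IsManifold 𝓘(ℝ, Cn n) ∞ M] [IsManifold 𝓘(ℝ, EG) 1 G] [IsManifold 𝓘(ℝ, Cn m) ∞ 𝒳]
    (hact : ContMDiff (𝓘(ℝ, EG).prod 𝓘(ℝ, Cn n)) 𝓘(ℝ, Cn n) 1 (fun q : G × M => q.1 • q.2))
    (hΩ : ∀ p : 𝒳, ContDiffOn ℝ ∞ (inChart Ω p) (chartAt (Cn m) p).target)
    (hF : ContMDiff (𝓘(ℝ, Cn n).prod 𝓘(ℝ, ℝ)) 𝓘(ℝ, Cn m) ∞ F) {ξ : EG} {p : M → ℝ}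
    (hp : IsHamiltonianFor (n := n) EG G (pullback (fun x => F (x, 0)) Ω) ξ p) (x₀ : M) :
    ∃ C, ∀ s ∈ Icc (0 : ℝ) 1, ∀ h : M → ℝ,
      IsHamiltonianFor (n := n) EG G (pullback (fun x => F (x, s)) Ω) ξ h →
      ∀ x, |(h x - p x) - (h x₀ - p x₀)| ≤ C * s := by
  have : IsManifold 𝓘(ℝ, Cn n) 1 M := .of_le (n := ∞) (by simp)
  let ι := {q : ℝ × (M → ℝ) // q.1 ∈ Icc (0 : ℝ) 1 ∧
    IsHamiltonianFor (n := n) EG G (pullback (fun x => F (x, q.1)) Ω) ξ q.2}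
  obtain ⟨C, hC⟩ := exists_forall_abs_sub_le (u := fun (i : ι) x => i.1.2 x - p x)
    (ε := fun i => i.1.1) (fun i => i.2.1.1)
    (fun i => i.2.2.mdifferentiable.sub hp.mdifferentiable)
    (fun a => by
      obtain ⟨C, hC⟩ := exists_eventually_norm_fderiv_hamiltonian_sub_le hact hΩ hF hp a
      exact ⟨C, hC.mono fun z hz i => hz _ i.2.1 _ i.2.2⟩) x₀
  exact ⟨C, fun s hs h hh x => hC x ⟨(s, h), hs, hh⟩⟩

end FamilyHamiltonian

/-! ### The scalar curvature of the fibres -/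

section FibreScal

variable {n : ℕ} {𝒳 : Type*} [TopologicalSpace 𝒳] [ChartedSpace (Cn (n + 1)) 𝒳]
  {π : 𝒳 → ℂ} {Ω : TwoForm (n + 1) 𝒳}

namespace AdaptedChart

variable (A B : AdaptedChart (n := n) π)

/-- The open subset of `ℂⁿ` corresponding to the fibre over `s` in an adapted chart. -/
noncomputable def leafDomain (s : ℂ) : TopologicalSpace.Opens (Cn n) where
  carrier := {w | A.incl w + A.offset s ∈ A.chart.target}
  is_open' := A.chart.open_target.preimage (by fun_prop)

/-- The parametrization of the fibre over `s` given by an adapted chart. -/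
noncomputable def leafMap (s : ℂ) (w : A.leafDomain s) : 𝒳 :=
  A.chart.symm (A.incl w + A.offset s)

theorem contMDiff_leafMap (s : ℂ) :
    ContMDiff 𝓘(ℂ, Cn n) 𝓘(ℂ, Cn (n + 1)) ω (A.leafMap s) := fun w => by
  have hslice : ContDiff ℂ ω fun w : Cn n => A.incl w + A.offset s :=
    A.incl.contDiff.add contDiff_const
  exact (A.contMDiffAt_symm w.2).comp w
    (hslice.contMDiff.contMDiffAt.comp w contMDiff_subtype_val.contMDiffAt)

theorem proj_chart_leafMap (s : ℂ) (w : A.leafDomain s) : A.proj (A.chart (A.leafMap s w)) = w := by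
  rw [leafMap, A.chart.right_inv w.2]
  simp [proj, incl, offset]

theorem rderiv_leafMap_injective (s : ℂ) (w : A.leafDomain s) :
    Function.Injective (rderiv (Cn n) (Cn (n + 1)) (A.leafMap s) w) := by
  set c := chartAt (Cn n) w
  have hsource : A.leafMap s w ∈ A.chart.source := A.chart.map_target w.2
  have hc : MDifferentiableAt 𝓘(ℝ, Cn n) 𝓘(ℝ, Cn n) c.symm (c w) :=
    mdifferentiableAt_atlas_symm (chart_mem_atlas _ _) (mem_chart_target _ _)
  have hproj : MDifferentiableAt 𝓘(ℝ, Cn (n + 1)) 𝓘(ℝ, Cn n) (A.proj ∘ A.chart)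
      (A.leafMap s w) :=
    mdifferentiableAt_real ((A.proj.contMDiff.contMDiffAt.comp _
      (A.contMDiffAt_chart hsource)).mdifferentiableAt (by simp))
  have hcoord : ∀ w', (A.proj ∘ A.chart) (A.leafMap s w') = c w' := A.proj_chart_leafMap s
  refine rderiv_injective_of_leftInverse (g := c.symm ∘ A.proj ∘ A.chart)
    (MDifferentiableAt.comp (g := c.symm) _ (by rwa [hcoord]) hproj)
    (mdifferentiableAt_real ((A.contMDiff_leafMap s).mdifferentiable (by simp) w)) ?_
  filter_upwards [c.open_source.mem_nhds (mem_chart_source _ _)] with w' hw'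
  rw [Function.comp_apply, hcoord, c.left_inv hw']

theorem isFibreMap_leafMap {p : 𝒳} (hp : p ∈ A.chart.source) :
    IsFibreMap n π (A.leafMap (π p)) (π p) where
  holo := A.contMDiff_leafMap _
  imm := A.rderiv_leafMap_injective _
  fib w := by
    have hw : A.leafMap (π p) w ∈ A.chart.source := A.chart.map_target w.2
    refine A.base_injOn (mem_image_of_mem π hw) (mem_image_of_mem π hp) ?_
    rw [← A.split_chart _ hw, leafMap, A.chart.right_inv w.2]
    simp [incl, offset]

theorem mem_range_leafMap {p : 𝒳} (hp : p ∈ A.chart.source) : p ∈ range (A.leafMap (π p)) := by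
  have h := A.incl_proj_add_offset hp
  exact ⟨⟨A.proj (A.chart p), by simpa [leafDomain, h] using A.chart.map_source hp⟩, by
    rw [leafMap, h, A.chart.left_inv hp]⟩

variable [IsManifold 𝓘(ℂ, Cn (n + 1)) ω 𝒳]

theorem scal_eq_scal (hΩ : IsKahlerForm Ω) {p : 𝒳} (hA : p ∈ A.chart.source)
    (hB : p ∈ B.chart.source) : A.scal Ω p = B.scal Ω p := by
  obtain ⟨w, hw⟩ := A.mem_range_leafMap hA
  have hj := A.isFibreMap_leafMap hA
  rw [← hw, ← A.scalarCurvature_pullback hΩ hj (by rwa [hw]),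
    ← B.scalarCurvature_pullback hΩ hj (by rwa [hw])]

end AdaptedChart

/-- The scalar curvature of the fibres of `π`, as a function on the total space. The value at a
point does not depend on the choice of the adapted chart, by `AdaptedChart.scal_eq_scal`. -/
noncomputable def fibreScal (hπ : IsSubmersion 𝓘(ℂ, Cn (n + 1)) 𝓘(ℂ, ℂ) ω π)
    (Ω : TwoForm (n + 1) 𝒳) (p : 𝒳) : ℝ :=
  (exists_adaptedChart hπ p).choose.scal Ω p

variable [IsManifold 𝓘(ℂ, Cn (n + 1)) ω 𝒳]

theorem scalarCurvature_pullback_eq_fibreScal (hΩ : IsKahlerForm Ω)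
    (hπ : IsSubmersion 𝓘(ℂ, Cn (n + 1)) 𝓘(ℂ, ℂ) ω π)
    {Y : Type*} [TopologicalSpace Y] [ChartedSpace (Cn n) Y] [IsManifold 𝓘(ℂ, Cn n) ω Y]
    {j : Y → 𝒳} {s : ℂ} (hj : IsFibreMap n π j s) (y : Y) :
    scalarCurvature (n := n) (pullback j Ω) y = fibreScal hπ Ω (j y) :=
  AdaptedChart.scalarCurvature_pullback _ hΩ hj (exists_adaptedChart hπ (j y)).choose_spec

theorem contMDiff_fibreScal (hΩ : IsKahlerForm Ω)
    (hπ : IsSubmersion 𝓘(ℂ, Cn (n + 1)) 𝓘(ℂ, ℂ) ω π) :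
    ContMDiff 𝓘(ℝ, Cn (n + 1)) 𝓘(ℝ, ℝ) ∞ (fibreScal hπ Ω) := by
  intro p₀
  obtain ⟨A, hA⟩ := exists_adaptedChart hπ p₀
  refine (A.contMDiffAt_scal hΩ hA).congr_of_eventuallyEq ?_
  filter_upwards [A.chart.open_source.mem_nhds hA] with p hp
  exact AdaptedChart.scal_eq_scal _ _ hΩ (exists_adaptedChart hπ p).choose_spec hp

end FibreScal

/-! ### Parametrizations of the fibres -/

section Immersion

variable {E E' : Type*} [NormedAddCommGroup E] [NormedSpace ℂ E]
  [NormedAddCommGroup E'] [NormedSpace ℂ E']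
  {X : Type*} [TopologicalSpace X] [ChartedSpace E X]
  {Y : Type*} [TopologicalSpace Y] [ChartedSpace E' Y]

theorem exists_contMDiffAt_leftInverse {ι : X → Y} {x : X}
    (h : IsImmersionAt 𝓘(ℂ, E) 𝓘(ℂ, E') ω ι x) :
    ∃ r : Y → X, ContMDiffAt 𝓘(ℂ, E') 𝓘(ℂ, E) ω r (ι x) ∧ ∀ᶠ x' in 𝓝 x, r (ι x') = x' := by
  let proj : E' →L[ℂ] E := (ContinuousLinearMap.fst ℂ E h.complement).comp
    (h.equiv.symm : E' →L[ℂ] E × h.complement)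
  have hproj : ∀ x' ∈ h.domChart.source, proj (h.codChart (ι x')) = h.domChart x' := by
    intro x' hx'
    have hm : h.domChart x' ∈ (h.domChart.extend 𝓘(ℂ, E)).target := by
      simpa using h.domChart.map_source hx'
    have hw : h.codChart (ι x') = h.equiv (h.domChart x', 0) := by
      simpa [OpenPartialHomeomorph.extend, h.domChart.left_inv hx'] using h.writtenInCharts hm
    simp [proj, hw]
  refine ⟨fun y => h.domChart.symm (proj (h.codChart y)), ?_, ?_⟩
  · have hchart : ContMDiffAt 𝓘(ℂ, E') 𝓘(ℂ, E) ω (fun y => proj (h.codChart y)) (ι x) :=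
      proj.contMDiff.contMDiffAt.comp _
        (contMDiffAt_of_mem_maximalAtlas h.codChart_mem_maximalAtlas h.mem_codChart_source)
    refine ContMDiffAt.comp (x := ι x) (g := h.domChart.symm) ?_ hchart
    rw [hproj x h.mem_domChart_source]
    exact (contMDiffOn_symm_of_mem_maximalAtlas h.domChart_mem_maximalAtlas).contMDiffAt
      (h.domChart.open_target.mem_nhds (h.domChart.map_source h.mem_domChart_source))
  · filter_upwards [h.domChart.open_source.mem_nhds h.mem_domChart_source] with x' hx'
    rw [hproj x' hx', h.domChart.left_inv hx']

end Immersion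

section FibreMap

variable {n : ℕ} {𝒳 : Type*} [TopologicalSpace 𝒳] [ChartedSpace (Cn (n + 1)) 𝒳] {π : 𝒳 → ℂ}
  {X : Type*} [TopologicalSpace X] [ChartedSpace (Cn n) X] {j : X → 𝒳} {s : ℂ}

theorem isFibreMap_of_leftInverse (hj : ContMDiff 𝓘(ℂ, Cn n) 𝓘(ℂ, Cn (n + 1)) ω j)
    (hs : ∀ x, π (j x) = s) {r : 𝒳 → X}
    (hr : MDifferentiable 𝓘(ℝ, Cn (n + 1)) 𝓘(ℝ, Cn n) r) (hrj : Function.LeftInverse r j) :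
    IsFibreMap n π j s where
  holo := hj
  imm x := rderiv_injective_of_leftInverse (hr _)
    (mdifferentiableAt_real (hj.mdifferentiable (by simp) x)) (.of_forall hrj)
  fib := hs

theorem isFibreMap_of_isImmersion (hj : IsImmersion 𝓘(ℂ, Cn n) 𝓘(ℂ, Cn (n + 1)) ω j)
    (hs : ∀ x, π (j x) = s) : IsFibreMap n π j s where
  holo := hj.contMDiff
  imm x := by
    obtain ⟨r, hr, hrj⟩ := exists_contMDiffAt_leftInverse (hj.isImmersionAt x)
    exact rderiv_injective_of_leftInverse (mdifferentiableAt_real (hr.mdifferentiableAt (by simp)))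
      (mdifferentiableAt_real (hj.contMDiff.mdifferentiable (by simp) x)) hrj
  fib := hs

theorem mdifferentiableAt_smul_const_of_isSmoothEmbedding
    {EG : Type*} [NormedAddCommGroup EG] [NormedSpace ℝ EG]
    {G : Type*} [TopologicalSpace G] [ChartedSpace EG G] [Group G] [MulAction G X] [MulAction G 𝒳]
    (hj : IsSmoothEmbedding 𝓘(ℂ, Cn n) 𝓘(ℂ, Cn (n + 1)) ω j)
    (hequiv : ∀ (g : G) (x : X), j (g • x) = g • j x) {x : X}
    (hact : ContMDiff 𝓘(ℝ, EG) 𝓘(ℝ, Cn (n + 1)) 1 (fun g : G => g • j x)) :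
    MDifferentiableAt 𝓘(ℝ, EG) 𝓘(ℝ, Cn n) (fun g : G => g • x) 1 := by
  have horbit : Continuous (fun g : G => g • x) :=
    hj.isEmbedding.continuous_iff.2 (hact.continuous.congr fun g => (hequiv g x).symm)
  obtain ⟨r, hr, hrj⟩ := exists_contMDiffAt_leftInverse (hj.isImmersion.isImmersionAt x)
  have hr' : MDifferentiableAt 𝓘(ℝ, Cn (n + 1)) 𝓘(ℝ, Cn n) r ((1 : G) • j x) := by
    rw [one_smul]
    exact mdifferentiableAt_real (hr.mdifferentiableAt (by simp))
  refine (hr'.comp (f := fun g : G => g • j x) 1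
    (hact.mdifferentiable one_ne_zero 1)).congr_of_eventuallyEq ?_
  filter_upwards [horbit.tendsto' 1 x (one_smul G x) |>.eventually hrj] with g hg
  rw [Function.comp_apply, ← hequiv, hg]

end FibreMap

section UnitsAction

variable {n : ℕ} {𝒳 : Type*} [TopologicalSpace 𝒳] [ChartedSpace (Cn (n + 1)) 𝒳] {π : 𝒳 → ℂ}
  [MulAction ℂˣ 𝒳] [ContMDiffSMul 𝓘(ℂ, ℂ) 𝓘(ℂ, Cn (n + 1)) ω ℂˣ 𝒳]

theorem contMDiff_units_smul (c : ℂˣ) :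
    ContMDiff 𝓘(ℂ, Cn (n + 1)) 𝓘(ℂ, Cn (n + 1)) ω (fun p : 𝒳 => c • p) :=
  ContMDiffSMul.contMDiff_const_smul (I := 𝓘(ℂ, ℂ)) c

theorem IsFibreMap.smul {X : Type*} [TopologicalSpace X] [ChartedSpace (Cn n) X] {j : X → 𝒳}
    {s : ℂ} (hj : IsFibreMap n π j s) (hπ : ∀ (c : ℂˣ) (p : 𝒳), π (c • p) = (c : ℂ) * π p)
    (c : ℂˣ) : IsFibreMap n π (fun x => c • j x) (c * s) where
  holo := (contMDiff_units_smul c).comp hj.holo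
  imm x := by
    have hsmul : ∀ (c : ℂˣ) (p : 𝒳),
        MDifferentiableAt 𝓘(ℝ, Cn (n + 1)) 𝓘(ℝ, Cn (n + 1)) (fun p : 𝒳 => c • p) p := fun c p =>
      mdifferentiableAt_real ((contMDiff_units_smul c).mdifferentiable (by simp) p)
    have hinj : Function.Injective
        (rderiv (Cn (n + 1)) (Cn (n + 1)) (fun p : 𝒳 => c • p) (j x)) :=
      rderiv_injective_of_leftInverse (hsmul c⁻¹ _) (hsmul c _) (.of_forall (inv_smul_smul c))
    rw [show (fun x => c • j x) = (fun p => c • p) ∘ j from rfl,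
      rderiv_comp (hsmul c _) (hj.mdifferentiable x)]
    exact hinj.comp (hj.imm x)
  fib x := by rw [hπ, hj.fib]

end UnitsAction

theorem range_trivialization_slice {M 𝒳 : Type*} {π : 𝒳 → ℂ} (F : M × ℂ ≃ 𝒳)
    (hF : ∀ x z, π (F (x, z)) = z) (z : ℂ) :
    range (fun x => F (x, z)) = π ⁻¹' {z} := by
  refine subset_antisymm (range_subset_iff.2 fun x => hF x z) fun p hp => ?_
  obtain ⟨⟨y, w⟩, rfl⟩ := F.surjective p
  obtain rfl : w = z := by rwa [← hF y w]
  exact mem_range_self y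

section Topology

variable {𝒳 X M : Type*} [TopologicalSpace 𝒳] [TopologicalSpace X] [TopologicalSpace M] {π : 𝒳 → ℂ}

theorem compactSpace_of_range_eq_fibre (hπ : IsProperMap π) {ι : X → 𝒳}
    (hι : Topology.IsEmbedding ι) {z : ℂ} (hrange : range ι = π ⁻¹' {z}) : CompactSpace X := by
  rw [← isCompact_univ_iff, hι.isCompact_iff, image_univ, hrange]
  exact hπ.isCompact_preimage isCompact_singleton

theorem preconnectedSpace_of_range_eq [PreconnectedSpace M] {f : M → 𝒳} (hf : Continuous f)
    {ι : X → 𝒳} (hι : Topology.IsEmbedding ι) (hrange : range ι = range f) :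
    PreconnectedSpace X := by
  refine ⟨?_⟩
  rw [← hι.isInducing.isPreconnected_image, image_univ, hrange]
  exact isPreconnected_range hf

end Topology

theorem expNeg_coe (t : ℝ) : ((expNeg t : ℂˣ) : ℂ) = ((Real.exp (-t) : ℝ) : ℂ) := by
  simp [expNeg]

/-! ### The energy estimate -/

section Energy

variable {n : ℕ} {EG : Type*} [NormedAddCommGroup EG] [NormedSpace ℝ EG]
  {G : Type*} [TopologicalSpace G] [ChartedSpace EG G] [Group G]

section CompactManifold

variable [FiniteDimensional ℝ EG]
  {X : Type*} [TopologicalSpace X] [CompactSpace X] [PreconnectedSpace X] [ChartedSpace (Cn n) X]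
  [IsManifold 𝓘(ℝ, Cn n) 1 X] [MeasurableSpace X] [BorelSpace X] [MulAction G X]
  {η : TwoForm n X} [IsFiniteMeasure (kahlerVolume η)]

theorem exists_isHamiltonianFor_scalarCurvature (hS : Continuous (scalarCurvature (n := n) η))
    (hext : ∀ x, reducedScalarCurvature EG G η x = 0) :
    ∃ ξ : EG, IsHamiltonianFor EG G η ξ (scalarCurvature η) := by
  obtain ⟨ξ, hξ⟩ := exists_isHamiltonianFor_killingProjection (EG := EG) (G := G) (η := η) hS
  have h := (IsHamiltonianFor.const (⨍ y, scalarCurvature η y ∂(kahlerVolume η))).add hξ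
  refine ⟨0 + ξ, ?_⟩
  convert h using 1
  ext x
  have hx := hext x
  rw [reducedScalarCurvature] at hx
  linarith

theorem calabiEnergy_le_of_abs_sub_le (hS : Continuous (scalarCurvature (n := n) η)) {ξ : EG}
    {f : X → ℝ} (hf : IsHamiltonianFor EG G η ξ f) {ε V : ℝ}
    (hε : ∀ x, |scalarCurvature η x - f x| ≤ ε) (hV₀ : 0 ≤ V)
    (hV : kahlerVolume η univ ≤ ENNReal.ofReal V) : calabiEnergy EG G η ≤ ε ^ 2 * V :=
  calc calabiEnergy EG G η
      ≤ ∫ x, (scalarCurvature η x - f x) ^ 2 ∂(kahlerVolume η) := calabiEnergy_le hS hf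
    _ ≤ ∫ _, ε ^ 2 ∂(kahlerVolume η) :=
        integral_mono (integrable_of_continuous ((hS.sub hf.smooth.continuous).pow 2))
          (integrable_const _) fun x => sq_le_sq' (abs_le.1 (hε x)).1 (abs_le.1 (hε x)).2
    _ ≤ ε ^ 2 * V := by
        rw [integral_const, smul_eq_mul, mul_comm, measureReal_def]
        exact mul_le_mul_of_nonneg_left (ENNReal.toReal_le_of_le_ofReal hV₀ hV) (sq_nonneg _)

end CompactManifold

variable {𝒳 : Type*} [TopologicalSpace 𝒳] [ChartedSpace (Cn (n + 1)) 𝒳] {π : 𝒳 → ℂ}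
  {Ω : TwoForm (n + 1) 𝒳}

section GAction

variable [MulAction G 𝒳]

theorem IsHamiltonianOnFibres.exists_isFibreHamiltonianFor
    (hham : IsHamiltonianOnFibres EG G π Ω) (ξ : EG) (s : ℂ) :
    ∃ f, IsFibreHamiltonianFor EG G π Ω ξ s f := by
  obtain ⟨f, hf, hfham⟩ := hham ξ s
  refine ⟨fun p => -1 * f p, contMDiff_const.mul hf, fun p hp w hw => ?_⟩
  rw [rderiv_const_mul _ (hf.mdifferentiable (by simp) p)]
  rw [neg_smul, one_smul, neg_apply, neg_neg]
  exact hfham p hp w hw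

theorem contMDiff_smul_of_trivialization [ContMDiffSMul 𝓘(ℝ, EG) 𝓘(ℝ, Cn (n + 1)) ∞ G 𝒳]
    {M : Type*} [TopologicalSpace M] [ChartedSpace (Cn n) M] [MulAction G M]
    (F : (M × ℂ) ≃ₘ^∞⟮𝓘(ℝ, Cn n).prod 𝓘(ℝ, ℂ), 𝓘(ℝ, Cn (n + 1))⟯ 𝒳)
    (hF : ∀ (g : G) (x : M) (z : ℂ), F (g • x, z) = g • F (x, z)) :
    ContMDiff (𝓘(ℝ, EG).prod 𝓘(ℝ, Cn n)) 𝓘(ℝ, Cn n) ∞ (fun q : G × M => q.1 • q.2) := by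
  have hsmul : ContMDiff (𝓘(ℝ, EG).prod 𝓘(ℝ, Cn n)) 𝓘(ℝ, Cn (n + 1)) ∞
      (fun q : G × M => q.1 • F (q.2, 0)) :=
    contMDiff_fst.smul (F.contMDiff.comp (contMDiff_snd.prodMk contMDiff_const))
  refine (contMDiff_fst.comp (F.symm.contMDiff.comp hsmul)).congr fun q => ?_
  simp [← hF]

end GAction

variable [IsManifold 𝓘(ℂ, Cn (n + 1)) ω 𝒳]

section FibreVolume

variable {Y : Type*} [TopologicalSpace Y] [ChartedSpace (Cn n) Y] [IsManifold 𝓘(ℂ, Cn n) ω Y]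
  {j : Y → 𝒳} {s : ℂ}

theorem continuous_scalarCurvature_pullback (hΩ : IsKahlerForm Ω)
    (hπ : IsSubmersion 𝓘(ℂ, Cn (n + 1)) 𝓘(ℂ, ℂ) ω π) (hj : IsFibreMap n π j s) :
    Continuous (scalarCurvature (n := n) (pullback j Ω)) :=
  ((contMDiff_fibreScal hΩ hπ).continuous.comp hj.holo.continuous).congr fun y =>
    (scalarCurvature_pullback_eq_fibreScal hΩ hπ hj y).symm

theorem isFiniteMeasure_kahlerVolume_pullback [MeasurableSpace Y] [BorelSpace Y]
    (hΩ : IsKahlerForm Ω) (hπ : IsSubmersion 𝓘(ℂ, Cn (n + 1)) 𝓘(ℂ, ℂ) ω π)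
    (hπ_proper : IsProperMap π) (hj : IsFibreMap n π j s) (hinj : Function.Injective j) :
    IsFiniteMeasure (kahlerVolume (n := n) (pullback j Ω)) := by
  obtain ⟨V, -, hV⟩ := exists_kahlerVolume_pullback_le Y hΩ hπ
    (hπ_proper.isCompact_preimage (isCompact_singleton (x := s)))
  exact ⟨(hV j s hj hinj hj.fib).trans_lt ENNReal.ofReal_lt_top⟩

end FibreVolume

section Family

variable [MulAction G 𝒳]

theorem exists_isFibreHamiltonianFor_abs_fibreScal_sub_le [IsManifold 𝓘(ℝ, EG) 1 G]
    (hΩ : IsKahlerForm Ω) (hπ : IsSubmersion 𝓘(ℂ, Cn (n + 1)) 𝓘(ℂ, ℂ) ω π)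
    (hham : IsHamiltonianOnFibres EG G π Ω)
    {M : Type*} [TopologicalSpace M] [CompactSpace M] [ConnectedSpace M] [ChartedSpace (Cn n) M]
    [IsManifold 𝓘(ℝ, Cn n) ∞ M] [MulAction G M]
    (hact : ContMDiff (𝓘(ℝ, EG).prod 𝓘(ℝ, Cn n)) 𝓘(ℝ, Cn n) 1 (fun q : G × M => q.1 • q.2))
    {F : M × ℝ → 𝒳} (hF : ContMDiff (𝓘(ℝ, Cn n).prod 𝓘(ℝ, ℝ)) 𝓘(ℝ, Cn (n + 1)) ∞ F)
    (hF_range : ∀ s : ℝ, range (fun x => F (x, s)) = π ⁻¹' {(s : ℂ)})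
    (hF_equiv : ∀ (g : G) (x : M) (s : ℝ), F (g • x, s) = g • F (x, s)) {ξ : EG}
    (hξ : IsHamiltonianFor (n := n) EG G (pullback (fun x => F (x, 0)) Ω) ξ
      (fun x => fibreScal hπ Ω (F (x, 0)))) :
    ∃ C, ∀ s ∈ Icc (0 : ℝ) 1, ∃ f, IsFibreHamiltonianFor EG G π Ω ξ s f ∧
      ∀ p, π p = s → |fibreScal hπ Ω p - f p| ≤ C * s := by
  have : IsManifold 𝓘(ℝ, Cn (n + 1)) ∞ 𝒳 := isManifold_real
  have : IsManifold 𝓘(ℝ, Cn n) 1 M := .of_le (n := ∞) (by simp)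
  have hπ_diff : MDifferentiable 𝓘(ℝ, Cn (n + 1)) 𝓘(ℝ, ℂ) π := fun p =>
    mdifferentiableAt_real (hπ.contMDiff.mdifferentiable (by simp) p)
  have hF_fib : ∀ x (s : ℝ), π (F (x, s)) = s := fun x s =>
    (hF_range s).subset (mem_range_self x)
  obtain ⟨x₀⟩ := (inferInstance : Nonempty M)
  obtain ⟨C₁, hC₁⟩ := exists_abs_sub_le_mul_of_contMDiff
    (((contMDiff_fibreScal hΩ hπ).comp hF).of_le (by simp))
  obtain ⟨C₂, hC₂⟩ := exists_forall_abs_hamiltonian_sub_le hact hΩ.smooth hF hξ x₀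
  refine ⟨C₁ + C₂, fun s hs => ?_⟩
  obtain ⟨f, hf⟩ := hham.exists_isFibreHamiltonianFor ξ s
  refine ⟨_, hf.add_const (fibreScal hπ Ω (F (x₀, 0)) - f (F (x₀, s))), fun p hp => ?_⟩
  obtain ⟨x, rfl⟩ : p ∈ range (fun x => F (x, s)) := (hF_range s).superset hp
  have hscal := hC₁ x s hs
  have hosc := hC₂ s hs _ (hf.isHamiltonianFor_comp hπ_diff (contMDiff_slice hF s)
    (hF_fib · s) (hF_equiv · · s) (mdifferentiableAt_smul_const hact)) x
  simp only [Function.comp_apply, abs_le] at hscal hosc ⊢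
  constructor <;> linarith

theorem exists_isFibreHamiltonianFor_of_extremal [FiniteDimensional ℝ EG] [IsManifold 𝓘(ℝ, EG) 1 G]
    [ContMDiffSMul 𝓘(ℝ, EG) 𝓘(ℝ, Cn (n + 1)) ∞ G 𝒳] (hΩ : IsKahlerForm Ω)
    (hπ : IsSubmersion 𝓘(ℂ, Cn (n + 1)) 𝓘(ℂ, ℂ) ω π) (hπ_proper : IsProperMap π)
    (hham : IsHamiltonianOnFibres EG G π Ω)
    {M : Type*} [TopologicalSpace M] [ConnectedSpace M] [ChartedSpace (Cn n) M]
    [IsManifold 𝓘(ℂ, Cn n) ω M] [MeasurableSpace M] [BorelSpace M] [MulAction G M]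
    (F : (M × ℂ) ≃ₘ^∞⟮𝓘(ℝ, Cn n).prod 𝓘(ℝ, ℂ), 𝓘(ℝ, Cn (n + 1))⟯ 𝒳)
    (hF_fib : ∀ (x : M) (z : ℂ), π (F (x, z)) = z)
    (hF_equiv : ∀ (g : G) (x : M) (z : ℂ), F (g • x, z) = g • F (x, z))
    (hF_zero : ContMDiff 𝓘(ℂ, Cn n) 𝓘(ℂ, Cn (n + 1)) ω (fun x : M => F (x, 0)))
    (hext : ∀ x : M,
      reducedScalarCurvature (n := n) EG G (pullback (fun x : M => F (x, 0)) Ω) x = 0) :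
    ∃ (ξ : EG) (C : ℝ), ∀ s ∈ Icc (0 : ℝ) 1, ∃ f, IsFibreHamiltonianFor EG G π Ω ξ s f ∧
      ∀ p, π p = s → |fibreScal hπ Ω p - f p| ≤ C * s := by
  have : IsManifold 𝓘(ℝ, Cn n) ∞ M := isManifold_real
  have : IsManifold 𝓘(ℝ, Cn n) 1 M := isManifold_real
  have hF_range := range_trivialization_slice F.toEquiv hF_fib
  have : CompactSpace M := compactSpace_of_range_eq_fibre hπ_proper
    (F.toHomeomorph.isEmbedding.comp (isEmbedding_prodMkLeft 0)) (hF_range 0)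
  have hF₀ : IsFibreMap n π (fun x => F (x, 0)) 0 :=
    isFibreMap_of_leftInverse hF_zero (hF_fib · 0) (r := fun p => (F.symm p).1)
      ((contMDiff_fst.comp F.symm.contMDiff).mdifferentiable (by simp)) fun x => by simp
  have hF₀_inj : Function.Injective (fun x => F (x, 0)) :=
    F.injective.comp (Prod.mk_left_injective 0)
  have := isFiniteMeasure_kahlerVolume_pullback hΩ hπ hπ_proper hF₀ hF₀_inj
  obtain ⟨ξ, hξ⟩ := exists_isHamiltonianFor_scalarCurvature
    (continuous_scalarCurvature_pullback hΩ hπ hF₀) hext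
  rw [funext (scalarCurvature_pullback_eq_fibreScal hΩ hπ hF₀)] at hξ
  have hF_real : ContMDiff (𝓘(ℝ, Cn n).prod 𝓘(ℝ, ℝ)) 𝓘(ℝ, Cn (n + 1)) ∞
      (fun q : M × ℝ => F (q.1, (q.2 : ℂ))) :=
    F.contMDiff.comp (contMDiff_fst.prodMk (Complex.ofRealCLM.contMDiff.comp contMDiff_snd))
  exact ⟨ξ, exists_isFibreHamiltonianFor_abs_fibreScal_sub_le hΩ hπ hham
    ((contMDiff_smul_of_trivialization F hF_equiv).of_le (by simp)) hF_real
    (fun s => hF_range s) (fun g x s => hF_equiv g x s) (by simpa using hξ)⟩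

theorem exists_calabiEnergy_pullback_le [FiniteDimensional ℝ EG] (hΩ : IsKahlerForm Ω)
    (hπ : IsSubmersion 𝓘(ℂ, Cn (n + 1)) 𝓘(ℂ, ℂ) ω π) (hπ_proper : IsProperMap π)
    {X : Type*} [TopologicalSpace X] [CompactSpace X] [PreconnectedSpace X]
    [ChartedSpace (Cn n) X] [IsManifold 𝓘(ℂ, Cn n) ω X] [MeasurableSpace X] [BorelSpace X]
    [MulAction G X]
    (hact : ∀ x : X, MDifferentiableAt 𝓘(ℝ, EG) 𝓘(ℝ, Cn n) (fun g : G => g • x) 1)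
    {ξ : EG} {C : ℝ} (hC : ∀ s ∈ Icc (0 : ℝ) 1, ∃ f, IsFibreHamiltonianFor EG G π Ω ξ s f ∧
      ∀ p, π p = s → |fibreScal hπ Ω p - f p| ≤ C * s) :
    ∃ C', ∀ s ∈ Icc (0 : ℝ) 1, ∀ j : X → 𝒳, IsFibreMap n π j s → Function.Injective j →
      (∀ (g : G) x, j (g • x) = g • j x) →
      calabiEnergy (n := n) EG G (pullback j Ω) ≤ C' * s ^ 2 := by
  have : IsManifold 𝓘(ℝ, Cn n) 1 X := isManifold_real
  have hπ_diff : MDifferentiable 𝓘(ℝ, Cn (n + 1)) 𝓘(ℝ, ℂ) π := fun p =>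
    mdifferentiableAt_real (hπ.contMDiff.mdifferentiable (by simp) p)
  obtain ⟨V, hV₀, hV⟩ := exists_kahlerVolume_pullback_le X hΩ hπ
    (hπ_proper.isCompact_preimage (isCompact_closedBall (0 : ℂ) 1))
  refine ⟨C ^ 2 * V, fun s hs j hj hinj hequiv => ?_⟩
  obtain ⟨f, hf, hfS⟩ := hC s hs
  have := isFiniteMeasure_kahlerVolume_pullback hΩ hπ hπ_proper hj hinj
  have hjf := hf.isHamiltonianFor_comp hπ_diff (fun x => contMDiffAt_real (hj.holo x)) hj.fib
    hequiv hact
  have hclose : ∀ x, |scalarCurvature (n := n) (pullback j Ω) x - (f ∘ j) x| ≤ C * s := fun x => by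
    rw [scalarCurvature_pullback_eq_fibreScal hΩ hπ hj]
    exact hfS (j x) (hj.fib x)
  have hvol := hV j s hj hinj fun x => by
    simpa [hj.fib, abs_of_nonneg hs.1] using hs.2
  calc calabiEnergy (n := n) EG G (pullback j Ω)
      ≤ (C * s) ^ 2 * V := calabiEnergy_le_of_abs_sub_le
        (continuous_scalarCurvature_pullback hΩ hπ hj) hjf hclose hV₀ hvol
    _ = C ^ 2 * V * s ^ 2 := by ring

end Family

end Energy

theorem modifiedCalabi_eq_calabiEnergy {n : ℕ} {X : Type*} [TopologicalSpace X]
    [ChartedSpace (Cn n) X] [MeasurableSpace X] {EG : Type*} [NormedAddCommGroup EG]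
    [NormedSpace ℝ EG] {G : Type*} [TopologicalSpace G] [ChartedSpace EG G] [Group G]
    [MulAction G X] {η η' : TwoForm n X} {φ : X → ℝ} (h : ∀ x, η' x = η x + iddbar φ x) :
    modifiedCalabi EG G η φ = calabiEnergy EG G η' :=
  congrArg (calabiEnergy EG G) (funext fun x => (h x).symm)

end TestConf

theorem modified_Calabi_energy_decays_exponentially_general
    {n : ℕ}
    {EG : Type*} [NormedAddCommGroup EG] [NormedSpace ℝ EG] [FiniteDimensional ℝ EG]
    {G : Type*} [TopologicalSpace G] [ChartedSpace EG G] [Group G] [IsManifold 𝓘(ℝ, EG) 1 G]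
    {𝒳 : Type*} [TopologicalSpace 𝒳] [ChartedSpace (Cn (n + 1)) 𝒳]
    [IsManifold 𝓘(ℂ, Cn (n + 1)) ω 𝒳]
    [MulAction ℂˣ 𝒳] [ContMDiffSMul 𝓘(ℂ, ℂ) 𝓘(ℂ, Cn (n + 1)) ω ℂˣ 𝒳]
    [MulAction G 𝒳] [ContMDiffSMul 𝓘(ℝ, EG) 𝓘(ℝ, Cn (n + 1)) ∞ G 𝒳] [SMulCommClass G ℂˣ 𝒳]
    {π : 𝒳 → ℂ} (hπ : IsSubmersion 𝓘(ℂ, Cn (n + 1)) 𝓘(ℂ, ℂ) ω π) (hπ_proper : IsProperMap π)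
    (hπ_equiv : ∀ (c : ℂˣ) (p : 𝒳), π (c • p) = (c : ℂ) * π p)
    {X : Type*} [TopologicalSpace X] [ChartedSpace (Cn n) X] [IsManifold 𝓘(ℂ, Cn n) ω X]
    [MeasurableSpace X] [BorelSpace X] [MulAction G X]
    {ι : X → 𝒳} (hι : IsSmoothEmbedding 𝓘(ℂ, Cn n) 𝓘(ℂ, Cn (n + 1)) ω ι)
    (hι_range : range ι = π ⁻¹' {1}) (hι_equiv : ∀ (g : G) (x : X), ι (g • x) = g • ι x)
    {M : Type*} [TopologicalSpace M] [ConnectedSpace M] [ChartedSpace (Cn n) M]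
    [IsManifold 𝓘(ℂ, Cn n) ω M] [MeasurableSpace M] [BorelSpace M] [MulAction G M]
    (F : (M × ℂ) ≃ₘ^∞⟮𝓘(ℝ, Cn n).prod 𝓘(ℝ, ℂ), 𝓘(ℝ, Cn (n + 1))⟯ 𝒳)
    (hF_fib : ∀ (x : M) (z : ℂ), π (F (x, z)) = z)
    (hF_equiv : ∀ (g : G) (x : M) (z : ℂ), F (g • x, z) = g • F (x, z))
    (hF_zero : ContMDiff 𝓘(ℂ, Cn n) 𝓘(ℂ, Cn (n + 1)) ω (fun x : M => F (x, 0)))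
    {Ω : TwoForm (n + 1) 𝒳} (hΩ : IsKahlerForm Ω) (hΩ_ham : IsHamiltonianOnFibres EG G π Ω)
    (hext : ∀ x : M,
      reducedScalarCurvature (n := n) EG G (pullback (fun x : M => F (x, 0)) Ω) x = 0)
    {ωt : ℝ → TwoForm n X} (hωt : ∀ t, ωt t = pullback (fun x : X => expNeg t • ι x) Ω) :
    (∀ t, Integrable (fun x => reducedScalarCurvature EG G (ωt t) x ^ 2) (kahlerVolume (ωt t))) ∧
      ∃ C : ℝ, ∀ t : ℝ, 0 ≤ t → calabiEnergy EG G (ωt t) ≤ C * Real.exp (-2 * t) := by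
  obtain rfl : ωt = fun t => pullback (fun x : X => expNeg t • ι x) Ω := funext hωt
  have : IsManifold 𝓘(ℝ, Cn n) 1 X := isManifold_real
  have : CompactSpace X := compactSpace_of_range_eq_fibre hπ_proper hι.isEmbedding hι_range
  have : PreconnectedSpace X := preconnectedSpace_of_range_eq
    (F.continuous.comp (Continuous.prodMk_left 1)) hι.isEmbedding
    (hι_range.trans (range_trivialization_slice F.toEquiv hF_fib 1).symm)
  have hι_fib : IsFibreMap n π ι 1 := isFibreMap_of_isImmersion hι.isImmersion fun x =>
    hι_range.subset (mem_range_self x)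
  have hj : ∀ t : ℝ, IsFibreMap n π (fun x => expNeg t • ι x) (Real.exp (-t) : ℝ) := fun t => by
    simpa only [mul_one, expNeg_coe] using hι_fib.smul hπ_equiv (expNeg t)
  have hj_inj : ∀ t, Function.Injective (fun x => expNeg t • ι x) := fun t =>
    (MulAction.injective (expNeg t)).comp hι.isEmbedding.injective
  have horbit (x : X) : ContMDiff 𝓘(ℝ, EG) 𝓘(ℝ, Cn (n + 1)) ∞ fun g : G => g • ι x :=
    contMDiff_id.smul contMDiff_const
  refine ⟨fun t => ?_, ?_⟩
  · have := isFiniteMeasure_kahlerVolume_pullback hΩ hπ hπ_proper (hj t) (hj_inj t)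
    exact integrable_of_continuous ((continuous_reducedScalarCurvature
      (continuous_scalarCurvature_pullback hΩ hπ (hj t))).pow 2)
  · obtain ⟨ξ, C₀, hC₀⟩ := exists_isFibreHamiltonianFor_of_extremal hΩ hπ hπ_proper hΩ_ham F hF_fib
      hF_equiv hF_zero hext
    obtain ⟨C, hC⟩ := exists_calabiEnergy_pullback_le hΩ hπ hπ_proper (fun x =>
      mdifferentiableAt_smul_const_of_isSmoothEmbedding hι hι_equiv
        ((horbit x).of_le (by simp))) hC₀
    refine ⟨C, fun t ht => ?_⟩
    have hexp : Real.exp (-2 * t) = Real.exp (-t) ^ 2 := by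
      rw [← Real.exp_nat_mul]
      congr 1
      push_cast
      ring
    rw [hexp]
    exact hC _ ⟨(Real.exp_pos _).le, Real.exp_le_one_iff.2 (neg_nonpos.2 ht)⟩ _ (hj t) (hj_inj t)
      fun g x => by rw [hι_equiv, smul_comm g]

theorem modified_Calabi_energy_decays_exponentially
    (n : ℕ)
    -- the compact connected Lie group `G`
    {EG : Type*} [NormedAddCommGroup EG] [NormedSpace ℝ EG] [FiniteDimensional ℝ EG]
    {G : Type*} [TopologicalSpace G] [ChartedSpace EG G] [Group G] [LieGroup 𝓘(ℝ, EG) ∞ G]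
    [CompactSpace G] [ConnectedSpace G]
    -- the total space `𝒳` and the holomorphic line bundle `L` on it
    {𝒳 : Type*} [TopologicalSpace 𝒳] [T2Space 𝒳] [ChartedSpace (Cn (n + 1)) 𝒳]
    [IsManifold 𝓘(ℂ, Cn (n + 1)) ω 𝒳]
    {L : 𝒳 → Type*} [∀ x, AddCommGroup (L x)] [∀ x, Module ℂ (L x)]
    [TopologicalSpace (TotalSpace ℂ L)] [∀ x, TopologicalSpace (L x)] [FiberBundle ℂ L]
    [VectorBundle ℂ ℂ L] [ContMDiffVectorBundle ω ℂ L 𝓘(ℂ, Cn (n + 1))]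
    -- the `G`-invariant smooth test configuration
    [MulAction ℂˣ 𝒳] [MulAction ℂˣ (TotalSpace ℂ L)] [MulAction G 𝒳] [MulAction G (TotalSpace ℂ L)]
    (π : 𝒳 → ℂ) (hπ : IsSmoothTestConfiguration n L π) (hG : IsGInvariant n L EG G π)
    -- the generic fibre `X = 𝒳₁ = π⁻¹(1)` as a complex manifold with its `G`-action
    {X : Type*} [TopologicalSpace X] [ChartedSpace (Cn n) X] [IsManifold 𝓘(ℂ, Cn n) ω X]
    [MeasurableSpace X] [BorelSpace X] [MulAction G X]
    (ι : X → 𝒳) (hι : IsSmoothEmbedding 𝓘(ℂ, Cn n) 𝓘(ℂ, Cn (n + 1)) ω ι)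
    (hι_range : range ι = π ⁻¹' {1}) (hι_equiv : ∀ (g : G) (x : X), ι (g • x) = g • ι x)
    -- the smooth `G`-equivariant trivialization `F`, a biholomorphism of `M = (M, J₀)` onto the
    -- central fibre at `z = 0`
    {M : Type*} [TopologicalSpace M] [ConnectedSpace M] [ChartedSpace (Cn n) M]
    [IsManifold 𝓘(ℂ, Cn n) ω M] [MeasurableSpace M] [BorelSpace M] [MulAction G M]
    (F : (M × ℂ) ≃ₘ^∞⟮𝓘(ℝ, Cn n).prod 𝓘(ℝ, ℂ), 𝓘(ℝ, Cn (n + 1))⟯ 𝒳)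
    (hF_fib : ∀ (x : M) (z : ℂ), π (F (x, z)) = z)
    (hF_equiv : ∀ (g : G) (x : M) (z : ℂ), F (g • x, z) = g • F (x, z))
    (hF_zero : ContMDiff 𝓘(ℂ, Cn n) 𝓘(ℂ, Cn (n + 1)) ω (fun x : M => F (x, 0)))
    -- the Kähler form `Ω`
    (Ω : TwoForm (n + 1) 𝒳) (hΩ : IsKahlerForm Ω)
    (hΩ_circle : ∀ u : Circle, pullback (fun x : 𝒳 => Circle.toUnits u • x) Ω = Ω)
    (hΩ_G : ∀ g : G, pullback (fun x : 𝒳 => g • x) Ω = Ω)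
    (hΩ_c1 : RepresentsC1OnFibres L π Ω)
    (hΩ_ham : IsHamiltonianCircleAction Ω)
    (hΩ_hamG : IsHamiltonianOnFibres EG G π Ω)
    -- the metric on the central fibre is extremal: `S^G(F₀^*Ω) = 0`
    (Ω₀ : TwoForm n M) (hΩ₀ : Ω₀ = pullback (fun x : M => F (x, 0)) Ω)
    (hext : ∀ x : M, reducedScalarCurvature EG G Ω₀ x = 0)
    -- the forms `ω_t = ρ_{e^{-t}}^* Ω` on `X`, and their potentials `φ_t`
    (ωt : ℝ → TwoForm n X) (hωt : ∀ t, ωt t = pullback (fun x : X => expNeg t • ι x) Ω)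
    (φ : ℝ → X → ℝ) (hφ : ∀ t, ContMDiff 𝓘(ℝ, Cn n) 𝓘(ℝ, ℝ) ∞ (φ t))
    (hφω : ∀ t x, ωt t x = ωt 0 x + iddbar (φ t) x) :
    (∀ t, Integrable (fun x => reducedScalarCurvature EG G (ωt t) x ^ 2) (kahlerVolume (ωt t))) ∧
    (∀ t, modifiedCalabi EG G (ωt 0) (φ t) = calabiEnergy EG G (ωt t)) ∧
    (∃ C c : ℝ, 0 < c ∧ ∀ t : ℝ, 0 ≤ t →
      |modifiedCalabi EG G (ωt 0) (φ t) - calabiEnergy EG G Ω₀| ≤ C * Real.exp (-c * t)) ∧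
    calabiEnergy EG G Ω₀ = 0 := by
  subst hΩ₀
  have : IsManifold 𝓘(ℝ, EG) 1 G := .of_le (n := ∞) (by simp)
  have := hπ.action
  have := hG.action
  have := hG.commute
  have hzero : calabiEnergy (n := n) EG G (pullback (fun x : M => F (x, 0)) Ω) = 0 := by
    simp [calabiEnergy, hext]
  have hcal t := modifiedCalabi_eq_calabiEnergy (EG := EG) (G := G) (hφω t)
  obtain ⟨hint, C, hC⟩ := modified_Calabi_energy_decays_exponentially_general hπ.submersion
    hπ.proper hπ.equivariant hι hι_range hι_equiv F hF_fib hF_equiv hF_zero hΩ hΩ_hamG hext hωt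
  refine ⟨hint, hcal, ⟨C, 2, two_pos, fun t ht => ?_⟩, hzero⟩
  have hnonneg : 0 ≤ calabiEnergy EG G (ωt t) := integral_nonneg fun x => sq_nonneg _
  rw [hcal, hzero, sub_zero, abs_of_nonneg hnonneg]
  exact hC t ht
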